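/- arXiv:1705.02228 — 2 statements merged into one kernel-verified Lean document; each statement's English description precedes it below -/
import Mathlib

section
/- Let 2 ≤ p < ∞ and k ∈ ℕ. There exists C > 0, depending only on φ, p, k, such that for every admissible finite collection 𝓘 = {[a_m,b_m]}_{m=1}^N and every Schwartz function f, one has ‖ ( Σ_{m=1}^N |(f∗φ_m)^{(k)}(x)|² )^{1/2} ‖_{L^p(dx)} ≤ C ‖ f^{(k)} ‖_{L^p}. (Uniform boundedness of the family without rotations on the homogeneous Sobolev space Ẇ^p_k = Ḟ^k_{p2}.) -/
open MeasureTheory Real Set Function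
open scoped FourierTransform ENNReal NNReal

/-- `e2pi t = e^{2πit}`. -/
noncomputable def e2pi (t : ℝ) : ℂ := Complex.exp (2 * (Real.pi : ℂ) * Complex.I * (t : ℂ))

/-- Convolution of two functions on `ℝ`. -/
noncomputable def conv (f g : ℝ → ℂ) (x : ℝ) : ℂ := ∫ t, f t * g (x - t)

/-- The function `φ_m` associated with the interval `[a,b]`: its Fourier transform is
`ξ ↦ 𝓕φ ((ξ - a)/(b - a))`; in space variables it is `x ↦ (b-a) e^{2πiax} φ((b-a)x)`. -/
noncomputable def phim (φ : ℝ → ℂ) (a b : ℝ) (x : ℝ) : ℂ :=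
  ((b - a : ℝ) : ℂ) * e2pi (a * x) * φ ((b - a) * x)

/-- A finite collection of compact intervals `[a m, b m]` is admissible if the intervals are
nondegenerate, pairwise disjoint, and none of them contains `0` in its interior. -/
def Admissible {N : ℕ} (a b : Fin N → ℝ) : Prop :=
  (∀ m, a m < b m) ∧ (∀ m, (0 : ℝ) ∉ Set.Ioo (a m) (b m)) ∧
    ∀ m m', m ≠ m' → Disjoint (Set.Icc (a m) (b m)) (Set.Icc (a m') (b m'))

/-- The rotated Rubio de Francia piece `g_m(x) = e^{-2πi a x} (f ∗ φ_m)(x)`. -/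
noncomputable def rotConv (φ : ℝ → ℂ) (a b : ℝ) (f : ℝ → ℂ) (x : ℝ) : ℂ :=
  e2pi (-(a * x)) * conv f (phim φ a b) x

open scoped SchwartzMap

/-- Uncentered Hardy–Littlewood maximal function. -/
noncomputable def MF (F : ℝ → ℝ≥0∞) (x : ℝ) : ℝ≥0∞ :=
  ⨆ (c : ℝ) (r : ℝ) (_ : 0 < r ∧ x ∈ Metric.ball c r),
    (∫⁻ y in Metric.ball c r, F y) / ENNReal.ofReal (2 * r)

lemma lt_MF_iff {F : ℝ → ℝ≥0∞} {x : ℝ} {l : ℝ≥0∞} :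
    l < MF F x ↔ ∃ c r : ℝ, 0 < r ∧ x ∈ Metric.ball c r ∧
      l * ENNReal.ofReal (2 * r) < ∫⁻ y in Metric.ball c r, F y := by
  unfold MF
  simp only [lt_iSup_iff]
  constructor
  · rintro ⟨c, r, ⟨hr, hx⟩, h⟩
    refine ⟨c, r, hr, hx, ?_⟩
    rwa [ENNReal.lt_div_iff_mul_lt (Or.inl (by simpa using by linarith)) (Or.inl ENNReal.ofReal_ne_top)] at h
  · rintro ⟨c, r, hr, hx, h⟩
    refine ⟨c, r, ⟨hr, hx⟩, ?_⟩
    rwa [ENNReal.lt_div_iff_mul_lt (Or.inl (by simpa using by linarith)) (Or.inl ENNReal.ofReal_ne_top)]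

lemma lintegral_ball_le_MF (F : ℝ → ℝ≥0∞) {x c r : ℝ} (hr : 0 < r) (hx : x ∈ Metric.ball c r) :
    ∫⁻ y in Metric.ball c r, F y ≤ MF F x * ENNReal.ofReal (2 * r) := by
  by_contra h
  push Not at h
  exact lt_irrefl _ (lt_MF_iff.2 ⟨c, r, hr, hx, h⟩)

lemma isOpen_lt_MF (F : ℝ → ℝ≥0∞) (l : ℝ≥0∞) : IsOpen {x | l < MF F x} := by
  rw [isOpen_iff_mem_nhds]
  intro x hx
  obtain ⟨c, r, hr, hxc, h⟩ := lt_MF_iff.1 hx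
  filter_upwards [Metric.isOpen_ball.mem_nhds hxc] with y hy
  exact lt_MF_iff.2 ⟨c, r, hr, hy, h⟩

lemma measurable_MF (F : ℝ → ℝ≥0∞) : Measurable (MF F) :=
  measurable_of_Ioi fun l => (isOpen_lt_MF F l).measurableSet

/-- Vitali covering for intervals. -/
lemma vitali_balls (S : Set ℝ) (c r : ℝ → ℝ) (R : ℝ)
    (h0 : ∀ x ∈ S, 0 < r x) (hR : ∀ x ∈ S, r x ≤ R) (hx : ∀ x ∈ S, x ∈ Metric.ball (c x) (r x)) :
    ∃ u ⊆ S, u.Countable ∧ u.PairwiseDisjoint (fun b => Metric.ball (c b) (r b)) ∧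
      ∀ x ∈ S, ∃ b ∈ u, x ∈ Metric.ball (c b) (5 * r b) := by
  obtain ⟨u, huS, hd, hc⟩ := Vitali.exists_disjoint_subfamily_covering_enlargement
    (fun x => Metric.ball (c x) (r x)) S r 2 (by norm_num) (fun a ha => (h0 a ha).le) R hR
    (fun a ha => ⟨a, hx a ha⟩)
  refine ⟨u, huS, ?_, hd, ?_⟩
  · refine hd.countable_of_isOpen (fun a ha => Metric.isOpen_ball)
      (fun a ha => ⟨a, hx a (huS ha)⟩)
  · intro x hxS
    obtain ⟨b, hb, ⟨z, hz1, hz2⟩, hle⟩ := hc x hxS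
    refine ⟨b, hb, ?_⟩
    have h1 := hx x hxS
    simp only [Metric.mem_ball] at *
    have t1 := dist_triangle x (c x) (c b)
    have t2 := dist_triangle (c x) z (c b)
    rw [dist_comm (c x) z] at t2
    linarith

lemma sum_lintegral_balls_le (F : ℝ → ℝ≥0∞) (u : Set ℝ) (hu : u.Countable) (c r : ℝ → ℝ)
    (hd : u.PairwiseDisjoint (fun b => Metric.ball (c b) (r b))) (T : Set ℝ)
    (hT : ∀ b ∈ u, Metric.ball (c b) (r b) ⊆ T) :
    ∑' b : u, ∫⁻ y in Metric.ball (c b) (r b), F y ≤ ∫⁻ y in T, F y := by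
  rw [← lintegral_biUnion hu (fun b _ => Metric.isOpen_ball.measurableSet) hd]
  exact lintegral_mono_set (by simpa using hT)

lemma weak_MF (F : ℝ → ℝ≥0∞) (l : ℝ≥0∞) :
    l * volume {x | l < MF F x} ≤ 5 * ∫⁻ x, F x := by
  rcases eq_or_ne l 0 with rfl | hl0
  · simp
  rcases eq_or_ne l ⊤ with rfl | hl
  · simp
  rcases eq_or_ne (∫⁻ x, F x) ⊤ with hF | hF
  · simp [hF]
  set S := {x | l < MF F x} with hS
  have key : ∀ x : ℝ, ∃ c r : ℝ, x ∈ S → 0 < r ∧ x ∈ Metric.ball c r ∧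
      l * ENNReal.ofReal (2 * r) < ∫⁻ y in Metric.ball c r, F y := by
    intro x
    by_cases hx : x ∈ S
    · obtain ⟨c, r, h⟩ := lt_MF_iff.1 hx
      exact ⟨c, r, fun _ => h⟩
    · exact ⟨0, 0, fun h => absurd h hx⟩
  choose c r hcr using key
  obtain ⟨u, huS, huc, hd, hcov⟩ := vitali_balls S c r ((∫⁻ x, F x) / l).toReal
    (fun x hx => (hcr x hx).1) (fun x hx => by
      obtain ⟨h1, h2, h3⟩ := hcr x hx
      have h4 : l * ENNReal.ofReal (2 * r x) ≤ ∫⁻ x, F x := h3.le.trans (setLIntegral_le_lintegral _ _)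
      rw [mul_comm, ← ENNReal.le_div_iff_mul_le (Or.inl hl0) (Or.inl hl)] at h4
      have h5 := ENNReal.toReal_mono (ENNReal.div_ne_top hF hl0) h4
      rw [ENNReal.toReal_ofReal (by linarith)] at h5
      linarith) (fun x hx => (hcr x hx).2.1)
  have : volume S ≤ ∑' b : u, volume (Metric.ball (c b) (5 * r b)) := by
    have := huc.to_subtype
    refine (measure_mono ?_).trans (measure_iUnion_le _)
    intro x hx
    obtain ⟨b, hb, h⟩ := hcov x hx
    exact mem_iUnion.2 ⟨⟨b, hb⟩, h⟩
  calc l * volume S ≤ l * ∑' b : u, volume (Metric.ball (c b) (5 * r b)) := by gcongr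
    _ = ∑' b : u, l * volume (Metric.ball (c b) (5 * r b)) := ENNReal.tsum_mul_left.symm
    _ ≤ ∑' b : u, 5 * ∫⁻ y in Metric.ball (c b) (r b), F y := by
        refine ENNReal.tsum_le_tsum fun b => ?_
        have h3 := (hcr b (huS b.2)).2.2
        rw [Real.volume_ball, show 2 * (5 * r b) = 5 * (2 * r b) by ring,
          ENNReal.ofReal_mul (by norm_num), mul_left_comm]
        simp only [ENNReal.ofReal_ofNat]
        gcongr
    _ = 5 * ∑' b : u, ∫⁻ y in Metric.ball (c b) (r b), F y := ENNReal.tsum_mul_left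
    _ ≤ 5 * ∫⁻ x, F x := by
        gcongr
        simpa using sum_lintegral_balls_le F u huc c r hd univ (fun b _ => subset_univ _)

lemma layer_pt (q : ℝ) (hq : 0 < q) (y : ℝ≥0∞) :
    ∫⁻ t in Ioi (0:ℝ), ENNReal.ofReal (q * t ^ (q - 1)) * (if ENNReal.ofReal t < y then 1 else 0)
      = y ^ q := by
  have fin : ∀ z : ℝ, 0 ≤ z → ∫⁻ t in Ioi (0:ℝ), ENNReal.ofReal (q * t ^ (q - 1)) *
      (if ENNReal.ofReal t < ENNReal.ofReal z then 1 else 0) = (ENNReal.ofReal z) ^ q := by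
    intro z hz
    have e1 : ∫⁻ t in Ioi (0:ℝ), ENNReal.ofReal (q * t ^ (q - 1)) *
        (if ENNReal.ofReal t < ENNReal.ofReal z then 1 else 0) =
        ∫⁻ t in Ioi (0:ℝ), (Iio z).indicator (fun t => ENNReal.ofReal (q * t ^ (q - 1))) t := by
      refine setLIntegral_congr_fun measurableSet_Ioi fun t ht => ?_
      have ht' : 0 < t := ht
      by_cases h : t < z
      · have : ENNReal.ofReal t < ENNReal.ofReal z := by
          rw [ENNReal.ofReal_lt_ofReal_iff (ht'.trans h)]; exact h
        simp [h, this]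
      · have : ¬ ENNReal.ofReal t < ENNReal.ofReal z := by
          push Not at h ⊢; exact ENNReal.ofReal_le_ofReal h
        simp only [this, if_false, mul_zero]
        rw [indicator_of_notMem (by simpa using h)]
    rw [e1, setLIntegral_indicator measurableSet_Iio, inter_comm, Ioi_inter_Iio,
      restrict_Ioo_eq_restrict_Ioc]
    have hint : IntervalIntegrable (fun t : ℝ => q * t ^ (q - 1)) volume 0 z :=
      (intervalIntegral.intervalIntegrable_rpow' (by linarith)).const_mul q
    rw [← ofReal_integral_eq_lintegral_ofReal, ← intervalIntegral.integral_of_le hz,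
      intervalIntegral.integral_const_mul, integral_rpow (Or.inl (by linarith)),
      ENNReal.ofReal_rpow_of_nonneg hz hq.le]
    · congr 1
      rw [sub_add_cancel, Real.zero_rpow hq.ne']
      field_simp
      ring
    · rwa [intervalIntegrable_iff_integrableOn_Ioc_of_le hz] at hint
    · refine (ae_restrict_iff' measurableSet_Ioc).2 (Filter.Eventually.of_forall fun t ht => ?_)
      have : 0 < t := ht.1
      positivity
  rcases eq_or_ne y ⊤ with rfl | hy
  · rw [ENNReal.top_rpow_of_pos hq]
    refine ENNReal.eq_top_of_forall_nnreal_le fun n => ?_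
    have h1 := fin ((n:ℝ) ^ (1/q)) (by positivity)
    rw [ENNReal.ofReal_rpow_of_nonneg (by positivity) hq.le, ← Real.rpow_mul n.coe_nonneg,
      one_div, inv_mul_cancel₀ hq.ne', Real.rpow_one, ENNReal.ofReal_coe_nnreal] at h1
    rw [← h1]
    refine lintegral_mono fun t => ?_
    dsimp only
    gcongr
    split_ifs with h2 h3 h3
    · exact le_rfl
    · exact absurd ENNReal.ofReal_lt_top h3
    · exact zero_le
    · exact le_rfl
  · have := fin y.toReal ENNReal.toReal_nonneg
    rwa [ENNReal.ofReal_toReal hy] at this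

lemma meas_aux {g : ℝ → ℝ≥0∞} (hg : Measurable g) :
    MeasurableSet {z : ℝ × ℝ | ENNReal.ofReal z.1 < g z.2} :=
  measurableSet_lt (ENNReal.measurable_ofReal.comp measurable_fst) (hg.comp measurable_snd)

lemma layer (q : ℝ) (hq : 0 < q) (g G : ℝ → ℝ≥0∞) (hg : Measurable g) (hG : Measurable G) :
    ∫⁻ x, G x * g x ^ q = ∫⁻ t in Ioi (0:ℝ), ENNReal.ofReal (q * t ^ (q - 1)) *
      ∫⁻ x in {x | ENNReal.ofReal t < g x}, G x := by
  have hm : Measurable fun z : ℝ × ℝ => (if ENNReal.ofReal z.1 < g z.2 then 1 else 0 : ℝ≥0∞) :=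
    Measurable.ite (meas_aux hg) measurable_const measurable_const
  have hm2 : Measurable fun t : ℝ => ENNReal.ofReal (q * t ^ (q - 1)) := by fun_prop
  calc ∫⁻ x, G x * g x ^ q = ∫⁻ x, ∫⁻ t in Ioi (0:ℝ), G x * (ENNReal.ofReal (q * t ^ (q - 1)) *
        (if ENNReal.ofReal t < g x then 1 else 0)) := by
        refine lintegral_congr fun x => ?_
        rw [lintegral_const_mul, layer_pt q hq]
        exact hm2.mul (hm.comp (measurable_id.prodMk measurable_const))
    _ = ∫⁻ t in Ioi (0:ℝ), ∫⁻ x, G x * (ENNReal.ofReal (q * t ^ (q - 1)) *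
        (if ENNReal.ofReal t < g x then 1 else 0)) := by
        rw [lintegral_lintegral_swap]
        refine Measurable.aemeasurable ?_
        exact (hG.comp measurable_fst).mul ((hm2.comp measurable_snd).mul
          (hm.comp measurable_swap))
    _ = _ := by
        refine lintegral_congr fun t => ?_
        rw [← lintegral_const_mul _ hG, ← lintegral_indicator]
        · refine lintegral_congr fun x => ?_
          by_cases h : ENNReal.ofReal t < g x
          · simp [h, mul_comm]
          · simp [h]
        · exact measurableSet_lt measurable_const hg

lemma layer_vol (q : ℝ) (hq : 0 < q) (g : ℝ → ℝ≥0∞) (hg : Measurable g) :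
    ∫⁻ x, g x ^ q = ∫⁻ t in Ioi (0:ℝ), ENNReal.ofReal (q * t ^ (q - 1)) *
      volume {x | ENNReal.ofReal t < g x} := by
  have := layer q hq g (fun _ => 1) hg measurable_const
  simpa using this

lemma MF_trunc (F : ℝ → ℝ≥0∞) (l : ℝ≥0∞) (hl : l ≠ ⊤) (hF : Measurable F) {x : ℝ}
    (hx : 2 * l < MF F x) :
    l < MF ({y | l < F y}.indicator F) x := by
  obtain ⟨c, r, hr, hxc, h⟩ := lt_MF_iff.1 hx
  refine lt_MF_iff.2 ⟨c, r, hr, hxc, ?_⟩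
  have h1 : ∫⁻ y in Metric.ball c r, F y ≤ ∫⁻ y in Metric.ball c r, ({y | l < F y}.indicator F y + l) := by
    refine lintegral_mono fun y => ?_
    by_cases hy : l < F y
    · simp [hy]
    · rw [indicator_of_notMem (by simpa using hy), zero_add]
      exact not_lt.1 hy
  rw [lintegral_add_right _ measurable_const, setLIntegral_const, Real.volume_ball] at h1
  have h2 := h.trans_le h1
  rw [two_mul, add_mul] at h2
  exact lt_of_add_lt_add_right h2

/-- Hardy–Littlewood maximal theorem. -/
lemma strong_MF (q : ℝ) (hq : 1 < q) (F : ℝ → ℝ≥0∞) (hF : Measurable F) :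
    ∫⁻ x, MF F x ^ q ≤ ENNReal.ofReal (10 * (q / (q-1)) * 2 ^ (q-1)) * ∫⁻ x, F x ^ q := by
  have h1 : ∀ t : ℝ, t ∈ Ioi (0:ℝ) → ENNReal.ofReal (q * t ^ (q - 1)) * volume {x | ENNReal.ofReal t < MF F x}
      ≤ ENNReal.ofReal (10 * (q / (q-1))) * (ENNReal.ofReal ((q-1) * t ^ (q - 1 - 1)) *
        ∫⁻ x in {x | ENNReal.ofReal t < 2 * F x}, F x) := by
    intro t ht
    have ht : 0 < t := ht
    set l := ENNReal.ofReal (t / 2) with hl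
    have hl2 : 2 * l = ENNReal.ofReal t := by
      rw [hl, ← ENNReal.ofReal_ofNat 2, ← ENNReal.ofReal_mul (by norm_num)]; congr 1; ring
    have e : {x | ENNReal.ofReal t < 2 * F x} = {x | l < F x} := by
      ext x
      simp only [mem_ofPred_eq, ← hl2]
      exact ENNReal.mul_lt_mul_iff_right (by simp) (by simp)
    have h2 : volume {x | ENNReal.ofReal t < MF F x} ≤
        volume {x | l < MF ({y | l < F y}.indicator F) x} := by
      refine measure_mono fun x hx => ?_
      refine MF_trunc F l ENNReal.ofReal_ne_top hF ?_
      rw [hl2]; exact hx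
    have h3 := weak_MF ({y | l < F y}.indicator F) l
    rw [lintegral_indicator (measurableSet_lt measurable_const hF)] at h3
    rw [e]
    calc _ = ENNReal.ofReal (2 * q * t ^ (q-1-1)) * (l * volume {x | ENNReal.ofReal t < MF F x}) := by
            rw [hl, ← mul_assoc, ← ENNReal.ofReal_mul (by positivity)]
            congr 2
            rw [Real.rpow_sub_one ht.ne' (q-1)]
            field_simp
      _ ≤ ENNReal.ofReal (2 * q * t ^ (q-1-1)) * (5 * ∫⁻ x in {x | l < F x}, F x) := by
          exact mul_le_mul_right ((mul_le_mul_right h2 _).trans h3) _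
      _ = _ := by
          rw [← mul_assoc, ← mul_assoc, ← ENNReal.ofReal_ofNat 5, ← ENNReal.ofReal_mul (by positivity),
            ← ENNReal.ofReal_mul (by have : 0 < q - 1 := by linarith
                                     positivity)]
          congr 2
          have : q - 1 ≠ 0 := by linarith
          field_simp
          ring
  rw [layer_vol q (by linarith) _ (measurable_MF F)]
  refine (setLIntegral_mono' measurableSet_Ioi h1).trans ?_
  rw [lintegral_const_mul', ← layer (q-1) (by linarith) (fun x => 2 * F x) F (hF.const_mul _) hF]
  · rw [ENNReal.ofReal_mul (p := 10 * (q / (q-1))) (by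
      have : 0 < q - 1 := by linarith
      positivity), mul_assoc]
    refine mul_le_mul_right ?_ _
    rw [← lintegral_const_mul' _ _ ENNReal.ofReal_ne_top]
    refine lintegral_mono fun x => ?_
    dsimp only
    rw [ENNReal.mul_rpow_of_nonneg _ _ (by linarith), ← mul_assoc, mul_comm (F x), mul_assoc,
      ← ENNReal.ofReal_rpow_of_pos (by norm_num), ENNReal.ofReal_ofNat]
    gcongr
    conv_rhs => rw [show q = 1 + (q-1) by ring, ENNReal.rpow_add_of_nonneg _ _ (by norm_num) (by linarith), ENNReal.rpow_one]
  · exact ENNReal.ofReal_ne_top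


/-- Local oscillation control of `U` by `h`. -/
def OscControl (U h : ℝ → ℝ≥0∞) (A : ℝ≥0∞) : Prop :=
  ∀ c r : ℝ, 0 < r → ∃ (W : ℝ → ℝ≥0∞) (κ : ℝ≥0∞), Measurable W ∧ (∀ x, U x ≤ 2 * W x + κ) ∧
    (∀ x, κ ≤ 4 * (U x + W x)) ∧
    ∀ y ∈ Metric.ball c r, ∫⁻ x in Metric.ball c r, W x ≤ A * ENNReal.ofReal (2 * r) * h y

lemma goodlam (U h : ℝ → ℝ≥0∞) (A : ℝ≥0∞) (hU : Measurable U) (hUint : ∫⁻ x, U x ≠ ⊤)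
    (hO : OscControl U h A) (l γ : ℝ≥0∞) (hl0 : l ≠ 0) (hl : l ≠ ⊤) (hγ : A * γ ≤ 1) :
    volume ({x | 16 * l < MF U x} ∩ {x | h x ≤ γ * l}) ≤
      13 * (A * γ) * volume {x | l < MF U x} := by
  set S := {x | l < MF U x} with hS
  set R := ((∫⁻ x, U x) / l).toReal with hR
  have bdd : ∀ c r : ℝ, 0 < r → l * ENNReal.ofReal (2 * r) < ∫⁻ y in Metric.ball c r, U y →
      r ≤ R := by
    intro c r h1 h3
    have h4 : l * ENNReal.ofReal (2 * r) ≤ ∫⁻ x, U x := h3.le.trans (setLIntegral_le_lintegral _ _)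
    rw [mul_comm, ← ENNReal.le_div_iff_mul_le (Or.inl hl0) (Or.inl hl)] at h4
    have h5 := ENNReal.toReal_mono (ENNReal.div_ne_top hUint hl0) h4
    rw [ENNReal.toReal_ofReal (by linarith)] at h5
    linarith
  have key : ∀ x : ℝ, ∃ c r : ℝ, x ∈ S → 0 < r ∧ x ∈ Metric.ball c r ∧
      l * ENNReal.ofReal (2 * r) < ∫⁻ y in Metric.ball c r, U y ∧
      ∀ c' r' : ℝ, 2 * r ≤ r' → x ∈ Metric.ball c' r' →
        ∫⁻ y in Metric.ball c' r', U y ≤ l * ENNReal.ofReal (2 * r') := by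
    intro x
    by_cases hx : x ∈ S
    · set T : Set ℝ := {r | ∃ c, 0 < r ∧ x ∈ Metric.ball c r ∧
        l * ENNReal.ofReal (2 * r) < ∫⁻ y in Metric.ball c r, U y} with hT
      obtain ⟨c0, r0, h01, h02, h03⟩ := lt_MF_iff.1 hx
      have hr0 : r0 ∈ T := ⟨c0, h01, h02, h03⟩
      have hTb : BddAbove T := ⟨R, by rintro r ⟨c, h1, h2, h3⟩; exact bdd c r h1 h3⟩
      have hsup : 0 < sSup T := h01.trans_le (le_csSup hTb hr0)
      obtain ⟨r, ⟨c, h1, h2, h3⟩, hlt⟩ := exists_lt_of_lt_csSup ⟨r0, hr0⟩ (half_lt_self hsup)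
      refine ⟨c, r, fun _ => ⟨h1, h2, h3, fun c' r' hr' hx' => ?_⟩⟩
      by_contra hcon
      push Not at hcon
      have : r' ∈ T := ⟨c', by linarith, hx', hcon⟩
      have := le_csSup hTb this
      linarith
    · exact ⟨0, 0, fun h => absurd h hx⟩
  choose c r hcr using key
  obtain ⟨u, huS, huc, hd, hcov⟩ := vitali_balls S c r R
    (fun x hx => (hcr x hx).1) (fun x hx => bdd _ _ (hcr x hx).1 (hcr x hx).2.2.1)
      (fun x hx => (hcr x hx).2.1)
  set E := {x | 16 * l < MF U x} ∩ {x | h x ≤ γ * l} with hE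
  have hES : E ⊆ S := by
    intro x hx
    have h1 : l ≤ 16 * l := by
      calc l = 1 * l := (one_mul l).symm
        _ ≤ 16 * l := by gcongr; norm_num
    exact h1.trans_lt hx.1
  have hsub : E ⊆ ⋃ b : u, E ∩ Metric.ball (c b) (5 * r b) := by
    intro x hx
    obtain ⟨b, hb, h⟩ := hcov x (hES hx)
    exact mem_iUnion.2 ⟨⟨b, hb⟩, hx, h⟩
  have loc : ∀ b ∈ u, volume (E ∩ Metric.ball (c b) (5 * r b)) ≤
      13 * (A * γ) * volume (Metric.ball (c b) (r b)) := by
    intro b hb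
    rcases (E ∩ Metric.ball (c b) (5 * r b)).eq_empty_or_nonempty with he | ⟨y0, hy0E, hy0⟩
    · simp [he]
    obtain ⟨hr, hxb, -, hbig⟩ := hcr b (huS hb)
    obtain ⟨W, κ, hW, hUW, hκ, hWint⟩ := hO (c b) (10 * r b) (by linarith)
    have hy0B : y0 ∈ Metric.ball (c b) (10 * r b) :=
      Metric.ball_subset_ball (by linarith) hy0
    have hW1 : ∫⁻ x in Metric.ball (c b) (10 * r b), W x ≤
        A * γ * l * ENNReal.ofReal (2 * (10 * r b)) := by
      refine (hWint y0 hy0B).trans ?_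
      calc _ ≤ A * ENNReal.ofReal (2 * (10 * r b)) * (γ * l) := mul_le_mul_right hy0E.2 _
        _ = _ := by ring
    have hκ1 : κ ≤ 8 * l := by
      have h1 : κ * ENNReal.ofReal (2 * (10 * r b)) ≤
          (8 * l) * ENNReal.ofReal (2 * (10 * r b)) := by
        calc κ * ENNReal.ofReal (2 * (10 * r b)) = ∫⁻ x in Metric.ball (c b) (10 * r b), κ := by
              rw [setLIntegral_const, Real.volume_ball]
          _ ≤ ∫⁻ x in Metric.ball (c b) (10 * r b), 4 * (U x + W x) := lintegral_mono hκ
          _ = 4 * ((∫⁻ x in Metric.ball (c b) (10 * r b), U x) +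
              ∫⁻ x in Metric.ball (c b) (10 * r b), W x) := by
              rw [← lintegral_add_left hU]
              exact lintegral_const_mul _ (hU.add hW)
          _ ≤ 4 * (l * ENNReal.ofReal (2 * (10 * r b)) +
              1 * l * ENNReal.ofReal (2 * (10 * r b))) := by
              refine mul_le_mul_right (add_le_add ?_ (hW1.trans ?_)) _
              · exact hbig _ _ (by linarith) (Metric.ball_subset_ball (by linarith) hxb)
              · gcongr
          _ = _ := by ring
      refine (ENNReal.mul_le_mul_iff_left ?_ ENNReal.ofReal_ne_top).1 h1
      have : 0 < 2 * (10 * r b) := by linarith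
      simpa using by linarith
    have hsubset : E ∩ Metric.ball (c b) (5 * r b) ⊆
        {y | 4 * l < MF ((Metric.ball (c b) (10 * r b)).indicator W) y} := by
      rintro y ⟨hyE, hy⟩
      obtain ⟨c', r', hr', hyc, hlt⟩ := lt_MF_iff.1 hyE.1
      have d1 : dist y c' < r' := hyc
      have d2 : dist y (c b) < 5 * r b := hy
      have d3 : dist b (c b) < r b := hxb
      have hsmall : r' < 2 * r b := by
        by_contra hcon
        push Not at hcon
        have hm : b ∈ Metric.ball c' (r' + 6 * r b) := by
          rw [Metric.mem_ball]
          have t1 := dist_triangle b (c b) c'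
          have t2 := dist_triangle (c b) y c'
          rw [dist_comm (c b) y] at t2
          linarith
        have h1 := hbig c' (r' + 6 * r b) (by linarith) hm
        have h2 : ∫⁻ y in Metric.ball c' r', U y ≤ ∫⁻ y in Metric.ball c' (r' + 6 * r b), U y :=
          lintegral_mono_set (Metric.ball_subset_ball (by linarith))
        have h3 : l * ENNReal.ofReal (2 * (r' + 6 * r b)) ≤ 16 * l * ENNReal.ofReal (2 * r') := by
          calc l * ENNReal.ofReal (2 * (r' + 6 * r b)) ≤ l * ENNReal.ofReal (16 * (2 * r')) := by
                exact mul_le_mul_right (ENNReal.ofReal_le_ofReal (by linarith)) _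
            _ = _ := by
                rw [ENNReal.ofReal_mul (by norm_num), ENNReal.ofReal_ofNat]; ring
        exact absurd (hlt.trans_le (h2.trans (h1.trans h3))) (lt_irrefl _)
      have hB : Metric.ball c' r' ⊆ Metric.ball (c b) (10 * r b) := by
        intro z hz
        rw [Metric.mem_ball] at *
        have t1 := dist_triangle z c' (c b)
        have t2 := dist_triangle c' y (c b)
        rw [dist_comm c' y] at t2
        linarith
      refine lt_MF_iff.2 ⟨c', r', hr', hyc, ?_⟩
      have e : ∫⁻ y in Metric.ball c' r', (Metric.ball (c b) (10 * r b)).indicator W y =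
          ∫⁻ y in Metric.ball c' r', W y := by
        refine setLIntegral_congr_fun Metric.isOpen_ball.measurableSet fun z hz => ?_
        exact indicator_of_mem (hB hz) W
      rw [e]
      have h1 : ∫⁻ y in Metric.ball c' r', U y ≤
          2 * (∫⁻ y in Metric.ball c' r', W y) + 8 * l * ENNReal.ofReal (2 * r') := by
        calc _ ≤ ∫⁻ y in Metric.ball c' r', (2 * W y + κ) := lintegral_mono hUW
          _ = 2 * (∫⁻ y in Metric.ball c' r', W y) + κ * ENNReal.ofReal (2 * r') := by
              rw [lintegral_add_right _ measurable_const, lintegral_const_mul _ hW,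
                setLIntegral_const, Real.volume_ball]
          _ ≤ _ := by gcongr
      have h2 := hlt.trans_le h1
      have h3 : 16 * l * ENNReal.ofReal (2 * r') =
        2 * (4 * l * ENNReal.ofReal (2 * r')) + 8 * l * ENNReal.ofReal (2 * r') := by ring
      rw [h3] at h2
      have h4 := lt_of_add_lt_add_right h2
      exact (ENNReal.mul_lt_mul_iff_right (by simp) (by simp)).1 h4
    have hw := weak_MF ((Metric.ball (c b) (10 * r b)).indicator W) (4 * l)
    rw [lintegral_indicator Metric.isOpen_ball.measurableSet] at hw
    have h5 : 4 * l * volume (E ∩ Metric.ball (c b) (5 * r b)) ≤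
        4 * l * (13 * (A * γ) * volume (Metric.ball (c b) (r b))) := by
      refine (mul_le_mul_right (measure_mono hsubset) _).trans (hw.trans ?_)
      refine (mul_le_mul_right hW1 _).trans ?_
      rw [Real.volume_ball, show 2 * (10 * r b) = 10 * (2 * r b) by ring,
        ENNReal.ofReal_mul (by norm_num), ENNReal.ofReal_ofNat]
      calc 5 * (A * γ * l * (10 * ENNReal.ofReal (2 * r b)))
          = 50 * (A * γ * l * ENNReal.ofReal (2 * r b)) := by ring
        _ ≤ 52 * (A * γ * l * ENNReal.ofReal (2 * r b)) := by gcongr; norm_num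
        _ = _ := by ring
    refine (ENNReal.mul_le_mul_iff_right ?_ ?_).1 h5
    · simpa using hl0
    · exact ENNReal.mul_ne_top (by simp) hl
  have := huc.to_subtype
  calc volume E ≤ ∑' b : u, volume (E ∩ Metric.ball (c b) (5 * r b)) :=
        (measure_mono hsub).trans (measure_iUnion_le _)
    _ ≤ ∑' b : u, 13 * (A * γ) * volume (Metric.ball (c b) (r b)) :=
        ENNReal.tsum_le_tsum fun b => loc b b.2
    _ = 13 * (A * γ) * ∑' b : u, volume (Metric.ball (c b) (r b)) := ENNReal.tsum_mul_left
    _ ≤ _ := by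
        refine mul_le_mul_right ?_ _
        have h6 := sum_lintegral_balls_le (fun _ => 1) u huc c r hd S (fun b hb x hx =>
          lt_MF_iff.2 ⟨c b, r b, (hcr b (huS hb)).1, hx, (hcr b (huS hb)).2.2.1⟩)
        simpa using h6

/-- Fefferman–Stein type inequality. -/
lemma FS (A q : ℝ) (hA : 0 < A) (hq : 1 < q) (U h : ℝ → ℝ≥0∞) (hU : Measurable U)
    (hh : Measurable h) (hUint : ∫⁻ x, U x ≠ ⊤) (hfin : ∫⁻ x, U x ^ q ≠ ⊤)
    (hO : OscControl U h (ENNReal.ofReal A)) :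
    ∫⁻ x, MF U x ^ q ≤ ENNReal.ofReal (2 * 16 ^ q * (26 * A * 16 ^ q) ^ q) * ∫⁻ x, h x ^ q := by
  have hq0 : 0 < q := by linarith
  have h16 : (1:ℝ) ≤ 16 ^ q := Real.one_le_rpow (by norm_num) hq0.le
  set γ : ℝ := 1 / (26 * A * 16 ^ q) with hγ
  have hγ0 : 0 < γ := by positivity
  set X := ∫⁻ x, MF U x ^ q with hX
  have hXfin : X ≠ ⊤ := ne_top_of_le_ne_top
    (ENNReal.mul_ne_top ENNReal.ofReal_ne_top hfin) (strong_MF q hq U hU)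
  have hAγ : ENNReal.ofReal A * ENNReal.ofReal γ = ENNReal.ofReal (1 / (26 * 16 ^ q)) := by
    rw [← ENNReal.ofReal_mul hA.le]
    congr 1
    rw [hγ]; field_simp
  have e1 : ENNReal.ofReal (16 ^ q) * ∫⁻ x, (MF U x / 16) ^ q = X := by
    rw [← lintegral_const_mul' _ _ ENNReal.ofReal_ne_top]
    refine lintegral_congr fun x => ?_
    rw [← ENNReal.ofReal_rpow_of_pos (by norm_num), ENNReal.ofReal_ofNat,
      ← ENNReal.mul_rpow_of_nonneg _ _ hq0.le, ENNReal.mul_div_cancel (by simp) (by simp)]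
  have hγE : ENNReal.ofReal γ ≠ 0 := by simpa using hγ0
  have e2 : ∫⁻ x, (MF U x / 16) ^ q ≤
      13 * ENNReal.ofReal (1 / (26 * 16 ^ q)) * X + ∫⁻ x, (h x / ENNReal.ofReal γ) ^ q := by
    rw [hX, layer_vol q hq0 _ ((measurable_MF U).div_const _),
      layer_vol q hq0 _ (measurable_MF U), layer_vol q hq0 _ (hh.div_const _),
      ← lintegral_const_mul' _ _ (ENNReal.mul_ne_top (by simp) ENNReal.ofReal_ne_top),
      ← lintegral_add_left']
    · refine setLIntegral_mono' measurableSet_Ioi fun t ht => ?_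
      have ht : 0 < t := ht
      have hg := goodlam U h (ENNReal.ofReal A) hU hUint hO (ENNReal.ofReal t) (ENNReal.ofReal γ)
        (by simpa using ht) ENNReal.ofReal_ne_top (by
          rw [hAγ, ← ENNReal.ofReal_one]
          refine ENNReal.ofReal_le_ofReal ?_
          rw [div_le_one (by positivity)]
          linarith)
      rw [hAγ] at hg
      have hv : volume {x | ENNReal.ofReal t < MF U x / 16} ≤
          13 * ENNReal.ofReal (1 / (26 * 16 ^ q)) * volume {x | ENNReal.ofReal t < MF U x} +
          volume {x | ENNReal.ofReal t < h x / ENNReal.ofReal γ} := by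
        refine le_trans ?_ (add_le_add_left hg _)
        refine (measure_mono ?_).trans (measure_union_le _ _)
        intro x hx
        have hx' : ENNReal.ofReal t < MF U x / 16 := hx
        rw [ENNReal.lt_div_iff_mul_lt (by simp) (by simp), mul_comm] at hx'
        by_cases hc : h x ≤ ENNReal.ofReal γ * ENNReal.ofReal t
        · exact Or.inl ⟨hx', hc⟩
        · right
          show ENNReal.ofReal t < h x / ENNReal.ofReal γ
          rw [ENNReal.lt_div_iff_mul_lt (Or.inl hγE) (Or.inl ENNReal.ofReal_ne_top), mul_comm]
          exact not_le.1 hc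
      refine (mul_le_mul_right hv _).trans (le_of_eq ?_)
      ring
    · refine (Measurable.const_mul (Measurable.mul (by fun_prop) ?_) _).aemeasurable
      refine Antitone.measurable ?_
      intro s t hst
      exact measure_mono fun x hx => lt_of_le_of_lt (ENNReal.ofReal_le_ofReal hst) hx
  have e3 : ∫⁻ x, (h x / ENNReal.ofReal γ) ^ q =
      ENNReal.ofReal ((26 * A * 16 ^ q) ^ q) * ∫⁻ x, h x ^ q := by
    rw [← lintegral_const_mul' _ _ ENNReal.ofReal_ne_top]
    refine lintegral_congr fun x => ?_
    rw [div_eq_mul_inv, ENNReal.mul_rpow_of_nonneg _ _ hq0.le, mul_comm,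
      ← ENNReal.ofReal_inv_of_pos hγ0, ENNReal.ofReal_rpow_of_pos (by positivity), hγ]
    simp
  have e4 : ENNReal.ofReal (16 ^ q) * (13 * ENNReal.ofReal (1 / (26 * 16 ^ q))) =
      ENNReal.ofReal (1/2) := by
    rw [← ENNReal.ofReal_ofNat 13, ← ENNReal.ofReal_mul (by positivity),
      ← ENNReal.ofReal_mul (by positivity)]
    congr 1
    field_simp
    norm_num
  have e5 : X ≤ ENNReal.ofReal (1/2) * X +
      ENNReal.ofReal (16 ^ q * (26 * A * 16 ^ q) ^ q) * ∫⁻ x, h x ^ q := by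
    calc X = ENNReal.ofReal (16 ^ q) * ∫⁻ x, (MF U x / 16) ^ q := e1.symm
      _ ≤ _ := mul_le_mul_right e2 _
      _ = _ := by
        rw [mul_add, ← mul_assoc, e4, e3, ← mul_assoc, ← ENNReal.ofReal_mul (by positivity)]
  have e6 : X = ENNReal.ofReal (1/2) * X + ENNReal.ofReal (1/2) * X := by
    rw [← add_mul, ← ENNReal.ofReal_add (by norm_num) (by norm_num)]
    norm_num
  have e7 : ENNReal.ofReal (1/2) * X ≤
      ENNReal.ofReal (16 ^ q * (26 * A * 16 ^ q) ^ q) * ∫⁻ x, h x ^ q := by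
    conv_lhs at e5 => rw [e6]
    exact (ENNReal.add_le_add_iff_left
      (ENNReal.mul_ne_top ENNReal.ofReal_ne_top hXfin)).1 e5
  calc X = 2 * (ENNReal.ofReal (1/2) * X) := by rw [two_mul]; exact e6
    _ ≤ _ := mul_le_mul_right e7 _
    _ = _ := by
      rw [← mul_assoc, mul_assoc 2 (16 ^ q : ℝ), ENNReal.ofReal_mul (p := 2) (by norm_num),
        ENNReal.ofReal_ofNat]


lemma schwartz_affine (ψ : 𝓢(ℝ, ℂ)) (L d : ℝ) (hL : L ≠ 0) :
    ∃ g : 𝓢(ℝ, ℂ), ∀ x, g x = ψ (L * x + d) := by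
  have h1 : (fun x : ℝ => L * x + d).HasTemperateGrowth := by fun_prop
  have h2 : AntilipschitzWith (‖L‖₊⁻¹) (fun x : ℝ => L * x + d) := by
    apply AntilipschitzWith.of_le_mul_dist
    intro x y
    rw [Real.dist_eq, Real.dist_eq]
    have : L * x + d - (L * y + d) = L * (x - y) := by ring
    rw [this, abs_mul]
    have h3 : |L| ≠ 0 := abs_ne_zero.mpr hL
    simp only [NNReal.coe_inv, coe_nnnorm, Real.norm_eq_abs]
    rw [← mul_assoc, inv_mul_cancel₀ h3, one_mul]
  refine ⟨SchwartzMap.compCLMOfAntilipschitz ℝ h1 h2 ψ, fun x => ?_⟩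
  simp [SchwartzMap.compCLMOfAntilipschitz_apply]

lemma phim_schwartz (φ : 𝓢(ℝ, ℂ)) (a b : ℝ) (hab : a < b) :
    ∃ Φ : 𝓢(ℝ, ℂ), (∀ x, Φ x = phim φ a b x) ∧ ∀ ξ, 𝓕 Φ ξ = 𝓕 φ ((ξ - a) / (b - a)) := by
  have hL : 0 < b - a := sub_pos.mpr hab
  obtain ⟨ψ, hψ⟩ := schwartz_affine (𝓕 φ) (1 / (b - a)) (-(a / (b - a))) (by positivity)
  refine ⟨𝓕⁻ ψ, fun x => ?_, fun ξ => ?_⟩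
  · rw [SchwartzMap.fourierInv_coe, Real.fourierInv_eq']
    have key : φ ((b - a) * x) = ∫ η : ℝ, Complex.exp (↑(2 * π * inner ℝ η ((b - a) * x)) * Complex.I) • (𝓕 φ) η := by
      have : φ ((b - a) * x) = (𝓕⁻ (𝓕 φ)) ((b - a) * x) := by simp
      rw [this, SchwartzMap.fourierInv_coe, Real.fourierInv_eq']
    unfold phim
    rw [key, ← integral_const_mul]
    have cv := Measure.integral_comp_mul_left (fun y : ℝ => Complex.exp (↑(2 * π * inner ℝ (y + a) x) * Complex.I) • ψ (y + a)) (b - a)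
    rw [integral_add_right_eq_self (fun y : ℝ => Complex.exp (↑(2 * π * inner ℝ y x) * Complex.I) • ψ y) a] at cv
    have cv2 : ∫ v : ℝ, Complex.exp (↑(2 * π * inner ℝ v x) * Complex.I) • ψ v = ((b - a : ℝ) : ℂ) * ∫ y : ℝ, Complex.exp (↑(2 * π * inner ℝ ((b - a) * y + a) x) * Complex.I) • ψ ((b - a) * y + a) := by
      rw [cv, abs_of_pos (by positivity), Complex.real_smul, ← mul_assoc, ← Complex.ofReal_mul, mul_inv_cancel₀ hL.ne']
      simp
    rw [cv2, ← integral_const_mul]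
    congr 1
    ext η
    have e1 : ψ ((b - a) * η + a) = 𝓕 φ η := by
      rw [hψ]; congr 1; field_simp; ring
    rw [e1]
    unfold e2pi
    simp only [smul_eq_mul, mul_assoc]
    congr 1
    rw [← mul_assoc, ← mul_assoc (Complex.exp _), ← Complex.exp_add]
    congr 2
    simp
    ring
  · have : 𝓕 (𝓕⁻ ψ) = ψ := by simp
    rw [this, hψ]
    congr 1
    field_simp
    ring

lemma conv_schwartz (f Φ : 𝓢(ℝ, ℂ)) :
    ∃ G : 𝓢(ℝ, ℂ), (∀ x, G x = conv f Φ x) ∧ ∀ ξ, 𝓕 G ξ = 𝓕 f ξ * 𝓕 Φ ξ := by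
  refine ⟨SchwartzMap.convolution (ContinuousLinearMap.mul ℂ ℂ) f Φ, fun x => ?_, fun ξ => ?_⟩
  · rw [SchwartzMap.convolution_apply]
    simp [MeasureTheory.convolution, conv]
  · rw [SchwartzMap.fourier_convolution, SchwartzMap.pairing_apply_apply]
    simp

lemma deriv_conv (f Φ : 𝓢(ℝ, ℂ)) (x : ℝ) :
    deriv (conv f Φ) x = conv (SchwartzMap.derivCLM ℂ ℂ f) Φ x := by
  obtain ⟨G, hG, hG'⟩ := conv_schwartz f Φ
  obtain ⟨H, hH, hH'⟩ := conv_schwartz (SchwartzMap.derivCLM ℂ ℂ f) Φ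
  rw [← hH]
  have : conv f Φ = G := by ext x; rw [hG]
  rw [this, ← SchwartzMap.derivCLM_apply ℂ]
  congr 1
  have h : 𝓕 (SchwartzMap.derivCLM ℂ ℂ G) = 𝓕 H := by
    ext ξ
    rw [hH', SchwartzMap.fourier_coe, SchwartzMap.fourier_coe (SchwartzMap.derivCLM ℂ ℂ f)]
    have d : ∀ g : 𝓢(ℝ, ℂ), ⇑(SchwartzMap.derivCLM ℂ ℂ g) = deriv g := by
      intro g; ext x; rw [SchwartzMap.derivCLM_apply]
    rw [d, d, Real.fourier_deriv, Real.fourier_deriv, ← SchwartzMap.fourier_coe, ← SchwartzMap.fourier_coe]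
    · simp only [hG', smul_eq_mul]; ring
    · exact f.integrable
    · exact f.differentiable
    · rw [← d]; exact SchwartzMap.integrable _
    · exact G.integrable
    · exact G.differentiable
    · rw [← d]; exact SchwartzMap.integrable _
  have := congrArg (fun g => 𝓕⁻ g) h
  simpa using this

lemma iteratedDeriv_conv (k : ℕ) : ∀ (f : 𝓢(ℝ, ℂ)), ∃ g : 𝓢(ℝ, ℂ), (∀ x, g x = iteratedDeriv k f x) ∧
    ∀ (Φ : 𝓢(ℝ, ℂ)) (x), iteratedDeriv k (conv f Φ) x = conv g Φ x := by
  induction k with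
  | zero => intro f; exact ⟨f, by simp, by simp⟩
  | succ k ih =>
    intro f
    obtain ⟨g, hg, hg'⟩ := ih (SchwartzMap.derivCLM ℂ ℂ f)
    refine ⟨g, fun x => ?_, fun Φ x => ?_⟩
    · rw [hg, iteratedDeriv_succ']
      congr 1
    · rw [iteratedDeriv_succ', ← hg']
      congr 1
      ext x
      exact deriv_conv f Φ x

lemma plancherel_l (f : 𝓢(ℝ, ℂ)) : ∫⁻ ξ, ‖𝓕 f ξ‖ₑ ^ 2 = ∫⁻ x, ‖f x‖ₑ ^ 2 := by
  have h : ∀ g : 𝓢(ℝ, ℂ), ∫⁻ x, ‖g x‖ₑ ^ 2 = ENNReal.ofReal (∫ x, ‖g x‖ ^ 2) := by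
    intro g
    rw [ofReal_integral_eq_lintegral_ofReal]
    · congr 1; ext x
      rw [ENNReal.ofReal_pow (norm_nonneg _), ofReal_norm]
    · exact (g.memLp 2).integrable_norm_pow (by norm_num)
    · exact Filter.Eventually.of_forall fun x => by positivity
  rw [h, h, SchwartzMap.integral_norm_sq_fourier]

lemma L2_bound (φ : 𝓢(ℝ, ℂ)) (hφ : Function.support (𝓕 ⇑φ) ⊆ Set.Ioo 0 1) :
    ∃ B : ℝ, 0 < B ∧ ∀ (N : ℕ) (a b : Fin N → ℝ), Admissible a b → ∀ f : 𝓢(ℝ, ℂ),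
      ∫⁻ x, ∑ m, ‖conv f (phim φ (a m) (b m)) x‖ₑ ^ 2 ≤ ENNReal.ofReal B * ∫⁻ x, ‖f x‖ₑ ^ 2 := by
  obtain ⟨M, hM0, hM⟩ : ∃ M : ℝ, 0 < M ∧ ∀ ξ, ‖𝓕 φ ξ‖ ≤ M := by
    refine ⟨SchwartzMap.seminorm ℝ 0 0 (𝓕 φ) + 1, ?_, fun ξ => ?_⟩
    · have := apply_nonneg (SchwartzMap.seminorm ℝ 0 0) (𝓕 φ); linarith
    · have := SchwartzMap.norm_le_seminorm ℝ (𝓕 φ) ξ; linarith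
  refine ⟨M ^ 2, by positivity, fun N a b hab f => ?_⟩
  choose Φ hΦ hΦ' using fun m => phim_schwartz φ (a m) (b m) (hab.1 m)
  choose G hG hG' using fun m => conv_schwartz f (Φ m)
  have e : ∀ m, phim φ (a m) (b m) = Φ m := fun m => by ext x; rw [hΦ]
  simp_rw [e, ← hG]
  rw [lintegral_finsetSum _ (fun m _ => by
    exact ((G m).continuous.measurable.enorm.pow_const 2))]
  rw [← plancherel_l f, Finset.sum_congr rfl (fun m _ => (plancherel_l (G m)).symm)]
  rw [← lintegral_finsetSum _ (fun m _ => by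
    exact ((𝓕 (G m)).continuous.measurable.enorm.pow_const 2)), ← lintegral_const_mul' _ _ ENNReal.ofReal_ne_top]
  refine lintegral_mono fun ξ => ?_
  simp only [hG', enorm_mul, mul_pow, hΦ']
  rw [← Finset.mul_sum, mul_comm]
  gcongr
  have hz : ∀ m, 𝓕 φ ((ξ - a m) / (b m - a m)) ≠ 0 → ξ ∈ Icc (a m) (b m) := by
    intro m hm
    have h1 : (ξ - a m) / (b m - a m) ∈ Ioo (0:ℝ) 1 := hφ hm
    have hL : 0 < b m - a m := sub_pos.mpr (hab.1 m)
    rw [mem_Ioo, lt_div_iff₀ hL, div_lt_iff₀ hL] at h1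
    constructor <;> linarith
  have hbd : ∀ m, ‖𝓕 φ ((ξ - a m) / (b m - a m))‖ₑ ^ 2 ≤ ENNReal.ofReal (M ^ 2) := by
    intro m
    rw [ENNReal.ofReal_pow hM0.le]
    gcongr
    rw [← ofReal_norm]
    exact ENNReal.ofReal_le_ofReal (hM _)
  by_cases h : ∃ m, 𝓕 φ ((ξ - a m) / (b m - a m)) ≠ 0
  · obtain ⟨m, hm⟩ := h
    rw [Finset.sum_eq_single m]
    · exact hbd m
    · intro m' _ hne
      by_contra hc
      have : 𝓕 φ ((ξ - a m') / (b m' - a m')) ≠ 0 := by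
        intro h0; apply hc; rw [h0]; simp
      exact Set.disjoint_left.mp (hab.2.2 m' m hne) (hz m' this) (hz m hm)
    · simp
  · push Not at h
    simp [h]


lemma ennreal_add_sq_le (x y : ℝ≥0∞) : (x + y) ^ 2 ≤ 2 * x ^ 2 + 2 * y ^ 2 := by
  have := ENNReal.rpow_add_le_mul_rpow_add_rpow x y (p := 2) (by norm_num)
  norm_num at this
  rw [← mul_add]
  exact_mod_cast this

lemma lintegral_sq_le (s : Set ℝ) (F : ℝ → ℝ≥0∞) (hF : AEMeasurable F (volume.restrict s)) :
    (∫⁻ x in s, F x) ^ 2 ≤ volume s * ∫⁻ x in s, F x ^ 2 := by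
  have := ENNReal.lintegral_mul_le_Lp_mul_Lq (volume.restrict s) (p := 2) (q := 2)
    (by constructor <;> norm_num) (f := fun _ => 1) (g := F) (by fun_prop) hF
  have h2 := pow_le_pow_left' this 2
  rw [mul_pow, ← ENNReal.rpow_natCast, ← ENNReal.rpow_natCast (_ ^ _), ← ENNReal.rpow_natCast (_ ^ _),
    ← ENNReal.rpow_mul, ← ENNReal.rpow_mul] at h2
  norm_num at h2
  simpa using h2

lemma sobolev_pt (g g' : ℝ → ℂ) (a L : ℝ) (hL : 0 < L)
    (hd : ∀ t ∈ Icc a (a + L), HasDerivAt g (g' t) t)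
    (hc : ContinuousOn g' (Icc a (a + L))) :
    ‖g a‖ₑ ^ 2 ≤ ∫⁻ t in Ioc a (a + L), (ENNReal.ofReal (2 / L) * ‖g t‖ₑ ^ 2 + ENNReal.ofReal (2 * L) * ‖g' t‖ₑ ^ 2) := by
  have hgc : ContinuousOn g (Icc a (a + L)) := fun t ht => (hd t ht).continuousAt.continuousWithinAt
  have mg : AEMeasurable (fun t => ‖g t‖ₑ ^ 2) (volume.restrict (Ioc a (a + L))) :=
    ((hgc.mono Ioc_subset_Icc_self).aemeasurable measurableSet_Ioc).enorm.pow_const 2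
  have mg' : AEMeasurable (fun t => ‖g' t‖ₑ) (volume.restrict (Ioc a (a + L))) :=
    ((hc.mono Ioc_subset_Icc_self).aemeasurable measurableSet_Ioc).enorm
  have key : ∀ t ∈ Ioc a (a + L), ‖g a‖ₑ ^ 2 ≤ 2 * ‖g t‖ₑ ^ 2 + 2 * (ENNReal.ofReal L * ∫⁻ s in Ioc a (a + L), ‖g' s‖ₑ ^ 2) := by
    intro t ht
    have e : ∫ s in a..t, g' s = g t - g a := by
      apply intervalIntegral.integral_eq_sub_of_hasDerivAt
      · intro s hs
        rw [uIcc_of_le ht.1.le] at hs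
        exact hd s ⟨hs.1, hs.2.trans ht.2⟩
      · apply ContinuousOn.intervalIntegrable
        rw [uIcc_of_le ht.1.le]
        exact hc.mono (Icc_subset_Icc_right ht.2)
    have h1 : ‖g a‖ₑ ≤ ‖g t‖ₑ + ∫⁻ s in Ioc a (a + L), ‖g' s‖ₑ := by
      have : g a = g t - ∫ s in a..t, g' s := by rw [e]; ring
      rw [this]
      refine (enorm_sub_le).trans ?_
      gcongr
      rw [intervalIntegral.integral_of_le ht.1.le]
      refine (enorm_integral_le_lintegral_enorm _).trans ?_
      exact lintegral_mono_set (Ioc_subset_Ioc_right ht.2)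
    refine (pow_le_pow_left' h1 2).trans ((ennreal_add_sq_le _ _).trans ?_)
    gcongr
    refine (lintegral_sq_le _ _ mg').trans ?_
    simp
  have hint : ENNReal.ofReal L * ‖g a‖ₑ ^ 2 ≤ ∫⁻ t in Ioc a (a + L), (2 * ‖g t‖ₑ ^ 2 + 2 * (ENNReal.ofReal L * ∫⁻ s in Ioc a (a + L), ‖g' s‖ₑ ^ 2)) := by
    calc _ = ∫⁻ t in Ioc a (a + L), ‖g a‖ₑ ^ 2 := by simp [mul_comm]
      _ ≤ _ := setLIntegral_mono' measurableSet_Ioc key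
  rw [lintegral_add_right _ (by fun_prop), lintegral_const_mul'' _ mg] at hint
  simp only [lintegral_const, Measure.restrict_apply_univ, Real.volume_Ioc, add_sub_cancel_left] at hint
  rw [lintegral_add_left' (mg.const_mul _), lintegral_const_mul'' _ mg, lintegral_const_mul'' _ (mg'.pow_const 2)]
  set X := ∫⁻ t in Ioc a (a + L), ‖g t‖ₑ ^ 2
  set Y := ∫⁻ t in Ioc a (a + L), ‖g' t‖ₑ ^ 2
  have h0 : ENNReal.ofReal L ≠ 0 := by simpa using hL
  have hm := mul_le_mul_right hint (ENNReal.ofReal (1 / L))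
  have e1 : ENNReal.ofReal (1 / L) * ENNReal.ofReal L = 1 := by
    rw [← ENNReal.ofReal_mul (by positivity)]; simp [hL.ne']
  rw [← mul_assoc, e1, one_mul] at hm
  refine hm.trans (le_of_eq ?_)
  rw [ENNReal.ofReal_mul (by norm_num), show (2:ℝ) / L = 2 * (1 / L) by ring, ENNReal.ofReal_mul (by norm_num)]
  have e2 : ENNReal.ofReal 2 = 2 := by simp
  rw [e2, mul_add]
  calc _ = 2 * ENNReal.ofReal (1 / L) * X + (ENNReal.ofReal (1 / L) * ENNReal.ofReal L) * (2 * ENNReal.ofReal L * Y) := by ring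
    _ = _ := by rw [e1, one_mul]


/-- The dilated difference kernel times `F`. -/
noncomputable def HH (ψ F : ℝ → ℂ) (z l t : ℝ) : ℂ :=
  F t * ((l : ℂ) * ψ (l * (z - t)) - (l : ℂ) * ψ (-(l * t)))

lemma HH_schwartz (ψ F : 𝓢(ℝ, ℂ)) (z l : ℝ) (hl : 0 < l) :
    ∃ S : 𝓢(ℝ, ℂ), ∀ t, S t = HH ψ F z l t := by
  obtain ⟨g1, h1⟩ := schwartz_affine ψ (-l) (l * z) (by simpa using hl.ne')
  obtain ⟨g2, h2⟩ := schwartz_affine ψ (-l) 0 (by simpa using hl.ne')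
  refine ⟨SchwartzMap.pairing (ContinuousLinearMap.mul ℂ ℂ) F ((l : ℂ) • g1 - (l : ℂ) • g2), fun t => ?_⟩
  rw [SchwartzMap.pairing_apply_apply]
  simp [HH, h1, h2]
  left
  left
  congr 2; ring

lemma fourier_deriv_schwartz (S : 𝓢(ℝ, ℂ)) :
    ∃ D : 𝓢(ℝ, ℂ), (∀ t, D t = -(2 * (π : ℂ) * Complex.I * t) * S t) ∧
      ∀ ξ, HasDerivAt (⇑(𝓕 S : 𝓢(ℝ, ℂ))) (𝓕 D ξ) ξ := by
  have ht : (fun t : ℝ => (-(2 * (π : ℂ) * Complex.I * t) : ℂ)).HasTemperateGrowth := by fun_prop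
  refine ⟨SchwartzMap.smulLeftCLM ℂ (fun t : ℝ => (-(2 * (π : ℂ) * Complex.I * t) : ℂ)) S, fun t => ?_, fun ξ => ?_⟩
  · rw [SchwartzMap.smulLeftCLM_apply_apply ht]; simp
  · rw [SchwartzMap.fourier_coe, SchwartzMap.fourier_coe]
    have h2 : Integrable (fun t : ℝ => t • S t) := by
      have ht' : (fun t : ℝ => t).HasTemperateGrowth := by fun_prop
      have := (SchwartzMap.smulLeftCLM ℂ (fun t : ℝ => t) S).integrable (μ := volume)
      refine this.congr (Filter.Eventually.of_forall fun t => ?_)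
      rw [SchwartzMap.smulLeftCLM_apply_apply ht']
    have := Real.hasDerivAt_fourier S.integrable h2 ξ
    convert! this using 2
    ext t
    rw [SchwartzMap.smulLeftCLM_apply_apply ht]
    simp

/-- The integrand in the frequency variable. -/
noncomputable def QQ (ψ F : ℝ → ℂ) (z l ξ : ℝ) : ℝ≥0∞ :=
  ENNReal.ofReal (4 / l) * ‖𝓕 (HH ψ F z l) ξ‖ₑ ^ 2
    + ENNReal.ofReal (2 * l) * ‖deriv (𝓕 (HH ψ F z l)) ξ‖ₑ ^ 2

lemma QQ_bound (ψ F : 𝓢(ℝ, ℂ)) (z l : ℝ) (a L : ℝ) (hL : 0 < L) (hl : l ∈ Ioc L (2 * L)) :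
    ‖𝓕 (HH ψ F z l) a‖ₑ ^ 2 ≤ ∫⁻ ξ in Ioc a (a + L), QQ ψ F z l ξ := by
  have hl0 : 0 < l := hL.trans hl.1
  obtain ⟨S, hS⟩ := HH_schwartz ψ F z l hl0
  obtain ⟨D, hD, hD'⟩ := fourier_deriv_schwartz S
  have e : HH ψ F z l = S := by ext t; rw [hS]
  unfold QQ
  rw [e, ← SchwartzMap.fourier_coe]
  have := sobolev_pt ⇑(𝓕 S : 𝓢(ℝ, ℂ)) ⇑(𝓕 D : 𝓢(ℝ, ℂ)) a L hL (fun t _ => hD' t) (𝓕 D).continuous.continuousOn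
  refine this.trans (lintegral_mono fun ξ => ?_)
  simp only
  rw [(hD' ξ).deriv]
  gcongr ?_ * _ + ?_ * _
  · apply ENNReal.ofReal_le_ofReal
    rw [div_le_div_iff₀ hL hl0]; linarith [hl.2]
  · apply ENNReal.ofReal_le_ofReal
    linarith [hl.1]

lemma QQ_meas (ψ F : 𝓢(ℝ, ℂ)) (z l : ℝ) (hl0 : 0 < l) : Measurable (QQ ψ F z l) := by
  obtain ⟨S, hS⟩ := HH_schwartz ψ F z l hl0
  have e : HH ψ F z l = S := by ext t; rw [hS]
  unfold QQ
  rw [e, ← SchwartzMap.fourier_coe]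
  have h1 := (𝓕 S).continuous.measurable
  have h2 : Measurable (deriv ⇑(𝓕 S : 𝓢(ℝ, ℂ))) := measurable_deriv _
  fun_prop

lemma QQ_int (ψ F : 𝓢(ℝ, ℂ)) (z l : ℝ) (hl0 : 0 < l) :
    ∫⁻ ξ, QQ ψ F z l ξ = ∫⁻ t, ENNReal.ofReal (4 / l + 8 * π ^ 2 * l * t ^ 2) * ‖HH ψ F z l t‖ₑ ^ 2 := by
  obtain ⟨S, hS⟩ := HH_schwartz ψ F z l hl0
  obtain ⟨D, hD, hD'⟩ := fourier_deriv_schwartz S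
  have e : HH ψ F z l = S := by ext t; rw [hS]
  unfold QQ
  rw [e, ← SchwartzMap.fourier_coe]
  have e2 : deriv ⇑(𝓕 S : 𝓢(ℝ, ℂ)) = ⇑(𝓕 D : 𝓢(ℝ, ℂ)) := by ext ξ; rw [(hD' ξ).deriv]
  rw [e2]
  have m1 := (𝓕 S).continuous.measurable
  have m2 := (𝓕 D).continuous.measurable
  have m3 := S.continuous.measurable
  have m4 := D.continuous.measurable
  rw [lintegral_add_left (by fun_prop), lintegral_const_mul _ (by fun_prop), lintegral_const_mul _ (by fun_prop),
    plancherel_l, plancherel_l, ← lintegral_const_mul _ (by fun_prop), ← lintegral_const_mul _ (by fun_prop),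
    ← lintegral_add_left (by fun_prop)]
  congr 1
  ext t
  have : ‖D t‖ₑ ^ 2 = ENNReal.ofReal (4 * π ^ 2 * t ^ 2) * ‖S t‖ₑ ^ 2 := by
    rw [hD, enorm_mul, mul_pow, ← ofReal_norm, ← ENNReal.ofReal_pow (norm_nonneg _)]
    congr 2
    simp [mul_pow, abs_of_pos Real.pi_pos]
    left
    norm_num
  rw [this, ← mul_assoc, ← ENNReal.ofReal_mul (by positivity), ← add_mul, ← ENNReal.ofReal_add (by positivity) (by positivity)]
  congr 2
  ring

lemma tilde_schwartz (φ : 𝓢(ℝ, ℂ)) : ∃ φt : 𝓢(ℝ, ℂ), ∀ x, φt x = φ x + x * deriv φ x := by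
  have ht : (fun t : ℝ => (t : ℂ)).HasTemperateGrowth := by fun_prop
  refine ⟨φ + SchwartzMap.smulLeftCLM ℂ (fun t : ℝ => (t : ℂ)) (SchwartzMap.derivCLM ℂ ℂ φ), fun x => ?_⟩
  simp [SchwartzMap.smulLeftCLM_apply_apply ht]

lemma schwartz_bdd (φ : 𝓢(ℝ, ℂ)) : ∃ M : ℝ, 0 < M ∧ ∀ ξ, ‖φ ξ‖ ≤ M := by
  refine ⟨SchwartzMap.seminorm ℝ 0 0 φ + 1, ?_, fun ξ => ?_⟩
  · have := apply_nonneg (SchwartzMap.seminorm ℝ 0 0) φ; linarith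
  · have := SchwartzMap.norm_le_seminorm ℝ φ ξ; linarith

lemma lam_deriv (φ φt F : 𝓢(ℝ, ℂ)) (ht : ∀ x, φt x = φ x + x * deriv φ x) (z ξ l : ℝ) (hl : 0 < l) :
    HasDerivAt (fun l => 𝓕 (HH φ F z l) ξ) ((l : ℂ)⁻¹ * 𝓕 (HH φt F z l) ξ) l := by
  obtain ⟨M, hM0, hM⟩ := schwartz_bdd φt
  simp only [Real.fourier_real_eq_integral_exp_smul]
  have key := hasDerivAt_integral_of_dominated_loc_of_deriv_le (μ := volume)
    (F := fun (l : ℝ) (v : ℝ) => Complex.exp (↑(-2 * π * v * ξ) * Complex.I) • HH φ F z l v)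
    (F' := fun (l : ℝ) (v : ℝ) => Complex.exp (↑(-2 * π * v * ξ) * Complex.I) • (F v * (φt (l * (z - v)) - φt (-(l * v)))))
    (x₀ := l) (s := univ) (bound := fun v => ‖F v‖ * (2 * M)) Filter.univ_mem ?_ ?_ ?_ ?_ ?_ ?_
  · refine key.2.congr_deriv ?_
    rw [← integral_const_mul]
    congr 1
    ext v
    have : (l : ℂ) ≠ 0 := by exact_mod_cast hl.ne'
    simp only [smul_eq_mul, HH]
    field_simp
  · refine Filter.Eventually.of_forall fun x => Continuous.aestronglyMeasurable ?_
    have := φ.continuous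
    have := F.continuous
    unfold HH
    fun_prop
  · obtain ⟨S, hS⟩ := HH_schwartz φ F z l hl
    have : Integrable (HH φ F z l) := by
      refine S.integrable.congr (Filter.Eventually.of_forall fun t => hS t)
    refine (this.norm).mono' ?_ ?_
    · refine Continuous.aestronglyMeasurable ?_
      have := φ.continuous
      have := F.continuous
      unfold HH
      fun_prop
    · refine Filter.Eventually.of_forall fun v => ?_
      rw [norm_smul, Complex.norm_exp_ofReal_mul_I, one_mul]
  · refine Continuous.aestronglyMeasurable ?_
    have := φt.continuous
    have := F.continuous
    fun_prop
  · refine Filter.Eventually.of_forall fun v x _ => ?_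
    rw [norm_smul, Complex.norm_exp_ofReal_mul_I, one_mul, norm_mul]
    gcongr
    refine (norm_sub_le _ _).trans ?_
    linarith [hM (x * (z - v)), hM (-(x * v))]
  · exact F.integrable.norm.mul_const _
  · refine Filter.Eventually.of_forall fun v x _ => ?_
    suffices hs : HasDerivAt (fun y : ℝ => (y : ℂ) * φ (y * (z - v)) - (y : ℂ) * φ (-(y * v)))
        (φt (x * (z - v)) - φt (-(x * v))) x from
      (hs.const_mul (F v)).const_mul (Complex.exp (↑(-2 * π * v * ξ) * Complex.I))
    have gen : ∀ s : ℝ, HasDerivAt (fun y : ℝ => (y : ℂ) * φ (y * s)) (φt (x * s)) x := by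
      intro s
      have h1 : HasDerivAt (fun y : ℝ => (y : ℂ)) 1 x := Complex.ofRealCLM.hasDerivAt
      have h2 : HasDerivAt (fun y : ℝ => φ (y * s)) (s • deriv φ (x * s)) x :=
        (φ.hasDerivAt (x * s)).scomp x (by simpa using (hasDerivAt_id x).mul_const s)
      refine (h1.mul h2).congr_deriv ?_
      rw [ht]
      simp; ring
    have := (gen (z - v)).sub (gen (-v))
    simp only [mul_neg] at this
    exact this

lemma lam_cont (ψ F : 𝓢(ℝ, ℂ)) (z ξ : ℝ) :
    ContinuousOn (fun l => 𝓕 (HH ψ F z l) ξ) (Ioi 0) := by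
  obtain ⟨φt, ht⟩ := tilde_schwartz ψ
  intro l hl
  exact (lam_deriv ψ φt F ht z ξ l hl).continuousAt.continuousWithinAt


lemma sum_lintegral_le {ι : Type*} (s : Finset ι) (μ : Measure ℝ) (R : ι → ℝ → ℝ≥0∞) :
    ∑ m ∈ s, ∫⁻ x, R m x ∂μ ≤ ∫⁻ x, ∑ m ∈ s, R m x ∂μ := by
  classical
  induction s using Finset.induction_on with
  | empty => simp
  | insert i s hi ih =>
    simp only [Finset.sum_insert hi]
    exact (add_le_add le_rfl ih).trans (MeasureTheory.le_lintegral_add _ _)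

lemma sum_disj {N : ℕ} (a b : Fin N → ℝ) (hab : Admissible a b) (Q : ℝ → ℝ≥0∞) :
    ∑ m, ∫⁻ ξ in Ioc (a m) (a m + (b m - a m)), Q ξ ≤ ∫⁻ ξ, Q ξ := by
  have h := lintegral_iUnion (μ := volume) (s := fun m : Fin N => Ioc (a m) (a m + (b m - a m)))
    (fun _ => measurableSet_Ioc) (by
      intro m m' hne
      have := hab.2.2 m m' hne
      simp only [add_sub_cancel]
      exact this.mono Ioc_subset_Icc_self Ioc_subset_Icc_self) Q
  rw [tsum_fintype] at h
  rw [← h]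
  exact setLIntegral_le_lintegral _ _

lemma sum_tail1 (φ φt F : 𝓢(ℝ, ℂ)) (ht : ∀ x, φt x = φ x + x * deriv φ x) (z : ℝ)
    {N : ℕ} (a b : Fin N → ℝ) (hab : Admissible a b) :
    ∑ m, ‖𝓕 (HH φ F z (b m - a m)) (a m)‖ₑ ^ 2 ≤
      ∫⁻ l in Ioi 0, ENNReal.ofReal (4 / l) * ((∫⁻ ξ, QQ φ F z l ξ) + ∫⁻ ξ, QQ φt F z l ξ) := by
  have step : ∀ m, ‖𝓕 (HH φ F z (b m - a m)) (a m)‖ₑ ^ 2 ≤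
      ∫⁻ l in Ioi 0, ENNReal.ofReal (4 / l) * ((∫⁻ ξ in Ioc (a m) (a m + (b m - a m)), QQ φ F z l ξ)
        + ∫⁻ ξ in Ioc (a m) (a m + (b m - a m)), QQ φt F z l ξ) := by
    intro m
    have hL : 0 < b m - a m := sub_pos.mpr (hab.1 m)
    set L := b m - a m with hLdef
    have sob := sobolev_pt (fun l => 𝓕 (HH φ F z l) (a m)) (fun l => (l : ℂ)⁻¹ * 𝓕 (HH φt F z l) (a m)) L L hL
      (fun l hl => lam_deriv φ φt F ht z (a m) l (hL.trans_le hl.1))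
      (by
        apply ContinuousOn.mul
        · apply ContinuousOn.inv₀ (by fun_prop)
          intro l hl
          exact_mod_cast (hL.trans_le hl.1).ne'
        · exact (lam_cont φt F z (a m)).mono fun l hl => hL.trans_le hl.1)
    refine sob.trans ?_
    have hsub : Ioc L (L + L) ⊆ Ioi 0 := fun l hl => hL.trans hl.1
    refine le_trans ?_ (lintegral_mono_set hsub)
    refine setLIntegral_mono' measurableSet_Ioc fun l hl => ?_
    have hl' : l ∈ Ioc L (2 * L) := ⟨hl.1, by linarith [hl.2]⟩
    have hl0 : 0 < l := hL.trans hl.1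
    rw [mul_add]
    gcongr ?_ + ?_
    · gcongr ?_ * ?_
      · apply ENNReal.ofReal_le_ofReal
        rw [div_le_div_iff₀ hL hl0]; linarith [hl'.2]
      · exact QQ_bound φ F z l (a m) L hL hl'
    · rw [enorm_mul, mul_pow, ← mul_assoc]
      gcongr ?_ * ?_
      · rw [← ofReal_norm, ← ENNReal.ofReal_pow (norm_nonneg _), ← ENNReal.ofReal_mul (by positivity)]
        apply ENNReal.ofReal_le_ofReal
        rw [norm_inv, Complex.norm_real, Real.norm_eq_abs, abs_of_pos hl0]
        rw [inv_pow, ← div_eq_mul_inv, div_le_div_iff₀ (by positivity) hl0]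
        nlinarith [hl.1]
      · exact QQ_bound φt F z l (a m) L hL hl'
  refine (Finset.sum_le_sum fun m _ => step m).trans ((sum_lintegral_le _ _ _).trans ?_)
  refine lintegral_mono fun l => ?_
  simp only
  rw [← Finset.mul_sum, Finset.sum_add_distrib]
  gcongr
  · exact sum_disj a b hab _
  · exact sum_disj a b hab _

lemma deriv_decay (ψ : 𝓢(ℝ, ℂ)) : ∃ C : ℝ, 0 < C ∧ ∀ s, ‖deriv ψ s‖ * (1 + 4 * s ^ 2) ^ 2 ≤ C := by
  set D := SchwartzMap.derivCLM ℝ ℂ ψ with hD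
  have h : ∀ k s, ‖s‖ ^ k * ‖deriv ψ s‖ ≤ SchwartzMap.seminorm ℝ k 0 D := by
    intro k s
    have := SchwartzMap.norm_pow_mul_le_seminorm ℝ D k s
    simpa [hD] using this
  have hn := fun k => apply_nonneg (SchwartzMap.seminorm ℝ k 0) D
  refine ⟨SchwartzMap.seminorm ℝ 0 0 D + 8 * SchwartzMap.seminorm ℝ 2 0 D + 16 * SchwartzMap.seminorm ℝ 4 0 D + 1, ?_, fun s => ?_⟩
  · linarith [hn 0, hn 2, hn 4]
  · have h0 := h 0 s
    have h2 := h 2 s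
    have h4 := h 4 s
    have e4 : ‖s‖ ^ 4 = (s ^ 2) ^ 2 := by rw [← sq_abs s, Real.norm_eq_abs]; ring
    rw [e4] at h4
    rw [Real.norm_eq_abs, sq_abs] at h2
    simp only [pow_zero, one_mul] at h0
    nlinarith

lemma diff_bound (ψ : 𝓢(ℝ, ℂ)) (C : ℝ) (hC : ∀ s, ‖deriv ψ s‖ * (1 + 4 * s ^ 2) ^ 2 ≤ C)
    (r z t l : ℝ) (hz : |z| ≤ r) (ht : 2 * r ≤ |t|) (hl : 0 < l) :
    ‖ψ (l * (z - t)) - ψ (-(l * t))‖ ≤ C / (1 + (l * t) ^ 2) ^ 2 * (l * r) := by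
  have hC0 : 0 ≤ C := le_trans (by positivity) (hC 0)
  have hr : 0 ≤ r := (abs_nonneg z).trans hz
  have key := (convex_uIcc (-(l * t)) (l * (z - t))).norm_image_sub_le_of_norm_deriv_le
    (𝕜 := ℝ) (f := ψ) (C := C / (1 + (l * t) ^ 2) ^ 2) (fun x _ => ψ.differentiableAt) ?_
    (left_mem_uIcc) (right_mem_uIcc)
  · refine key.trans ?_
    have : l * (z - t) - -(l * t) = l * z := by ring
    rw [this, Real.norm_eq_abs, abs_mul, abs_of_pos hl]
    gcongr
  · intro s hs
    rw [le_div_iff₀ (by positivity)]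
    refine le_trans ?_ (hC s)
    have h1 : |s + l * t| ≤ l * r := by
      have := abs_sub_left_of_mem_uIcc hs
      have e : l * (z - t) - -(l * t) = l * z := by ring
      rw [e, sub_neg_eq_add, abs_mul l z, abs_of_pos hl] at this
      exact this.trans (by gcongr)
    have h2 : l * |t| ≤ 2 * |s| := by
      have h3 : l * |t| = |l * t| := by rw [abs_mul, abs_of_pos hl]
      have h4 : |l * t| ≤ |s + l * t| + |s| := by
        have := abs_sub (s + l * t) s
        simpa using this
      nlinarith
    gcongr ‖deriv ψ s‖ * (1 + ?_) ^ 2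
    have : (l * |t|) ^ 2 ≤ (2 * |s|) ^ 2 := by gcongr
    rw [mul_pow, sq_abs, mul_pow 2, sq_abs] at this
    nlinarith

lemma HH_bound (ψ F : 𝓢(ℝ, ℂ)) (C : ℝ) (hC : ∀ s, ‖deriv ψ s‖ * (1 + 4 * s ^ 2) ^ 2 ≤ C)
    (r z t l : ℝ) (hz : |z| ≤ r) (ht : 2 * r ≤ |t|) (hr : 0 < r) (hl : 0 < l) :
    ENNReal.ofReal (4 / l) * (ENNReal.ofReal (4 / l + 8 * π ^ 2 * l * t ^ 2) * ‖HH ψ F z l t‖ₑ ^ 2) ≤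
      ‖F t‖ₑ ^ 2 * ENNReal.ofReal (32 * π ^ 2 * C ^ 2 * r ^ 2 / t ^ 2 * (1 + (l * t) ^ 2)⁻¹) := by
  have hd := diff_bound ψ C hC r z t l hz ht hl
  have t0 : 0 < t ^ 2 := by
    have : 0 < |t| := by linarith
    exact pow_pos this 2 |>.trans_eq (sq_abs t)
  unfold HH
  rw [← mul_sub, enorm_mul, mul_pow, ← ofReal_norm ((l : ℂ) * _), ← ENNReal.ofReal_pow (norm_nonneg _), norm_mul, Complex.norm_real, Real.norm_eq_abs, abs_of_pos hl]
  rw [mul_left_comm (ENNReal.ofReal (4 / l + _)), mul_left_comm]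
  gcongr
  rw [← ENNReal.ofReal_mul (by positivity), ← ENNReal.ofReal_mul (by positivity)]
  apply ENNReal.ofReal_le_ofReal
  set d := ‖ψ (l * (z - t)) - ψ (-(l * t))‖
  have hd2 : d ^ 2 ≤ (C / (1 + (l * t) ^ 2) ^ 2 * (l * r)) ^ 2 := by gcongr
  set w := 1 + (l * t) ^ 2 with hw
  have hw1 : 1 ≤ w := by rw [hw]; nlinarith [sq_nonneg (l * t)]
  have e1 : 4 / l * ((4 / l + 8 * π ^ 2 * l * t ^ 2) * (l * d) ^ 2) = (16 + 32 * π ^ 2 * (l * t) ^ 2) * d ^ 2 := by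
    field_simp; ring
  rw [e1]
  have pi3 : (3:ℝ) < π := Real.pi_gt_three
  have e2 : 16 + 32 * π ^ 2 * (l * t) ^ 2 ≤ 32 * π ^ 2 * w := by
    rw [hw]; nlinarith [sq_nonneg (l * t)]
  have e3 : (l * r) ^ 2 ≤ r ^ 2 / t ^ 2 * w := by
    rw [div_mul_eq_mul_div, le_div_iff₀ t0, hw]
    nlinarith [sq_nonneg r]
  calc (16 + 32 * π ^ 2 * (l * t) ^ 2) * d ^ 2 ≤ (32 * π ^ 2 * w) * (C / w ^ 2 * (l * r)) ^ 2 := by gcongr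
    _ = (32 * π ^ 2 * w) * (C ^ 2 / w ^ 4 * (l * r) ^ 2) := by rw [mul_pow, div_pow]; ring
    _ ≤ (32 * π ^ 2 * w) * (C ^ 2 / w ^ 4 * (r ^ 2 / t ^ 2 * w)) := by gcongr
    _ = 32 * π ^ 2 * C ^ 2 * r ^ 2 / t ^ 2 * (w ^ 2)⁻¹ := by field_simp
    _ ≤ 32 * π ^ 2 * C ^ 2 * r ^ 2 / t ^ 2 * w⁻¹ := by
      gcongr
      nlinarith

lemma lam_int (t : ℝ) (ht : t ≠ 0) :
    ∫⁻ l in Ioi (0:ℝ), ENNReal.ofReal ((1 + (l * t) ^ 2)⁻¹) ≤ ENNReal.ofReal (π / |t|) := by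
  refine (setLIntegral_le_lintegral _ _).trans ?_
  have hi : Integrable (fun l : ℝ => (1 + (l * t) ^ 2)⁻¹) := by
    exact integrable_inv_one_add_sq.comp_mul_right' ht
  rw [← ofReal_integral_eq_lintegral_ofReal hi (Filter.Eventually.of_forall fun l => by positivity)]
  have := Measure.integral_comp_mul_right (fun x : ℝ => (1 + x ^ 2)⁻¹) t
  rw [this, integral_univ_inv_one_add_sq]
  simp [abs_inv, div_eq_mul_inv, mul_comm]

lemma tail_bound (φ : 𝓢(ℝ, ℂ)) : ∃ K : ℝ, 0 < K ∧ ∀ (N : ℕ) (a b : Fin N → ℝ), Admissible a b →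
    ∀ (F : 𝓢(ℝ, ℂ)) (r z : ℝ), 0 < r → |z| ≤ r → (∀ t, |t| < 2 * r → F t = 0) →
    ∑ m, ‖𝓕 (HH φ F z (b m - a m)) (a m)‖ₑ ^ 2 ≤
      ENNReal.ofReal K * ∫⁻ t, ‖F t‖ₑ ^ 2 * ENNReal.ofReal (r ^ 2 / |t| ^ 3) := by
  obtain ⟨φt, ht⟩ := tilde_schwartz φ
  obtain ⟨C1, hC10, hC1⟩ := deriv_decay φ
  obtain ⟨C2, hC20, hC2⟩ := deriv_decay φt
  have main : ∀ (ψ : 𝓢(ℝ, ℂ)) (C : ℝ), 0 < C → (∀ s, ‖deriv ψ s‖ * (1 + 4 * s ^ 2) ^ 2 ≤ C) →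
    ∀ (F : 𝓢(ℝ, ℂ)) (r z : ℝ), 0 < r → |z| ≤ r → (∀ t, |t| < 2 * r → F t = 0) →
    ∫⁻ l in Ioi (0:ℝ), ENNReal.ofReal (4 / l) * (∫⁻ ξ, QQ ψ F z l ξ) ≤
      ENNReal.ofReal (32 * π ^ 3 * C ^ 2) * ∫⁻ t, ‖F t‖ₑ ^ 2 * ENNReal.ofReal (r ^ 2 / |t| ^ 3) := by
    intro ψ C hC0 hC F r z hr hz hF
    have mF := F.continuous.measurable
    have mψ := ψ.continuous.measurable
    calc _ = ∫⁻ l in Ioi (0:ℝ), ∫⁻ t, ENNReal.ofReal (4 / l) * (ENNReal.ofReal (4 / l + 8 * π ^ 2 * l * t ^ 2) * ‖HH ψ F z l t‖ₑ ^ 2) := by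
          refine setLIntegral_congr_fun measurableSet_Ioi fun l hl => ?_
          rw [QQ_int ψ F z l hl, lintegral_const_mul' _ _ ENNReal.ofReal_ne_top]
      _ = ∫⁻ t, ∫⁻ l in Ioi (0:ℝ), ENNReal.ofReal (4 / l) * (ENNReal.ofReal (4 / l + 8 * π ^ 2 * l * t ^ 2) * ‖HH ψ F z l t‖ₑ ^ 2) := by
          apply lintegral_lintegral_swap
          apply Measurable.aemeasurable
          unfold HH Function.uncurry
          fun_prop
      _ ≤ ∫⁻ t, ENNReal.ofReal (32 * π ^ 3 * C ^ 2) * (‖F t‖ₑ ^ 2 * ENNReal.ofReal (r ^ 2 / |t| ^ 3)) := by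
          refine lintegral_mono fun t => ?_
          simp only
          by_cases h : |t| < 2 * r
          · simp [HH, hF t h]
          · push Not at h
            have ht0 : 0 < |t| := by linarith
            have hst := setLIntegral_mono' (μ := volume) (s := Ioi (0:ℝ)) measurableSet_Ioi (fun l hl => HH_bound ψ F C hC r z t l hz h hr hl)
            refine hst.trans ?_
            simp_rw [ENNReal.ofReal_mul (p := 32 * π ^ 2 * C ^ 2 * r ^ 2 / t ^ 2) (by positivity)]
            rw [lintegral_const_mul' _ _ (by simp), lintegral_const_mul' _ _ (by simp),
              mul_left_comm (ENNReal.ofReal (32 * π ^ 3 * C ^ 2))]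
            refine mul_le_mul_right ?_ _
            calc _ ≤ ENNReal.ofReal (32 * π ^ 2 * C ^ 2 * r ^ 2 / t ^ 2) * ENNReal.ofReal (π / |t|) := by
                  gcongr
                  exact lam_int t (abs_pos.mp ht0)
              _ = _ := by
                  rw [← ENNReal.ofReal_mul (by positivity), ← ENNReal.ofReal_mul (by positivity)]
                  congr 1
                  rw [← sq_abs t]
                  field_simp
      _ = _ := lintegral_const_mul' _ _ ENNReal.ofReal_ne_top
  refine ⟨32 * π ^ 3 * C1 ^ 2 + 32 * π ^ 3 * C2 ^ 2, by positivity, fun N a b hab F r z hr hz hF => ?_⟩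
  refine (sum_tail1 φ φt F ht z a b hab).trans ?_
  rw [ENNReal.ofReal_add (by positivity) (by positivity), add_mul]
  refine le_trans ?_ (add_le_add (main φ C1 hC10 hC1 F r z hr hz hF) (main φt C2 hC20 hC2 F r z hr hz hF))
  simp_rw [mul_add]
  rw [lintegral_add_left']
  have mF := F.continuous.measurable
  have mψ := φ.continuous.measurable
  have : Measurable (fun l : ℝ => ENNReal.ofReal (4 / l) * ∫⁻ t, ENNReal.ofReal (4 / l + 8 * π ^ 2 * l * t ^ 2) * ‖HH φ F z l t‖ₑ ^ 2) := by
    apply Measurable.mul (by fun_prop)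
    apply Measurable.lintegral_prod_right'
      (f := fun p : ℝ × ℝ => ENNReal.ofReal (4 / p.1 + 8 * π ^ 2 * p.1 * p.2 ^ 2) * ‖HH φ F z p.1 p.2‖ₑ ^ 2)
    unfold HH
    fun_prop
  refine this.aemeasurable.congr ?_
  rw [Filter.EventuallyEq, ae_restrict_iff' measurableSet_Ioi]
  refine Filter.Eventually.of_forall fun l hl => ?_
  rw [QQ_int φ F z l hl]


lemma dyadic (G Gs : ℝ → ℝ≥0∞) (hG : Measurable G) (c r y : ℝ) (hr : 0 < r) (hy : y ∈ Metric.ball c r)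
    (h1 : ∀ t, Gs t ≤ G (c + t)) (h2 : ∀ t, |t| < 2 * r → Gs t = 0) :
    ∫⁻ t, Gs t * ENNReal.ofReal (r ^ 2 / |t| ^ 3) ≤ 2 * MF G y := by
  have pt : ∀ t, Gs t * ENNReal.ofReal (r ^ 2 / |t| ^ 3) ≤
      ∑' j : ℕ, ENNReal.ofReal (1 / (8 * 8 ^ j * r)) * (Metric.ball c (4 * 2 ^ j * r)).indicator G (c + t) := by
    intro t
    by_cases h : |t| < 2 * r
    · simp [h2 t h]
    push Not at h
    obtain ⟨j, hj1, hj2⟩ := exists_nat_pow_near (x := |t| / (2 * r)) (y := 2) (by rw [le_div_iff₀ (by positivity)]; linarith) (by norm_num)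
    rw [le_div_iff₀ (by positivity)] at hj1
    rw [div_lt_iff₀ (by positivity)] at hj2
    refine le_trans ?_ (ENNReal.le_tsum j)
    rw [mul_comm, Set.indicator_of_mem]
    · gcongr ENNReal.ofReal ?_ * ?_
      · have h3 : (2 ^ j * (2 * r)) ^ 3 ≤ |t| ^ 3 := by gcongr
        have e : (2 ^ j * (2 * r)) ^ 3 = r ^ 2 * (8 * 8 ^ j * r) := by
          rw [mul_pow, ← pow_mul, mul_comm j 3, pow_mul]; norm_num; ring
        rw [e] at h3
        have t0 : 0 < |t| := by linarith
        rw [div_le_div_iff₀ (by positivity) (by positivity)]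
        linarith
      · exact h1 t
    · rw [Metric.mem_ball, Real.dist_eq]
      have : c + t - c = t := by ring
      rw [this]
      calc _ < _ := hj2
        _ = _ := by ring
  refine (lintegral_mono pt).trans ?_
  rw [lintegral_tsum]
  · calc _ ≤ ∑' j : ℕ, (2⁻¹ : ℝ≥0∞) ^ j * MF G y := by
          refine ENNReal.tsum_le_tsum fun j => ?_
          rw [lintegral_const_mul' _ _ ENNReal.ofReal_ne_top, lintegral_add_left_eq_self (fun t => (Metric.ball c (4 * 2 ^ j * r)).indicator G t) c,
            lintegral_indicator Metric.isOpen_ball.measurableSet]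
          have hp : (1:ℝ) ≤ 2 ^ j := one_le_pow₀ (by norm_num)
          have := lintegral_ball_le_MF G (c := c) (r := 4 * 2 ^ j * r) (x := y) (by positivity)
            (Metric.ball_subset_ball (by nlinarith) hy)
          refine (mul_le_mul_right this _).trans ?_
          rw [mul_left_comm, mul_comm, ← ENNReal.ofReal_mul (by positivity)]
          gcongr
          have e : (2⁻¹ : ℝ≥0∞) ^ j = ENNReal.ofReal ((2⁻¹ : ℝ) ^ j) := by
            rw [ENNReal.ofReal_pow (by norm_num), ENNReal.ofReal_inv_of_pos (by norm_num)]; simp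
          rw [e]
          apply ENNReal.ofReal_le_ofReal
          have e8 : (8:ℝ) ^ j = 2 ^ j * 2 ^ j * 2 ^ j := by rw [← mul_pow, ← mul_pow]; norm_num
          rw [e8, inv_pow, div_mul_eq_mul_div, div_le_iff₀ (by positivity)]
          field_simp
          nlinarith
      _ = 2 * MF G y := by
          rw [ENNReal.tsum_mul_right]
          congr 1
          simp [ENNReal.tsum_geometric]
  · intro j
    apply Measurable.aemeasurable
    apply Measurable.const_mul
    exact (hG.indicator Metric.isOpen_ball.measurableSet).comp (measurable_const_add c)

lemma norm_e2pi (t : ℝ) : ‖e2pi t‖ = 1 := by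
  unfold e2pi
  have : 2 * (π : ℂ) * Complex.I * t = ((2 * π * t : ℝ) : ℂ) * Complex.I := by push_cast; ring
  rw [this, Complex.norm_exp_ofReal_mul_I]

lemma e2pi_add (s t : ℝ) : e2pi (s + t) = e2pi s * e2pi t := by
  unfold e2pi
  rw [← Complex.exp_add]; push_cast; ring_nf

lemma continuous_e2pi : Continuous e2pi := by unfold e2pi; fun_prop

lemma rotConv_eq (φ f : ℝ → ℂ) (a b x : ℝ) :
    rotConv φ a b f x = ∫ t, e2pi (-(a * t)) * (f t * (((b - a : ℝ) : ℂ) * φ ((b - a) * (x - t)))) := by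
  unfold rotConv conv phim
  rw [← integral_const_mul]
  congr 1
  ext t
  have : e2pi (-(a * t)) = e2pi (-(a * x)) * e2pi (a * (x - t)) := by
    rw [← e2pi_add]; congr 1; ring
  rw [this]; ring

lemma rot_int (φ f : 𝓢(ℝ, ℂ)) (a b x : ℝ) :
    Integrable (fun t => e2pi (-(a * t)) * (f t * (((b - a : ℝ) : ℂ) * φ ((b - a) * (x - t))))) := by
  obtain ⟨M, hM0, hM⟩ := schwartz_bdd φ
  have h1 := φ.continuous
  have h2 := f.continuous
  have h3 := continuous_e2pi
  refine (f.integrable.norm.mul_const (|b - a| * M)).mono' (Continuous.aestronglyMeasurable (by fun_prop)) ?_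
  refine Filter.Eventually.of_forall fun t => ?_
  rw [norm_mul, norm_e2pi, one_mul, norm_mul, norm_mul, Complex.norm_real, Real.norm_eq_abs]
  gcongr
  exact hM _

lemma rot_diff (φ f F : 𝓢(ℝ, ℂ)) (a b c x : ℝ) (hF : ∀ t, F t = f (c + t)) :
    rotConv φ a b f x - rotConv φ a b f c = e2pi (-(a * c)) * 𝓕 (HH φ F (x - c) (b - a)) a := by
  rw [rotConv_eq, rotConv_eq, ← integral_sub (rot_int _ _ _ _ _) (rot_int _ _ _ _ _)]
  rw [Real.fourier_real_eq_integral_exp_smul, ← integral_const_mul]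
  rw [← integral_add_left_eq_self _ c]
  congr 1
  ext t
  have h1 : Complex.exp (↑(-2 * π * t * a) * Complex.I) = e2pi (-(a * t)) := by
    unfold e2pi; congr 1; push_cast; ring
  have h2 : e2pi (-(a * (c + t))) = e2pi (-(a * c)) * e2pi (-(a * t)) := by
    rw [← e2pi_add]; congr 1; ring
  rw [h1, h2]
  unfold HH
  rw [hF, smul_eq_mul]
  have e1 : x - (c + t) = x - c - t := by ring
  have e2 : (b - a) * (c - (c + t)) = -((b - a) * t) := by ring
  rw [e1, e2]
  ring

lemma rot_add (φ f g h : 𝓢(ℝ, ℂ)) (a b x : ℝ) (hs : ∀ t, f t = g t + h t) :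
    rotConv φ a b f x = rotConv φ a b g x + rotConv φ a b h x := by
  rw [rotConv_eq, rotConv_eq, rotConv_eq, ← integral_add (rot_int _ _ _ _ _) (rot_int _ _ _ _ _)]
  congr 1
  ext t
  rw [hs]; ring

lemma enorm_rot (φ f : ℝ → ℂ) (a b x : ℝ) : ‖rotConv φ a b f x‖ₑ = ‖conv f (phim φ a b) x‖ₑ := by
  unfold rotConv
  rw [enorm_mul, ← ofReal_norm (e2pi _), norm_e2pi]; simp

lemma rot_cont (φ f : 𝓢(ℝ, ℂ)) (a b : ℝ) (hab : a < b) : Continuous (rotConv φ a b f) := by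
  obtain ⟨Φ, h1, h2⟩ := phim_schwartz φ a b hab
  obtain ⟨G, h3, h4⟩ := conv_schwartz f Φ
  have e : phim φ a b = Φ := by ext x; rw [h1]
  have e2 : conv f (phim φ a b) = G := by ext x; rw [e, h3]
  unfold rotConv
  rw [e2]
  have := G.continuous
  have := continuous_e2pi
  fun_prop

lemma cutoff (f : 𝓢(ℝ, ℂ)) (c r : ℝ) (hr : 0 < r) : ∃ f1 f2 : 𝓢(ℝ, ℂ), (∀ t, f t = f1 t + f2 t) ∧
    (∀ t, ‖f1 t‖ ≤ ‖f t‖) ∧ (∀ t, ‖f2 t‖ ≤ ‖f t‖) ∧ (∀ t, t ∉ Metric.ball c (4 * r) → f1 t = 0) ∧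
    (∀ t, |t - c| < 2 * r → f2 t = 0) := by
  let χ : ContDiffBump c := ⟨2 * r, 4 * r, by positivity, by linarith⟩
  have hs : HasCompactSupport (fun t => (χ t : ℂ) * f t) := by
    apply HasCompactSupport.mul_right
    exact χ.hasCompactSupport.comp_left (g := fun x : ℝ => (x : ℂ)) (by simp)
  have hd : ContDiff ℝ (⊤ : ℕ∞) (fun t => (χ t : ℂ) * f t) := by
    apply ContDiff.mul
    · exact Complex.ofRealCLM.contDiff.comp χ.contDiff
    · exact f.smooth _
  let f1 : 𝓢(ℝ, ℂ) := hs.toSchwartzMap hd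
  have hf1 : ∀ t, f1 t = (χ t : ℂ) * f t := fun t => rfl
  refine ⟨f1, f - f1, fun t => by simp, fun t => ?_, fun t => ?_, fun t ht => ?_, fun t ht => ?_⟩
  · rw [hf1, norm_mul, Complex.norm_real, Real.norm_eq_abs, abs_of_nonneg χ.nonneg]
    exact mul_le_of_le_one_left (norm_nonneg _) χ.le_one
  · have : (f - f1) t = ((1 - χ t : ℝ) : ℂ) * f t := by
      rw [sub_apply, hf1]; push_cast; ring
    rw [this, norm_mul, Complex.norm_real, Real.norm_eq_abs, abs_of_nonneg (by linarith [χ.le_one (x := t)])]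
    exact mul_le_of_le_one_left (norm_nonneg _) (by linarith [χ.nonneg (x := t)])
  · have : χ t = 0 := by
      by_contra hc
      apply ht
      have h := χ.support_eq
      have : t ∈ support χ := hc
      rw [h] at this
      exact this
    rw [hf1, this]; simp
  · have : χ t = 1 := χ.one_of_mem_closedBall (by
      rw [Metric.mem_closedBall, Real.dist_eq]; exact ht.le)
    rw [sub_apply, hf1, this]; simp

lemma osc (φ : 𝓢(ℝ, ℂ)) (hφ : Function.support (𝓕 ⇑φ) ⊆ Set.Ioo 0 1) :
    ∃ A : ℝ, 0 < A ∧ ∀ (N : ℕ) (a b : Fin N → ℝ), Admissible a b → ∀ f : 𝓢(ℝ, ℂ),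
      OscControl (fun x => ∑ m, ‖conv f (phim φ (a m) (b m)) x‖ₑ ^ 2) (MF fun x => ‖f x‖ₑ ^ 2)
        (ENNReal.ofReal A) := by
  obtain ⟨B, hB0, hB⟩ := L2_bound φ hφ
  obtain ⟨K, hK0, hK⟩ := tail_bound φ
  refine ⟨8 * B + 4 * K, by positivity, fun N a b hab f c r hr => ?_⟩
  obtain ⟨f1, f2, hsum, hf1, hf2, hs1, hs2⟩ := cutoff f c r hr
  obtain ⟨F, hF⟩ := schwartz_affine f2 1 c one_ne_zero
  have hF' : ∀ t, F t = f2 (c + t) := fun t => by rw [hF]; congr 1; ring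
  set v : Fin N → ℂ := fun m => rotConv φ (a m) (b m) f2 c
  refine ⟨fun x => ∑ m, ‖rotConv φ (a m) (b m) f x - v m‖ₑ ^ 2, 2 * ∑ m, ‖v m‖ₑ ^ 2, ?_, fun x => ?_, fun x => ?_, fun y hy => ?_⟩
  · refine Finset.measurable_sum _ fun m _ => ?_
    have := (rot_cont φ f (a m) (b m) (hab.1 m)).measurable
    fun_prop
  · simp only [← enorm_rot]
    rw [Finset.mul_sum, Finset.mul_sum, ← Finset.sum_add_distrib]
    refine Finset.sum_le_sum fun m _ => ?_
    refine le_trans ?_ (ennreal_add_sq_le _ _)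
    gcongr
    have := enorm_add_le (rotConv φ (a m) (b m) f x - v m) (v m)
    simpa using this
  · simp only [← enorm_rot]
    rw [← Finset.sum_add_distrib, Finset.mul_sum, Finset.mul_sum]
    refine Finset.sum_le_sum fun m _ => ?_
    have h1 : ‖v m‖ₑ ≤ ‖rotConv φ (a m) (b m) f x‖ₑ + ‖rotConv φ (a m) (b m) f x - v m‖ₑ := by
      have := enorm_sub_le (a := rotConv φ (a m) (b m) f x) (b := rotConv φ (a m) (b m) f x - v m)
      simpa using this
    calc _ ≤ 2 * (2 * ‖rotConv φ (a m) (b m) f x‖ₑ ^ 2 + 2 * ‖rotConv φ (a m) (b m) f x - v m‖ₑ ^ 2) := by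
          gcongr
          exact (pow_le_pow_left' h1 2).trans (ennreal_add_sq_le _ _)
      _ = _ := by ring
  · set h := MF (fun x => ‖f x‖ₑ ^ 2) y with hh
    have mf : Measurable (fun x => ‖f x‖ₑ ^ 2) := f.continuous.measurable.enorm.pow_const 2
    have tail : ∀ x ∈ Metric.ball c r, ∑ m, ‖rotConv φ (a m) (b m) f2 x - v m‖ₑ ^ 2 ≤ ENNReal.ofReal K * (2 * h) := by
      intro x hx
      have e : ∀ m, ‖rotConv φ (a m) (b m) f2 x - v m‖ₑ = ‖𝓕 (HH φ F (x - c) (b m - a m)) (a m)‖ₑ := by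
        intro m
        rw [rot_diff φ f2 F (a m) (b m) c x hF', enorm_mul, ← ofReal_norm (e2pi _), norm_e2pi]; simp
      simp only [e]
      rw [Metric.mem_ball, Real.dist_eq] at hx
      have hFz : ∀ t, |t| < 2 * r → F t = 0 := by
        intro t ht
        rw [hF']
        exact hs2 _ (by simpa using ht)
      refine (hK N a b hab F r (x - c) hr hx.le hFz).trans ?_
      gcongr
      refine dyadic (fun x => ‖f x‖ₑ ^ 2) _ mf c r y hr hy (fun t => ?_) (fun t ht => ?_)
      · rw [hF']
        gcongr
        rw [← ofReal_norm, ← ofReal_norm]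
        exact ENNReal.ofReal_le_ofReal (hf2 _)
      · simp [hFz t ht]
    have loc : ∫⁻ x, ‖f1 x‖ₑ ^ 2 ≤ h * ENNReal.ofReal (2 * (4 * r)) := by
      refine le_trans ?_ (lintegral_ball_le_MF (fun x => ‖f x‖ₑ ^ 2) (c := c) (r := 4 * r) (x := y) (by positivity)
        (Metric.ball_subset_ball (by linarith) hy))
      rw [← lintegral_indicator Metric.isOpen_ball.measurableSet]
      refine lintegral_mono fun x => ?_
      by_cases hx : x ∈ Metric.ball c (4 * r)
      · rw [indicator_of_mem hx]
        gcongr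
        rw [← ofReal_norm, ← ofReal_norm]
        exact ENNReal.ofReal_le_ofReal (hf1 _)
      · simp [hs1 x hx]
    have pt : ∀ x ∈ Metric.ball c r, ∑ m, ‖rotConv φ (a m) (b m) f x - v m‖ₑ ^ 2 ≤
        2 * (∑ m, ‖conv f1 (phim φ (a m) (b m)) x‖ₑ ^ 2) + 2 * (ENNReal.ofReal K * (2 * h)) := by
      intro x hx
      refine le_trans ?_ (add_le_add le_rfl (mul_le_mul_right (tail x hx) 2))
      simp only [← enorm_rot]
      rw [Finset.mul_sum, Finset.mul_sum, ← Finset.sum_add_distrib]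
      refine Finset.sum_le_sum fun m _ => ?_
      refine le_trans ?_ (ennreal_add_sq_le _ _)
      gcongr
      rw [rot_add φ f f1 f2 (a m) (b m) x hsum, add_sub_assoc]
      exact enorm_add_le _ _
    calc _ ≤ ∫⁻ x in Metric.ball c r, (2 * (∑ m, ‖conv f1 (phim φ (a m) (b m)) x‖ₑ ^ 2) + 2 * (ENNReal.ofReal K * (2 * h))) :=
          setLIntegral_mono' Metric.isOpen_ball.measurableSet pt
      _ = 2 * (∫⁻ x in Metric.ball c r, ∑ m, ‖conv f1 (phim φ (a m) (b m)) x‖ₑ ^ 2) + 2 * (ENNReal.ofReal K * (2 * h)) * ENNReal.ofReal (2 * r) := by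
          rw [lintegral_add_right _ measurable_const, lintegral_const_mul' _ _ (by simp)]
          simp
      _ ≤ 2 * (ENNReal.ofReal B * (h * ENNReal.ofReal (2 * (4 * r)))) + 2 * (ENNReal.ofReal K * (2 * h)) * ENNReal.ofReal (2 * r) := by
          gcongr
          refine (setLIntegral_le_lintegral _ _).trans ((hB N a b hab f1).trans ?_)
          gcongr
      _ = _ := by
          rw [show 2 * (4 * r) = 4 * (2 * r) by ring, ENNReal.ofReal_mul (by norm_num), ENNReal.ofReal_add (by positivity) (by positivity),
            ENNReal.ofReal_mul (p := 8) (by norm_num), ENNReal.ofReal_mul (p := 4) (by norm_num)]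
          have e4 : ENNReal.ofReal 4 = 4 := by simp
          have e8 : ENNReal.ofReal 8 = 8 := by simp
          rw [e4, e8]
          ring


lemma le_MF (U : ℝ → ℝ≥0∞) (hU : Continuous U) (x : ℝ) : U x ≤ MF U x := by
  by_contra hc
  push Not at hc
  obtain ⟨s, hs1, hs2⟩ := exists_between hc
  have ho : IsOpen {y | s < U y} := isOpen_lt continuous_const hU
  obtain ⟨ε, hε, hb⟩ := Metric.isOpen_iff.mp ho x hs2
  have h1 := lintegral_ball_le_MF U (c := x) (r := ε) (x := x) hε (Metric.mem_ball_self hε)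
  have h2 : s * ENNReal.ofReal (2 * ε) ≤ ∫⁻ y in Metric.ball x ε, U y := by
    calc _ = ∫⁻ y in Metric.ball x ε, s := by simp
      _ ≤ _ := setLIntegral_mono' Metric.isOpen_ball.measurableSet fun y hy => (hb hy).le
  have h3 := h2.trans h1
  rw [ENNReal.mul_le_mul_iff_left (by simpa using hε) ENNReal.ofReal_ne_top] at h3
  exact absurd hs1 (not_lt.mpr h3)

lemma main_bound (φ : 𝓢(ℝ, ℂ)) (hφ : Function.support (𝓕 ⇑φ) ⊆ Set.Ioo 0 1) (q : ℝ) (hq : 1 ≤ q) :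
    ∃ C : ℝ, 0 < C ∧ ∀ (N : ℕ) (a b : Fin N → ℝ), Admissible a b → ∀ f : 𝓢(ℝ, ℂ),
      ∫⁻ x, (∑ m, ‖conv f (phim φ (a m) (b m)) x‖ₑ ^ 2) ^ q ≤ ENNReal.ofReal C * ∫⁻ x, (‖f x‖ₑ ^ 2) ^ q := by
  obtain ⟨B, hB0, hB⟩ := L2_bound φ hφ
  rcases hq.eq_or_lt with h1 | h1
  · refine ⟨B, hB0, ?_⟩
    intro N a b hab f
    rw [← h1]
    simpa using hB N a b hab f
  obtain ⟨A, hA0, hA⟩ := osc φ hφ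
  have hq1 : 0 < q - 1 := by linarith
  refine ⟨(2*16^q*(26*A*16^q)^q) * (10*(q/(q-1))*2^(q-1)), by positivity, fun N a b hab f => ?_⟩
  set U : ℝ → ℝ≥0∞ := fun x => ∑ m, ‖conv f (phim φ (a m) (b m)) x‖ₑ ^ 2 with hUdef
  choose Φ hΦ hΦ' using fun m => phim_schwartz φ (a m) (b m) (hab.1 m)
  choose G hG hG' using fun m => conv_schwartz f (Φ m)
  have e : ∀ m, phim φ (a m) (b m) = Φ m := fun m => by ext x; rw [hΦ]
  have e2 : ∀ m, conv f (phim φ (a m) (b m)) = G m := fun m => by ext x; rw [e, hG]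
  have hUG : U = fun x => ∑ m, ‖G m x‖ₑ ^ 2 := by
    ext x; simp only [hUdef, e2]
  have hUc : Continuous U := by
    rw [hUG]
    refine continuous_finsetSum _ fun m _ => ?_
    exact (ENNReal.continuous_pow 2).comp (G m).continuous.enorm
  have mf : Measurable (fun x => ‖f x‖ₑ ^ 2) := f.continuous.measurable.enorm.pow_const 2
  have hfin2 : ∫⁻ x, ‖f x‖ₑ ^ 2 ≠ ⊤ := by
    have := ((f.memLp 2).integrable_norm_pow (by norm_num) : Integrable (fun x => ‖f x‖ ^ 2) volume).lintegral_lt_top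
    refine ne_of_lt (lt_of_le_of_lt (le_of_eq ?_) this)
    congr 1; ext x
    rw [ENNReal.ofReal_pow (norm_nonneg _), ofReal_norm]
  have hUint : ∫⁻ x, U x ≠ ⊤ :=
    ne_of_lt ((hB N a b hab f).trans_lt (ENNReal.mul_lt_top ENNReal.ofReal_lt_top hfin2.lt_top))
  choose M hM0 hM using fun m => schwartz_bdd (G m)
  set MM : ℝ≥0∞ := ∑ m, ENNReal.ofReal (M m) ^ 2 with hMM
  have hMMtop : MM ≠ ⊤ := by
    rw [hMM]
    refine ENNReal.sum_ne_top.mpr fun m _ => ?_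
    exact ENNReal.pow_ne_top ENNReal.ofReal_ne_top
  have hUM : ∀ x, U x ≤ MM := by
    intro x
    rw [hUG]
    refine Finset.sum_le_sum fun m _ => ?_
    gcongr
    rw [← ofReal_norm]
    exact ENNReal.ofReal_le_ofReal (hM m x)
  have hUq : ∫⁻ x, U x ^ q ≠ ⊤ := by
    have : ∫⁻ x, U x ^ q ≤ MM ^ (q - 1) * ∫⁻ x, U x := by
      rw [← lintegral_const_mul' _ _ (ENNReal.rpow_ne_top_of_nonneg hq1.le hMMtop)]
      refine lintegral_mono fun x => ?_
      calc U x ^ q = U x ^ (q - 1) * U x ^ (1:ℝ) := by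
            rw [← ENNReal.rpow_add_of_nonneg _ _ hq1.le zero_le_one]; congr 1; ring
        _ ≤ _ := by
            rw [ENNReal.rpow_one]
            gcongr
            exact hUM x
    exact ne_of_lt (this.trans_lt (ENNReal.mul_lt_top (ENNReal.rpow_lt_top_of_nonneg hq1.le hMMtop) hUint.lt_top))
  have fs := FS A q hA0 h1 U (MF fun x => ‖f x‖ₑ ^ 2) hUc.measurable (measurable_MF _) hUint hUq (hA N a b hab f)
  have sm := strong_MF q h1 (fun x => ‖f x‖ₑ ^ 2) mf
  calc ∫⁻ x, U x ^ q ≤ ∫⁻ x, MF U x ^ q := by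
        refine lintegral_mono fun x => ?_
        exact ENNReal.rpow_le_rpow (le_MF U hUc x) (by linarith)
    _ ≤ _ := fs
    _ ≤ _ := mul_le_mul_right sm _
    _ = _ := by rw [← mul_assoc, ← ENNReal.ofReal_mul (by positivity)]

theorem statement9 (φ : SchwartzMap ℝ ℂ)
    (hφ : Function.support (𝓕 ⇑φ) ⊆ Set.Ioo 0 1)
    (p : ℝ) (hp : 2 ≤ p) (k : ℕ) :
    ∃ C : ℝ, 0 < C ∧ ∀ (N : ℕ) (a b : Fin N → ℝ), Admissible a b →
      ∀ f : SchwartzMap ℝ ℂ,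
        (∫⁻ x : ℝ, ((∑ m : Fin N,
            (‖iteratedDeriv k (conv ⇑f (phim ⇑φ (a m) (b m))) x‖₊ : ℝ≥0∞) ^ 2)
              ^ (1/2 : ℝ)) ^ p) ^ (1/p)
        ≤ ENNReal.ofReal C *
          (∫⁻ x : ℝ, (‖iteratedDeriv k ⇑f x‖₊ : ℝ≥0∞) ^ p) ^ (1/p) := by
  obtain ⟨C, hC0, hC⟩ := main_bound φ hφ (p / 2) (by linarith)
  have hp0 : 0 < p := by linarith
  refine ⟨C ^ (1 / p), by positivity, fun N a b hab f => ?_⟩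
  obtain ⟨g, hg, hg'⟩ := iteratedDeriv_conv k f
  have h := hC N a b hab g
  have e : ∀ m x, iteratedDeriv k (conv ⇑f (phim ⇑φ (a m) (b m))) x = conv g (phim φ (a m) (b m)) x := by
    intro m x
    obtain ⟨Φ, h1, -⟩ := phim_schwartz φ (a m) (b m) (hab.1 m)
    have e1 : phim φ (a m) (b m) = Φ := by ext x; rw [h1]
    rw [e1, hg']
  simp only [e, ← hg, ← enorm_eq_nnnorm]
  have e3 : ∀ y : ℝ≥0∞, (y ^ (1/2 : ℝ)) ^ p = y ^ (p / 2) := by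
    intro y; rw [← ENNReal.rpow_mul]; congr 1; ring
  have e4 : ∀ y : ℝ≥0∞, (y ^ 2) ^ (p / 2) = y ^ p := by
    intro y; rw [← ENNReal.rpow_natCast, ← ENNReal.rpow_mul]; congr 1; push_cast; ring
  simp only [e4] at h
  simp only [e3]
  calc _ ≤ (ENNReal.ofReal C * ∫⁻ x, ‖g x‖ₑ ^ p) ^ (1 / p) := ENNReal.rpow_le_rpow h (by positivity)
    _ = _ := by
      rw [ENNReal.mul_rpow_of_nonneg _ _ (by positivity), ENNReal.ofReal_rpow_of_pos hC0]
end

section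
/- Let 2 ≤ p < ∞, 0 < q ≤ ∞, and s > 0. There exists C > 0, depending only on φ, Φ, p, q, s, such that for every admissible finite collection 𝓘 = {[a_m,b_m]}_{m=1}^N and every Schwartz function f, setting g_m(x) = e^{−2πi a_m x}(f∗φ_m)(x), one has ( Σ_{j∈ℤ} ( 2^{js} ‖ ( Σ_{m=1}^N |(g_m∗ψ_j)(x)|² )^{1/2} ‖_{L^p(dx)} )^q )^{1/q} ≤ C ( Σ_{j∈ℤ} ( 2^{js} ‖ f∗ψ_j ‖_{L^p} )^q )^{1/q} (suprema over j when q = ∞). This is the uniform boundedness of the rotated family on the homogeneous Besov space Ḃ^s_{pq}. -/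
open MeasureTheory Real Set Function
open scoped FourierTransform ENNReal NNReal

/-- Littlewood–Paley block `ψ_j`, whose Fourier transform is `ξ ↦ 𝓕Φ(2^{-j}ξ) - 𝓕Φ(2^{-j+1}ξ)`. -/
noncomputable def psi (Φ : ℝ → ℂ) (j : ℤ) (x : ℝ) : ℂ :=
  (((2:ℝ) ^ j : ℝ) : ℂ) * Φ ((2:ℝ) ^ j * x) - (((2:ℝ) ^ (j-1) : ℝ) : ℂ) * Φ ((2:ℝ) ^ (j-1) * x)

/-- The `ℓ^q` (quasi)norm of a sequence indexed by `ℤ`, with values in `[0,∞]`;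
for `q = ∞` it is the supremum. -/
noncomputable def lqNorm (q : ℝ≥0∞) (F : ℤ → ℝ≥0∞) : ℝ≥0∞ :=
  if q = ∞ then ⨆ j, F j else (∑' j, F j ^ q.toReal) ^ (1 / q.toReal)

section Helpers

open scoped SchwartzMap ContDiff

open MeasureTheory Real Set Function
open scoped FourierTransform ENNReal NNReal

lemma geo_int (ε : ℝ) (hε : 0 < ε) :
    ∑' k : ℤ, (2:ℝ≥0∞) ^ (-(ε * |(k:ℝ)|)) ≠ ⊤ := by
  have hr : (2:ℝ≥0∞) ^ (-ε) < 1 := by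
    rw [ENNReal.rpow_neg, ENNReal.inv_lt_one]
    exact ENNReal.one_lt_rpow (by norm_num) hε
  have hgeo : ∑' n : ℕ, ((2:ℝ≥0∞) ^ (-ε)) ^ n ≠ ⊤ := by
    rw [ENNReal.tsum_geometric]
    simp only [ne_eq, ENNReal.inv_eq_top]
    exact (tsub_pos_of_lt hr).ne'
  have h1 : ∀ n : ℕ, (2:ℝ≥0∞) ^ (-(ε * |((n:ℤ):ℝ)|)) = ((2:ℝ≥0∞) ^ (-ε)) ^ n := by
    intro n
    rw [← ENNReal.rpow_natCast, ← ENNReal.rpow_mul]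
    congr 1
    simp
  have h2 : ∀ n : ℕ, (2:ℝ≥0∞) ^ (-(ε * |((-((n:ℤ)+1) : ℤ):ℝ)|)) ≤ ((2:ℝ≥0∞) ^ (-ε)) ^ n := by
    intro n
    rw [← ENNReal.rpow_natCast, ← ENNReal.rpow_mul]
    apply ENNReal.rpow_le_rpow_of_exponent_le (by norm_num)
    push_cast
    rw [abs_neg, abs_of_nonneg (by positivity)]
    nlinarith
  have := (HasSum.of_nat_of_neg_add_one (f := fun k : ℤ => (2:ℝ≥0∞) ^ (-(ε * |(k:ℝ)|)))
    ENNReal.summable.hasSum ENNReal.summable.hasSum).tsum_eq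
  rw [this]
  refine ENNReal.add_ne_top.2 ⟨?_, ?_⟩
  · simp_rw [h1]; exact hgeo
  · exact ne_top_of_le_ne_top hgeo (ENNReal.tsum_le_tsum h2)

lemma geo_shift (ε : ℝ) (j : ℤ) :
    ∑' k : ℤ, (2:ℝ≥0∞) ^ (-(ε * |(j:ℝ) - k|)) = ∑' k : ℤ, (2:ℝ≥0∞) ^ (-(ε * |(k:ℝ)|)) := by
  rw [← (Equiv.subLeft j).tsum_eq]
  simp

lemma geo_shift' (ε : ℝ) (j : ℤ) :
    ∑' k : ℤ, (2:ℝ≥0∞) ^ (-(ε * |(k:ℝ) - j|)) = ∑' k : ℤ, (2:ℝ≥0∞) ^ (-(ε * |(k:ℝ)|)) := by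
  rw [← geo_shift ε j]
  simp_rw [abs_sub_comm]

lemma two_rpow_ne_zero (t : ℝ) : (2:ℝ≥0∞) ^ t ≠ 0 :=
  (ENNReal.rpow_pos (by norm_num) (by norm_num)).ne'
lemma two_rpow_ne_top (t : ℝ) : (2:ℝ≥0∞) ^ t ≠ ⊤ :=
  ENNReal.rpow_ne_top_of_ne_zero (by norm_num) (by norm_num)
lemma two_rpow_add (s t : ℝ) : (2:ℝ≥0∞) ^ (s + t) = 2 ^ s * 2 ^ t :=
  ENNReal.rpow_add _ _ (by norm_num) (by norm_num)

/-- `(∑ b_k)^p ≤ C ∑ 2^{ε|j-k|} b_k^p`. -/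
lemma powSum (p ε : ℝ) (hp : 0 < p) (hε : 0 < ε) : ∃ C : ℝ≥0∞, C ≠ ⊤ ∧ ∀ (j : ℤ) (b : ℤ → ℝ≥0∞),
    (∑' k, b k) ^ p ≤ C * ∑' k : ℤ, (2:ℝ≥0∞) ^ (ε * |(j:ℝ) - k|) * b k ^ p := by
  refine ⟨(∑' k : ℤ, (2:ℝ≥0∞) ^ (-(ε / p * |(k:ℝ)|))) ^ p, ?_, ?_⟩
  · exact ENNReal.rpow_ne_top_of_nonneg hp.le (geo_int _ (by positivity))
  · intro j b
    set S := ⨆ k : ℤ, (2:ℝ≥0∞) ^ (ε / p * |(j:ℝ) - k|) * b k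
    have h1 : ∑' k, b k ≤ (∑' k : ℤ, (2:ℝ≥0∞) ^ (-(ε / p * |(k:ℝ)|))) * S := by
      rw [← geo_shift _ j, ← ENNReal.tsum_mul_right]
      apply ENNReal.tsum_le_tsum
      intro k
      calc b k = (2:ℝ≥0∞) ^ (-(ε / p * |(j:ℝ) - k|)) * ((2:ℝ≥0∞) ^ (ε / p * |(j:ℝ) - k|) * b k) := by
            rw [← mul_assoc, ← two_rpow_add]; simp
        _ ≤ _ := by gcongr; exact le_iSup (fun k : ℤ => (2:ℝ≥0∞) ^ (ε / p * |(j:ℝ) - k|) * b k) k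
    calc (∑' k, b k) ^ p ≤ ((∑' k : ℤ, (2:ℝ≥0∞) ^ (-(ε / p * |(k:ℝ)|))) * S) ^ p := by gcongr
      _ = (∑' k : ℤ, (2:ℝ≥0∞) ^ (-(ε / p * |(k:ℝ)|))) ^ p * S ^ p := ENNReal.mul_rpow_of_nonneg _ _ hp.le
      _ ≤ _ := by
        gcongr
        rw [← ENNReal.le_rpow_inv_iff hp]
        apply iSup_le
        intro k
        rw [ENNReal.le_rpow_inv_iff hp]
        refine le_trans (le_of_eq ?_) (ENNReal.le_tsum k)
        rw [ENNReal.mul_rpow_of_nonneg _ _ hp.le, ← ENNReal.rpow_mul]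
        congr 2
        field_simp

/-- discrete convolution with a geometrically decaying kernel is bounded on `ℓ^q`. -/
lemma lq_bound (q : ℝ≥0∞) (hq : 0 < q) (δ : ℝ) (hδ : 0 < δ) : ∃ C : ℝ≥0∞, C ≠ ⊤ ∧
    ∀ (D : ℝ≥0∞) (G A : ℤ → ℝ≥0∞),
      (∀ j, G j ≤ D * ∑' k : ℤ, (2:ℝ≥0∞) ^ (-(δ * |(j:ℝ) - k|)) * A k) →
      lqNorm q G ≤ C * D * lqNorm q A := by
  by_cases hqt : q = ⊤
  · refine ⟨_, geo_int δ hδ, ?_⟩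
    intro D G A h
    simp only [lqNorm, hqt, if_true]
    apply iSup_le
    intro j
    refine (h j).trans ?_
    rw [← geo_shift δ j, mul_comm (∑' _, _) D, mul_assoc, ← ENNReal.tsum_mul_right]
    gcongr with k
    exact le_iSup A k
  · have hq0 : 0 < q.toReal := ENNReal.toReal_pos hq.ne' hqt
    set r := q.toReal
    obtain ⟨C, hC, hpow⟩ := powSum r (δ / 2 * r) hq0 (by positivity)
    refine ⟨(C * ∑' k : ℤ, (2:ℝ≥0∞) ^ (-(δ / 2 * r * |(k:ℝ)|))) ^ (1 / r), ?_, ?_⟩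
    · exact ENNReal.rpow_ne_top_of_nonneg (by positivity) (ENNReal.mul_ne_top hC (geo_int _ (by positivity)))
    intro D G A h
    simp only [lqNorm, hqt, if_false]
    have key : ∑' j, G j ^ r ≤ D ^ r * ((C * ∑' k : ℤ, (2:ℝ≥0∞) ^ (-(δ / 2 * r * |(k:ℝ)|))) * ∑' k, A k ^ r) := by
      calc ∑' j, G j ^ r ≤ ∑' j : ℤ, D ^ r * (C * ∑' k : ℤ, (2:ℝ≥0∞) ^ (-(δ / 2 * r * |(j:ℝ) - k|)) * A k ^ r) := by
            apply ENNReal.tsum_le_tsum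
            intro j
            calc G j ^ r ≤ (D * ∑' k : ℤ, (2:ℝ≥0∞) ^ (-(δ * |(j:ℝ) - k|)) * A k) ^ r := by
                  gcongr; exact h j
              _ = D ^ r * (∑' k : ℤ, (2:ℝ≥0∞) ^ (-(δ * |(j:ℝ) - k|)) * A k) ^ r :=
                  ENNReal.mul_rpow_of_nonneg _ _ hq0.le
              _ ≤ _ := by
                  gcongr
                  refine (hpow j _).trans (le_of_eq ?_)
                  congr 1
                  apply tsum_congr
                  intro k
                  rw [ENNReal.mul_rpow_of_nonneg _ _ hq0.le, ← ENNReal.rpow_mul, ← mul_assoc, ← two_rpow_add]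
                  congr 2
                  ring
        _ = _ := by
            rw [ENNReal.tsum_mul_left, ENNReal.tsum_mul_left, ENNReal.tsum_comm, mul_assoc]
            congr 2
            rw [← ENNReal.tsum_mul_left]
            apply tsum_congr
            intro k
            rw [ENNReal.tsum_mul_right, geo_shift']
    calc (∑' j, G j ^ r) ^ (1/r) ≤ _ := ENNReal.rpow_le_rpow key (by positivity)
      _ = _ := by
        rw [ENNReal.mul_rpow_of_nonneg _ _ (by positivity), ENNReal.mul_rpow_of_nonneg _ _ (by positivity),
          ← ENNReal.rpow_mul, mul_one_div_cancel hq0.ne', ENNReal.rpow_one]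
        ring

open MeasureTheory Real Set Function
open scoped FourierTransform ENNReal NNReal

/-- Young inequality with a nonnegative kernel. -/
lemma young_pos (F w : ℝ → ℝ≥0∞) (hF : Measurable F) (hw : Measurable w) (r : ℝ) (hr : 1 ≤ r) :
    ∫⁻ x, (∫⁻ y, F (x - y) * w y) ^ r ≤ (∫⁻ y, w y) ^ r * ∫⁻ x, F x ^ r := by
  have hr0 : 0 < r := by linarith
  have hinv : r⁻¹ ≤ 1 := inv_le_one_of_one_le₀ hr
  have h1 : ∀ x, (∫⁻ y, F (x - y) * w y) ^ r ≤
      (∫⁻ y, F (x - y) ^ r * w y) * (∫⁻ y, w y) ^ (r - 1) := by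
    intro x
    have := ENNReal.lintegral_mul_norm_pow_le (μ := volume) (f := fun y => F (x - y) ^ r * w y)
      (g := w) (p := r⁻¹) (q := 1 - r⁻¹) (by fun_prop) hw.aemeasurable (by positivity) (by linarith) (by ring)
    have h2 : ∀ y, F (x - y) * w y = (F (x - y) ^ r * w y) ^ r⁻¹ * (w y) ^ (1 - r⁻¹) := by
      intro y
      rw [ENNReal.mul_rpow_of_nonneg _ _ (by positivity), ← ENNReal.rpow_mul, mul_inv_cancel₀ hr0.ne',
        ENNReal.rpow_one, mul_assoc, ← ENNReal.rpow_add_of_nonneg _ _ (by positivity) (by linarith)]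
      simp
    simp_rw [← h2] at this
    refine (ENNReal.rpow_le_rpow this hr0.le).trans (le_of_eq ?_)
    rw [ENNReal.mul_rpow_of_nonneg _ _ hr0.le, ← ENNReal.rpow_mul, ← ENNReal.rpow_mul,
      inv_mul_cancel₀ hr0.ne', ENNReal.rpow_one]
    congr 2
    field_simp
  calc _ ≤ ∫⁻ x, (∫⁻ y, F (x - y) ^ r * w y) * (∫⁻ y, w y) ^ (r - 1) := lintegral_mono h1
    _ = (∫⁻ x, ∫⁻ y, F (x - y) ^ r * w y) * (∫⁻ y, w y) ^ (r - 1) := by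
        rw [lintegral_mul_const]
        apply Measurable.lintegral_prod_right'
          (f := fun p : ℝ × ℝ => F (p.1 - p.2) ^ r * w p.2)
        fun_prop
    _ = (∫⁻ y, ∫⁻ x, F (x - y) ^ r * w y) * (∫⁻ y, w y) ^ (r - 1) := by
        rw [lintegral_lintegral_swap]
        apply Measurable.aemeasurable
        fun_prop
    _ = ((∫⁻ y, w y) * ∫⁻ x, F x ^ r) * (∫⁻ y, w y) ^ (r - 1) := by
        congr 1
        rw [← lintegral_mul_const _ hw]
        congr 1 with y
        rw [lintegral_mul_const _ (by fun_prop), lintegral_sub_right_eq_self (fun x => F x ^ r), mul_comm]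
    _ = (∫⁻ y, w y) ^ (1:ℝ) * (∫⁻ y, w y) ^ (r - 1) * ∫⁻ x, F x ^ r := by
        rw [ENNReal.rpow_one]; ring
    _ = _ := by
        rw [← ENNReal.rpow_add_of_nonneg _ _ (by norm_num) (by linarith)]
        congr 2
        ring

lemma bessel_hilbert {E : Type*} [NormedAddCommGroup E] [InnerProductSpace ℂ E] {N : ℕ}
    (U : Fin N → E) (B : ℝ) (hB0 : 0 ≤ B) (hU : ∀ m m', m ≠ m' → inner ℂ (U m) (U m') = 0)
    (hB : ∀ m, ‖U m‖ ^ 2 ≤ B) (x : E) :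
    ∑ m, ‖inner ℂ (U m) x‖ ^ 2 ≤ B * ‖x‖ ^ 2 := by
  set c : Fin N → ℂ := fun m => inner ℂ (U m) x with hc
  set S := ∑ m, ‖c m‖ ^ 2 with hS
  set y := ∑ m, c m • U m with hy
  have hS0 : 0 ≤ S := by positivity
  have h1 : inner ℂ y x = (S : ℂ) := by
    rw [hy, sum_inner, hS]
    push_cast
    apply Finset.sum_congr rfl
    intro m _
    rw [inner_smul_left]
    exact Complex.conj_mul' (c m)
  have h2 : ‖y‖ ^ 2 ≤ B * S := by
    have : ((‖y‖ ^ 2 : ℝ) : ℂ) = ((∑ m, ‖c m‖ ^ 2 * ‖U m‖ ^ 2 : ℝ) : ℂ) := by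
      have e1 : ((‖y‖ ^ 2 : ℝ) : ℂ) = inner ℂ y y := by
        rw [inner_self_eq_norm_sq_to_K]; norm_num
      rw [e1, hy, sum_inner]
      push_cast
      apply Finset.sum_congr rfl
      intro m _
      rw [inner_sum, Finset.sum_eq_single m]
      · rw [inner_smul_left, inner_smul_right, ← mul_assoc, Complex.conj_mul', inner_self_eq_norm_sq_to_K]
        norm_num
      · intro m' _ hm
        rw [inner_smul_left, inner_smul_right, hU m m' hm.symm]; simp
      · simp
    have := Complex.ofReal_injective this
    rw [this, hS, Finset.mul_sum]
    apply Finset.sum_le_sum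
    intro m _
    have := hB m
    nlinarith [sq_nonneg ‖c m‖]
  have h3 : S ≤ ‖y‖ * ‖x‖ := by
    have := norm_inner_le_norm (𝕜 := ℂ) y x
    rw [h1] at this
    simpa [abs_of_nonneg hS0] using this
  rcases hS0.eq_or_lt with h0 | h0
  · rw [← h0]
    positivity
  · have : S * S ≤ (B * ‖x‖ ^ 2) * S := by
      calc S * S ≤ (‖y‖ * ‖x‖) * (‖y‖ * ‖x‖) := mul_self_le_mul_self hS0 h3
        _ = ‖y‖ ^ 2 * ‖x‖ ^ 2 := by ring
        _ ≤ (B * S) * ‖x‖ ^ 2 := by gcongr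
        _ = _ := by ring
    exact le_of_mul_le_mul_right this h0

lemma bessel_schwartz {N : ℕ} (v : Fin N → 𝓢(ℝ, ℂ)) (B : ℝ) (hB0 : 0 ≤ B)
    (hv : ∀ m m', m ≠ m' → ∀ ξ, v m ξ = 0 ∨ v m' ξ = 0)
    (hB : ∀ m, ∫ ξ, ‖v m ξ‖ ^ 2 ≤ B) (H : ℝ → ℂ) (hH : MemLp H 2) :
    ∑ m, ‖∫ y, H y * (𝓕⁻ (v m)) y‖ₑ ^ 2 ≤ ENNReal.ofReal B * ∫⁻ y, ‖H y‖ₑ ^ 2 := by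
  have hcH : MemLp (fun y => (starRingEnd ℂ) (H y)) 2 := hH.star
  set U : Fin N → Lp ℂ 2 (volume : Measure ℝ) := fun m => (𝓕⁻ (v m)).toLp 2
  have hinner : ∀ m m', inner ℂ (U m) (U m') = ∫ ξ, inner ℂ (v m ξ) (v m' ξ) := by
    intro m m'
    have := SchwartzMap.inner_fourier_toL2_eq (𝓕⁻ (v m)) (𝓕⁻ (v m'))
    rw [FourierTransform.fourier_fourierInv_eq, FourierTransform.fourier_fourierInv_eq] at this
    rw [← this]
    simp
  have h := bessel_hilbert U B hB0 ?_ ?_ (hcH.toLp)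
  · have e1 : ∀ m, ‖∫ y, H y * (𝓕⁻ (v m)) y‖ = ‖inner ℂ (U m) (hcH.toLp)‖ := by
      intro m
      rw [← inner_conj_symm, RCLike.norm_conj, L2.inner_def]
      congr 1
      apply integral_congr_ae
      filter_upwards [hcH.coeFn_toLp, (𝓕⁻ (v m)).coeFn_toLp 2] with y h1 h2
      simp only [U]
      rw [h1, h2]
      simp [mul_comm]
    have e2 : ∫⁻ y, ‖H y‖ₑ ^ 2 = ENNReal.ofReal (‖hcH.toLp‖ ^ 2) := by
      rw [Lp.norm_toLp, ENNReal.ofReal_pow (by positivity), ENNReal.ofReal_toReal hcH.2.ne]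
      rw [eLpNorm_eq_lintegral_rpow_enorm_toReal (by norm_num) (by norm_num)]
      simp only [ENNReal.toReal_ofNat]
      rw [← ENNReal.rpow_natCast, ← ENNReal.rpow_mul]
      norm_num
    rw [e2, ← ENNReal.ofReal_mul hB0]
    refine le_trans (le_of_eq ?_) (ENNReal.ofReal_le_ofReal h)
    rw [ENNReal.ofReal_sum_of_nonneg (fun _ _ => by positivity)]
    apply Finset.sum_congr rfl
    intro m _
    rw [← e1, ENNReal.ofReal_pow (by positivity), ofReal_norm]
  · intro m m' hm
    rw [hinner, ← integral_zero ℝ ℂ]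
    congr 1 with ξ
    rcases hv m m' hm ξ with h | h <;> simp [h]
  · intro m
    have : ((‖U m‖ ^ 2 : ℝ) : ℂ) = ((∫ ξ, ‖v m ξ‖ ^ 2 : ℝ) : ℂ) := by
      have e1 : ((‖U m‖ ^ 2 : ℝ) : ℂ) = inner ℂ (U m) (U m) := by
        rw [inner_self_eq_norm_sq_to_K]; norm_num
      rw [e1, hinner, ← integral_complex_ofReal]
      congr 1 with ξ
      rw [inner_self_eq_norm_sq_to_K]; norm_num
    rw [Complex.ofReal_injective this]
    exact hB m

open MeasureTheory Real Set Function
open scoped FourierTransform ENNReal NNReal SchwartzMap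

lemma fourierInv_deriv (h : 𝓢(ℝ, ℂ)) (y : ℝ) :
    (𝓕⁻ (SchwartzMap.derivCLM ℂ ℂ h)) y = -(2 * π * Complex.I * y) * (𝓕⁻ h) y := by
  have := SchwartzMap.fourierInv_lineDerivOp_eq h (1:ℝ)
  have e : (LineDeriv.lineDerivOp (1:ℝ) h : 𝓢(ℝ, ℂ)) = SchwartzMap.derivCLM ℂ ℂ h := by
    ext x
    simp [SchwartzMap.lineDerivOp_apply_eq_fderiv]
  rw [e] at this
  rw [this]
  have ht : (fun x : ℝ => inner ℝ x (1:ℝ)).HasTemperateGrowth := by fun_prop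
  rw [_root_.smul_apply, SchwartzMap.smulLeftCLM_apply_apply ht]
  simp
  ring

lemma integrable_char_mul {h : ℝ → ℂ} (hh : Integrable h) (x : ℝ) :
    Integrable (fun ξ => (𝐞 (ξ * x) : ℂ) * h ξ) := by
  refine (hh.norm.mono' ?_ ?_)
  · exact (Continuous.aestronglyMeasurable (by fun_prop)).mul hh.1
  · exact Filter.Eventually.of_forall fun ξ => by rw [norm_mul, Circle.norm_coe, one_mul]

/-- `f ∗ 𝓕⁻h = 𝓕⁻(𝓕f · h)`. -/
lemma conv_fourierInv {f h : ℝ → ℂ} (hf : Integrable f) (hh : Integrable h) (x : ℝ) :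
    conv f (𝓕⁻ h) x = 𝓕⁻ (fun ξ => 𝓕 f ξ * h ξ) x := by
  have key := VectorFourier.integral_fourierIntegral_smul_eq_flip (e := 𝐞) (L := innerₗ ℝ)
    (μ := (volume : Measure ℝ)) (ν := (volume : Measure ℝ)) (f := f)
    (g := fun ξ => (𝐞 (ξ * x) : ℂ) * h ξ) Real.continuous_fourierChar continuous_inner hf
    (integrable_char_mul hh x)
  have e1 : conv f (𝓕⁻ h) x = ∫ t, f t • VectorFourier.fourierIntegral 𝐞 volume (innerₗ ℝ).flip
      (fun ξ => (𝐞 (ξ * x) : ℂ) * h ξ) t := by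
    unfold conv
    congr 1 with t
    rw [smul_eq_mul, Real.fourierInv_eq]
    congr 1
    unfold VectorFourier.fourierIntegral
    congr 1 with ξ
    simp only [Circle.smul_def, smul_eq_mul, ← mul_assoc]
    congr 1
    rw [← Circle.coe_mul, ← AddChar.map_add_eq_mul]
    congr 2
    simp
    ring
  rw [e1, ← key, Real.fourierInv_eq]
  congr 1 with ξ
  simp only [Circle.smul_def, smul_eq_mul]
  simp
  rw [mul_comm ξ x]
  change 𝓕 f ξ * _ = _
  ring

lemma conv_comm' (f g : ℝ → ℂ) (x : ℝ) : conv f g x = ∫ y, f (x - y) * g y := by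
  unfold conv
  rw [← integral_sub_left_eq_self _ volume x]
  simp

lemma bessel_conv {N : ℕ} (h : Fin N → 𝓢(ℝ, ℂ)) (l B : ℝ) (hB0 : 0 ≤ B)
    (hv : ∀ m m', m ≠ m' → ∀ ξ, (h m ξ = 0 ∧ deriv (h m) ξ = 0) ∨ (h m' ξ = 0 ∧ deriv (h m') ξ = 0))
    (hB : ∀ m, ∫ ξ, ‖h m ξ + l * deriv (h m) ξ‖ ^ 2 ≤ B) (F : 𝓢(ℝ, ℂ)) (x : ℝ) :
    ∑ m, ‖conv F (𝓕⁻ (h m : ℝ → ℂ)) x‖ₑ ^ 2 ≤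
      ENNReal.ofReal B * ∫⁻ y, ‖F (x - y)‖ₑ ^ 2 * ENNReal.ofReal ((1 + (2 * π * l * y) ^ 2)⁻¹) := by
  set d : ℝ → ℂ := fun y => 1 - 2 * π * Complex.I * l * y with hd
  have hdre : ∀ y, ‖d y‖ ^ 2 = 1 + (2 * π * l * y) ^ 2 := by
    intro y
    have : d y = ((1:ℝ):ℂ) + ((-(2 * π * l * y) : ℝ):ℂ) * Complex.I := by
      simp only [hd]; push_cast; ring
    rw [this, ← Complex.normSq_eq_norm_sq, Complex.normSq_add_mul_I]
    ring
  have hd0 : ∀ y, d y ≠ 0 := by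
    intro y h0
    have := hdre y
    rw [h0] at this
    simp at this
    nlinarith [sq_nonneg (2 * π * l * y)]
  have hdc : Continuous d := by fun_prop
  have hHm : MemLp (fun y => F (x - y) * (d y)⁻¹) 2 := by
    have hF : MemLp (fun y => F (x - y)) 2 := 
      (F.memLp 2).comp_measurePreserving (Measure.measurePreserving_sub_left volume x)
    refine hF.mono ?_ ?_
    · exact (Continuous.mul (by fun_prop) (hdc.inv₀ hd0)).aestronglyMeasurable
    · refine Filter.Eventually.of_forall fun y => ?_
      rw [norm_mul, norm_inv]
      have : 1 ≤ ‖d y‖ := by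
        have := hdre y
        nlinarith [sq_nonneg (2 * π * l * y), norm_nonneg (d y)]
      exact mul_le_of_le_one_right (norm_nonneg _) (inv_le_one_of_one_le₀ this)
  have := bessel_schwartz (fun m => h m + (l:ℂ) • SchwartzMap.derivCLM ℂ ℂ (h m)) B hB0 ?_ ?_
    (fun y => F (x - y) * (d y)⁻¹) hHm
  · refine le_trans (le_of_eq ?_) (this.trans (le_of_eq ?_))
    · apply Finset.sum_congr rfl
      intro m _
      congr 2
      rw [conv_comm']
      congr 1 with y
      rw [FourierTransform.fourierInv_add, FourierTransform.fourierInv_smul, _root_.add_apply,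
        _root_.smul_apply, fourierInv_deriv, ← SchwartzMap.fourierInv_coe]
      have e : (𝓕⁻ (h m)) y + (l:ℂ) • (-(2 * π * Complex.I * y) * (𝓕⁻ (h m)) y) = d y * (𝓕⁻ (h m)) y := by
        simp only [hd, smul_eq_mul]; ring
      rw [e, mul_assoc, inv_mul_cancel_left₀ (hd0 y)]
    · congr 1
      congr 1 with y
      rw [enorm_mul, mul_pow]
      congr 1
      rw [← hdre, ← ofReal_norm, norm_inv, ← ENNReal.ofReal_pow (by positivity), inv_pow]
  · intro m m' hm ξ
    rcases hv m m' hm ξ with h | h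
    · left; simp [h.1, h.2]
    · right; simp [h.1, h.2]
  · intro m
    simpa using hB m

open MeasureTheory Real Set Function
open scoped FourierTransform ENNReal NNReal SchwartzMap ContDiff

lemma bounded_of_supp {g : ℝ → ℂ} (hg : Continuous g) {c d : ℝ} (h : ∀ t, t ∉ Icc c d → g t = 0) :
    ∃ C, 0 ≤ C ∧ ∀ t, ‖g t‖ ≤ C := by
  obtain ⟨C, hC⟩ := (isCompact_Icc (a := c) (b := d)).exists_bound_of_continuousOn hg.continuousOn
  refine ⟨max C 0, le_max_right _ _, fun t => ?_⟩
  by_cases ht : t ∈ Icc c d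
  · exact (hC t ht).trans (le_max_left _ _)
  · rw [h t ht]; simp

lemma deriv_zero_of_supp {g : ℝ → ℂ} {c d : ℝ} (h : ∀ t, t ∉ Icc c d → g t = 0) :
    ∀ t, t ∉ Icc c d → deriv g t = 0 := by
  intro t ht
  have : g =ᶠ[nhds t] fun _ => (0:ℂ) := by
    filter_upwards [isClosed_Icc.isOpen_compl.mem_nhds ht] with s hs
    exact h s hs
  rw [this.deriv_eq]; simp

lemma vanish (M : ℕ) : ∀ (g : ℝ → ℂ), ContDiff ℝ ∞ g → (∀ t, t ∉ Icc (0:ℝ) 1 → g t = 0) →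
    ∃ C, 0 ≤ C ∧ ∀ t, ‖g t‖ ≤ C * |1 - t| ^ M := by
  induction M with
  | zero =>
    intro g hg h0
    obtain ⟨C, h1, h2⟩ := bounded_of_supp hg.continuous h0
    exact ⟨C, h1, by simpa using h2⟩
  | succ M ih =>
    intro g hg h0
    obtain ⟨C, hC, hb⟩ := ih (deriv g) (by
      have := (contDiff_infty_iff_deriv (𝕜 := ℝ) (f := g)).1 hg
      exact this.2) (deriv_zero_of_supp h0)
    have hg1 : g 1 = 0 := by
      have h1 : Filter.Tendsto g (nhdsWithin 1 (Ioi 1)) (nhds (g 1)) :=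
        hg.continuous.continuousAt.mono_left nhdsWithin_le_nhds
      have h2 : Filter.Tendsto g (nhdsWithin 1 (Ioi 1)) (nhds 0) := by
        refine Filter.Tendsto.congr' ?_ tendsto_const_nhds
        filter_upwards [self_mem_nhdsWithin] with s hs
        exact (h0 s (fun h => absurd h.2 (not_le.2 hs))).symm
      exact tendsto_nhds_unique h1 h2
    refine ⟨C, hC, fun t => ?_⟩
    by_cases ht : t ∈ Icc (0:ℝ) 1
    · have := Convex.norm_image_sub_le_of_norm_deriv_le (𝕜 := ℝ) (f := g) (s := Icc t 1) (x := t) (y := 1)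
        (C := C * |1 - t| ^ M) (fun x _ => hg.differentiable (by simp) x) ?_ (convex_Icc t 1)
        (left_mem_Icc.2 ht.2) (right_mem_Icc.2 ht.2)
      · rw [hg1, zero_sub, norm_neg, Real.norm_eq_abs] at this
        rw [pow_succ, ← mul_assoc]; exact this
      · intro x hx
        refine (hb x).trans ?_
        have : |1 - x| ≤ |1 - t| := by
          rw [abs_of_nonneg (by linarith [hx.2]), abs_of_nonneg (by linarith [ht.2])]
          linarith [hx.1]
        exact mul_le_mul_of_nonneg_left (pow_le_pow_left₀ (abs_nonneg _) this M) hC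
    · rw [h0 t ht]; simp; positivity

/-- the multiplier -/
noncomputable def hmul (g P : ℝ → ℂ) (a b X Y : ℝ) (ξ : ℝ) : ℂ :=
  g ((ξ - a) / (b - a)) * (P ((ξ - a) / X) - P ((ξ - a) / (X / 2))) * P (ξ / (2 * Y))

lemma hmul_contDiff {g P : ℝ → ℂ} (hg : ContDiff ℝ ∞ g) (hP : ContDiff ℝ ∞ P) (a b X Y : ℝ) :
    ContDiff ℝ ∞ (hmul g P a b X Y) := by
  unfold hmul
  simp only [div_eq_mul_inv]
  fun_prop

lemma comp_affine_deriv {g : ℝ → ℂ} (hg : Differentiable ℝ g) (a l ξ : ℝ) :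
    HasDerivAt (fun ξ => g ((ξ - a) / l)) ((l⁻¹ : ℝ) * deriv g ((ξ - a) / l)) ξ := by
  have h1 : HasDerivAt (fun ξ : ℝ => (ξ - a) / l) l⁻¹ ξ := by
    have := ((hasDerivAt_id ξ).sub_const a).div_const l
    simpa using this
  have := (hg ((ξ - a) / l)).hasDerivAt.scomp ξ h1
  simpa [Function.comp_def] using this

lemma hmul_deriv {g P : ℝ → ℂ} (hg : Differentiable ℝ g) (hP : Differentiable ℝ P) (a b X Y ξ : ℝ) :
    deriv (hmul g P a b X Y) ξ =
      ((b - a)⁻¹ : ℝ) * deriv g ((ξ - a) / (b - a)) * (P ((ξ - a) / X) - P ((ξ - a) / (X / 2))) * P (ξ / (2 * Y))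
      + g ((ξ - a) / (b - a)) * ((X⁻¹ : ℝ) * deriv P ((ξ - a) / X) - ((X/2)⁻¹ : ℝ) * deriv P ((ξ - a) / (X / 2)))
        * P (ξ / (2 * Y))
      + g ((ξ - a) / (b - a)) * (P ((ξ - a) / X) - P ((ξ - a) / (X / 2))) * (((2 * Y)⁻¹ : ℝ) * deriv P (ξ / (2 * Y))) := by
  have h1 := comp_affine_deriv hg a (b - a) ξ
  have h2 := comp_affine_deriv hP a X ξ
  have h3 := comp_affine_deriv hP a (X / 2) ξ
  have h4 := comp_affine_deriv hP 0 (2 * Y) ξ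
  simp only [sub_zero] at h4
  have := ((h1.fun_mul (h2.fun_sub h3)).fun_mul h4).deriv
  unfold hmul
  rw [this]
  ring

lemma hmul_zero {g P : ℝ → ℂ} (hg : Differentiable ℝ g) (hP : Differentiable ℝ P)
    (hg0 : ∀ t, t ∉ Icc (0:ℝ) 1 → g t = 0) (hP0 : ∀ t, t ∉ Icc (-2:ℝ) 2 → P t = 0)
    (hP1 : ∀ t ∈ Icc (-1:ℝ) 1, P t = 1)
    {a b X Y : ℝ} (hab : a < b) (hX : 0 < X) (hY : 0 < Y) {ξ : ℝ}
    (h : ¬ (ξ ∈ Icc a b ∧ |ξ| ≤ 4 * Y ∧ |ξ - a| ≤ 2 * X ∧ X / 2 ≤ |ξ - a|)) :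
    hmul g P a b X Y ξ = 0 ∧ deriv (hmul g P a b X Y) ξ = 0 := by
  have hg0' := deriv_zero_of_supp hg0
  have hP0' := deriv_zero_of_supp hP0
  have hP1' : ∀ t, |t| < 1 → deriv P t = 0 := by
    intro t ht
    have : P =ᶠ[nhds t] fun _ => (1:ℂ) := by
      filter_upwards [isOpen_Ioo.mem_nhds (abs_lt.1 ht)] with s hs
      exact hP1 s (Ioo_subset_Icc_self hs)
    rw [this.deriv_eq]; simp
  have hl : 0 < b - a := by linarith
  rw [hmul_deriv hg hP]
  unfold hmul
  have aux : ∀ z c : ℝ, 0 < c → 2 * c < |z| → z / c ∉ Icc (-2:ℝ) 2 := by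
    intro z c hc hz hm
    rw [mem_Icc, ← abs_le, abs_div, abs_of_pos hc, div_le_iff₀ hc] at hm
    linarith
  by_cases h1 : ξ ∈ Icc a b
  · by_cases h2 : |ξ| ≤ 4 * Y
    · by_cases h3 : |ξ - a| ≤ 2 * X
      · have h4 : |ξ - a| < X / 2 := by
          by_contra h5
          exact h ⟨h1, h2, h3, not_lt.1 h5⟩
        have q1 : |(ξ - a) / X| < 1 := by
          rw [abs_div, abs_of_pos hX, div_lt_one hX]; linarith
        have q2 : |(ξ - a) / (X / 2)| < 1 := by
          rw [abs_div, abs_of_pos (half_pos hX), div_lt_one (half_pos hX)]; linarith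
        rw [hP1' _ q1, hP1' _ q2, hP1 _ (abs_le.1 q1.le), hP1 _ (abs_le.1 q2.le)]
        simp
      · have q1 := aux (ξ - a) X hX (not_le.1 h3)
        have q2 := aux (ξ - a) (X / 2) (half_pos hX) (by linarith [not_le.1 h3])
        rw [hP0 _ q1, hP0 _ q2, hP0' _ q1, hP0' _ q2]
        simp
    · have q := aux ξ (2 * Y) (by positivity) (by linarith [not_le.1 h2])
      rw [hP0 _ q, hP0' _ q]
      simp
  · have q : (ξ - a) / (b - a) ∉ Icc (0:ℝ) 1 := by
      intro hm
      apply h1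
      rw [mem_Icc, le_div_iff₀ hl, div_le_one hl] at hm
      constructor <;> linarith [hm.1, hm.2]
    rw [hg0 _ q, hg0' _ q]
    simp

lemma hmul_bound {g P : ℝ → ℂ} (hg : ContDiff ℝ ∞ g) (hP : ContDiff ℝ ∞ P)
    (hg0 : ∀ t, t ∉ Icc (0:ℝ) 1 → g t = 0) (hP0 : ∀ t, t ∉ Icc (-2:ℝ) 2 → P t = 0)
    (hP1 : ∀ t ∈ Icc (-1:ℝ) 1, P t = 1) (M : ℕ) :
    ∃ C, 0 ≤ C ∧ ∀ a b X Y : ℝ, a < b → (0:ℝ) ∉ Ioo a b → 0 < X → 0 < Y → ∀ ξ,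
      ‖hmul g P a b X Y ξ‖ + min X Y * ‖deriv (hmul g P a b X Y) ξ‖ ≤ C * (min X Y / X) ^ M := by
  have hgd : ContDiff ℝ ∞ (deriv g) := ((contDiff_infty_iff_deriv (𝕜 := ℝ) (f := g)).1 hg).2
  have hPd : ContDiff ℝ ∞ (deriv P) := ((contDiff_infty_iff_deriv (𝕜 := ℝ) (f := P)).1 hP).2
  have hgdiff : Differentiable ℝ g := hg.differentiable (by simp)
  have hPdiff : Differentiable ℝ P := hP.differentiable (by simp)
  have hg0' := deriv_zero_of_supp hg0
  have hP0' := deriv_zero_of_supp hP0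
  obtain ⟨B1, hB1, b1⟩ := bounded_of_supp hP.continuous hP0
  obtain ⟨B2, hB2, b2⟩ := bounded_of_supp hPd.continuous hP0'
  obtain ⟨C1, hC1, c1⟩ := bounded_of_supp hg.continuous hg0
  obtain ⟨C2, hC2, c2⟩ := bounded_of_supp hgd.continuous hg0'
  obtain ⟨C3, hC3, c3⟩ := vanish M g hg hg0
  obtain ⟨C4, hC4, c4⟩ := vanish M (deriv g) hgd hg0'
  set B := B1 + B2
  set D := C1 + C2 + C3 + C4
  have hB : 0 ≤ B := by positivity
  have hD : 0 ≤ D := by positivity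
  refine ⟨11 * D * B ^ 2 * 8 ^ M, by positivity, ?_⟩
  intro a b X Y hab h0 hX hY ξ
  set Z := min X Y with hZ
  have hZ0 : 0 < Z := lt_min hX hY
  have hZX : Z ≤ X := min_le_left _ _
  have hZY : Z ≤ Y := min_le_right _ _
  have hl : 0 < b - a := by linarith
  by_cases hξ : ξ ∈ Icc a b ∧ |ξ| ≤ 4 * Y ∧ |ξ - a| ≤ 2 * X ∧ X / 2 ≤ |ξ - a|
  swap
  · obtain ⟨e1, e2⟩ := hmul_zero hgdiff hPdiff hg0 hP0 hP1 hab hX hY hξ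
    rw [e1, e2]
    simp
    positivity
  obtain ⟨hξ1, hξ2, hξ3, hξ4⟩ := hξ
  have hax : 0 ≤ ξ - a := by linarith [hξ1.1]
  rw [abs_of_nonneg hax] at hξ3 hξ4
  have hlX : X / 2 ≤ b - a := by linarith [hξ1.2]
  set t := (ξ - a) / (b - a) with ht
  set R := 8 * (Z / X) with hR
  have hR0 : 0 ≤ R := by positivity
  have hRM : D * R ^ M = D * 8 ^ M * (Z / X) ^ M := by rw [hR, mul_pow]; ring
  have hgt : ‖g t‖ ≤ D * R ^ M ∧ ‖deriv g t‖ ≤ D * R ^ M := by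
    by_cases hR1 : 1 ≤ R
    · have : 1 ≤ R ^ M := one_le_pow₀ hR1
      constructor
      · calc ‖g t‖ ≤ C1 := c1 t
          _ ≤ D * 1 := by simp only [D]; linarith
          _ ≤ _ := by gcongr
      · calc ‖deriv g t‖ ≤ C2 := c2 t
          _ ≤ D * 1 := by simp only [D]; linarith
          _ ≤ _ := by gcongr
    · have hb : b ≤ 0 := by
        by_contra hb
        have ha : 0 ≤ a := by
          by_contra ha
          exact h0 ⟨not_le.1 ha, not_le.1 hb⟩
        apply hR1
        rw [hR, ← mul_div_assoc, le_div_iff₀ hX]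
        rw [abs_of_nonneg (by linarith)] at hξ2
        rw [hZ, mul_min_of_nonneg _ _ (by norm_num)]
        rw [one_mul]
        apply le_min <;> linarith
      have hZe : Z = Y := by
        rcases min_choice X Y with h | h
        · exfalso
          apply hR1
          rw [hR, hZ, h, div_self hX.ne']; norm_num
        · exact h
      have hR2 : |1 - t| ≤ R := by
        have e : 1 - t = (b - ξ) / (b - a) := by rw [ht]; field_simp; ring
        rw [e, abs_div, abs_of_pos hl, div_le_iff₀ hl, abs_of_nonneg (by linarith [hξ1.2]), hR, hZe]
        have h1 : b - ξ ≤ 4 * Y := by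
          rw [abs_of_nonpos (by linarith [hξ1.2])] at hξ2; linarith
        calc b - ξ ≤ 4 * Y := h1
          _ = 8 * (Y / X) * (X / 2) := by field_simp; ring
          _ ≤ _ := by gcongr
      constructor
      · calc ‖g t‖ ≤ C3 * |1 - t| ^ M := c3 t
          _ ≤ D * R ^ M := by
            gcongr
            simp only [D]; linarith
      · calc ‖deriv g t‖ ≤ C4 * |1 - t| ^ M := c4 t
          _ ≤ D * R ^ M := by
            gcongr
            simp only [D]; linarith
  set E := D * R ^ M
  have hE : 0 ≤ E := by positivity
  have p1 : ∀ s, ‖P s‖ ≤ B := fun s => (b1 s).trans (by simp only [B]; linarith)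
  have p2 : ∀ s, ‖deriv P s‖ ≤ B := fun s => (b2 s).trans (by simp only [B]; linarith)
  have p3 : ‖P ((ξ - a) / X) - P ((ξ - a) / (X / 2))‖ ≤ 2 * B :=
    (norm_sub_le _ _).trans (by linarith [p1 ((ξ - a) / X), p1 ((ξ - a) / (X / 2))])
  have nr : ∀ c : ℝ, 0 < c → ‖((c⁻¹ : ℝ) : ℂ)‖ = c⁻¹ := by
    intro c hc
    rw [Complex.norm_real, Real.norm_eq_abs, abs_of_pos (inv_pos.2 hc)]
  have p4 : ‖((X⁻¹ : ℝ) : ℂ) * deriv P ((ξ - a) / X) - ((X/2)⁻¹ : ℝ) * deriv P ((ξ - a) / (X / 2))‖ ≤ 3 * B / X := by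
    refine (norm_sub_le _ _).trans ?_
    rw [norm_mul, norm_mul, nr _ hX, nr _ (half_pos hX)]
    have e : 3 * B / X = X⁻¹ * B + (X/2)⁻¹ * B := by field_simp; ring
    rw [e]
    gcongr <;> apply p2
  have hder : ‖deriv (hmul g P a b X Y) ξ‖ ≤ (b-a)⁻¹ * E * (2 * B) * B + E * (3 * B / X) * B
      + E * (2 * B) * ((2 * Y)⁻¹ * B) := by
    rw [hmul_deriv hgdiff hPdiff]
    refine (norm_add₃_le).trans ?_
    simp only [norm_mul]
    rw [nr _ hl, nr _ (by positivity : 0 < 2 * Y)]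
    gcongr
    · exact hgt.2
    · exact p1 _
    · exact hgt.1
    · exact p1 _
    · exact hgt.1
    · exact p2 _
  have hval : ‖hmul g P a b X Y ξ‖ ≤ E * (2 * B) * B := by
    unfold hmul
    simp only [norm_mul]
    gcongr
    · exact hgt.1
    · exact p1 _
  have z1 : Z * (b-a)⁻¹ ≤ 2 := by
    rw [← div_eq_mul_inv, div_le_iff₀ hl]; linarith
  have z2 : Z * (1 / X) ≤ 1 := by
    rw [mul_one_div, div_le_one hX]; exact hZX
  have z3 : Z * (2 * Y)⁻¹ ≤ 1 := by
    rw [← div_eq_mul_inv, div_le_one (by positivity)]; linarith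
  calc _ ≤ E * (2 * B) * B + Z * ((b-a)⁻¹ * E * (2 * B) * B + E * (3 * B / X) * B
      + E * (2 * B) * ((2 * Y)⁻¹ * B)) := by gcongr
    _ = E * B ^ 2 * (2 + 2 * (Z * (b-a)⁻¹) + 3 * (Z * (1 / X)) + 2 * (Z * (2 * Y)⁻¹)) := by ring
    _ ≤ E * B ^ 2 * 11 := by
        gcongr
        linarith
    _ = _ := by rw [hRM]; ring

lemma hmul_L2 {g P : ℝ → ℂ} (hg : ContDiff ℝ ∞ g) (hP : ContDiff ℝ ∞ P)
    (hg0 : ∀ t, t ∉ Icc (0:ℝ) 1 → g t = 0) (hP0 : ∀ t, t ∉ Icc (-2:ℝ) 2 → P t = 0)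
    (hP1 : ∀ t ∈ Icc (-1:ℝ) 1, P t = 1) (M : ℕ) :
    ∃ C, 0 ≤ C ∧ ∀ a b X Y : ℝ, a < b → (0:ℝ) ∉ Ioo a b → 0 < X → 0 < Y →
      ∫ ξ, ‖hmul g P a b X Y ξ + (min X Y : ℝ) * deriv (hmul g P a b X Y) ξ‖ ^ 2
        ≤ C * ((min X Y / X) ^ M) ^ 2 * min X Y := by
  obtain ⟨C, hC, hb⟩ := hmul_bound hg hP hg0 hP0 hP1 M
  refine ⟨8 * C ^ 2, by positivity, ?_⟩
  intro a b X Y hab h0 hX hY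
  have hZ0 : 0 < min X Y := lt_min hX hY
  set u : ℝ → ℂ := fun ξ => hmul g P a b X Y ξ + (min X Y : ℝ) * deriv (hmul g P a b X Y) ξ with hu
  have hub : ∀ ξ, ‖u ξ‖ ≤ C * (min X Y / X) ^ M := by
    intro ξ
    refine (norm_add_le _ _).trans ?_
    rw [norm_mul, Complex.norm_real, Real.norm_eq_abs, abs_of_pos hZ0]
    exact hb a b X Y hab h0 hX hY ξ
  obtain ⟨c, d, hcd, hle, hsup⟩ : ∃ c d : ℝ, c ≤ d ∧ d - c ≤ 8 * min X Y ∧ ∀ ξ, ξ ∉ Icc c d → u ξ = 0 := by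
    have hz : ∀ ξ, ¬ (ξ ∈ Icc a b ∧ |ξ| ≤ 4 * Y ∧ |ξ - a| ≤ 2 * X ∧ X / 2 ≤ |ξ - a|) → u ξ = 0 := by
      intro ξ h
      obtain ⟨e1, e2⟩ := hmul_zero (hg.differentiable (by simp)) (hP.differentiable (by simp)) hg0 hP0 hP1 hab hX hY h
      simp only [hu, e1, e2]; simp
    rcases min_choice X Y with h | h
    · refine ⟨a - 2 * X, a + 2 * X, by linarith, by rw [h]; linarith, fun ξ hξ => hz ξ fun hh => hξ ?_⟩
      have := abs_le.1 hh.2.2.1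
      constructor <;> linarith [this.1, this.2]
    · refine ⟨- (4 * Y), 4 * Y, by linarith, by rw [h]; linarith, fun ξ hξ => hz ξ fun hh => hξ ?_⟩
      exact abs_le.1 hh.2.1
  have e : ∫ ξ, ‖u ξ‖ ^ 2 = ∫ ξ in Icc c d, ‖u ξ‖ ^ 2 := by
    rw [setIntegral_eq_integral_of_forall_compl_eq_zero]
    intro ξ hξ
    rw [hsup ξ hξ]; simp
  change ∫ ξ, ‖u ξ‖ ^ 2 ≤ _
  rw [e]
  have := norm_setIntegral_le_of_norm_le_const (μ := volume) (s := Icc c d) (f := fun ξ => ‖u ξ‖ ^ 2)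
    (C := (C * (min X Y / X) ^ M) ^ 2) (by simp) (fun ξ _ => by
      rw [norm_pow, norm_norm]
      gcongr
      exact hub ξ)
  refine (le_abs_self _).trans (this.trans ?_)
  rw [Real.volume_real_Icc_of_le hcd]
  calc (C * (min X Y / X) ^ M) ^ 2 * (d - c) ≤ (C * (min X Y / X) ^ M) ^ 2 * (8 * min X Y) := by gcongr
    _ = _ := by ring

open MeasureTheory Real Set Function
open scoped FourierTransform ENNReal NNReal SchwartzMap ContDiff

lemma e2pi_eq (t : ℝ) : e2pi t = (𝐞 t : ℂ) := by
  rw [e2pi, Real.fourierChar_apply]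
  congr 1
  push_cast
  ring

lemma fourierInv_eq_mul (h : ℝ → ℂ) (x : ℝ) : 𝓕⁻ h x = ∫ ξ, (𝐞 (ξ * x) : ℂ) * h ξ := by
  rw [Real.fourierInv_eq]
  simp [Circle.smul_def, mul_comm]

lemma char_add (s t : ℝ) : (𝐞 (s + t) : ℂ) = 𝐞 s * 𝐞 t := by
  rw [← Circle.coe_mul, ← AddChar.map_add_eq_mul]

lemma fourierInv_scale (h : ℝ → ℂ) (c : ℝ) (hc : 0 < c) (x : ℝ) :
    𝓕⁻ (fun ξ => h (ξ / c)) x = (c : ℂ) * 𝓕⁻ h (c * x) := by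
  rw [fourierInv_eq_mul, fourierInv_eq_mul]
  have := Measure.integral_comp_div (fun η => (𝐞 (η * (c * x)) : ℂ) * h η) c
  rw [abs_of_pos hc] at this
  rw [← Complex.real_smul, ← this]
  congr 1 with ξ
  congr 3
  field_simp

lemma fourierInv_shift (h : ℝ → ℂ) (a x : ℝ) :
    𝓕⁻ (fun ξ => h (ξ - a)) x = (𝐞 (a * x) : ℂ) * 𝓕⁻ h x := by
  rw [fourierInv_eq_mul, fourierInv_eq_mul, ← integral_const_mul,
    ← integral_sub_right_eq_self (fun ξ => (𝐞 (a * x) : ℂ) * ((𝐞 (ξ * x) : ℂ) * h ξ)) a]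
  congr 1 with ξ
  rw [← mul_assoc, ← char_add]
  congr 3
  ring

/-- Fourier side of `psi`. -/
noncomputable def psiH (P : ℝ → ℂ) (j : ℤ) (ξ : ℝ) : ℂ := P (ξ / 2 ^ j) - P (ξ / 2 ^ (j - 1))

lemma inv_four (φ : 𝓢(ℝ, ℂ)) (x : ℝ) : 𝓕⁻ (𝓕 (φ : ℝ → ℂ)) x = φ x := by
  rw [← SchwartzMap.fourier_coe, ← SchwartzMap.fourierInv_coe, FourierTransform.fourierInv_fourier_eq]

lemma integrable_comp_affine (g : 𝓢(ℝ, ℂ)) (a c : ℝ) (hc : 0 < c) :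
    Integrable (fun ξ => g ((ξ - a) / c)) := by
  have h1 : Integrable (fun ξ => g (ξ / c)) := g.integrable.comp_div hc.ne'
  exact h1.comp_sub_right a

lemma psiH_integrable (Φ : 𝓢(ℝ, ℂ)) (j : ℤ) : Integrable (psiH (𝓕 (Φ : ℝ → ℂ)) j) := by
  have h1 := integrable_comp_affine (𝓕 Φ) 0 ((2:ℝ) ^ j) (by positivity)
  have h2 := integrable_comp_affine (𝓕 Φ) 0 ((2:ℝ) ^ (j - 1)) (by positivity)
  simp only [sub_zero] at h1 h2
  exact h1.sub h2

lemma psi_eq (Φ : 𝓢(ℝ, ℂ)) (j : ℤ) : psi Φ j = 𝓕⁻ (psiH (𝓕 (Φ : ℝ → ℂ)) j) := by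
  ext x
  have h1 := integrable_comp_affine (𝓕 Φ) 0 ((2:ℝ) ^ j) (by positivity)
  have h2 := integrable_comp_affine (𝓕 Φ) 0 ((2:ℝ) ^ (j - 1)) (by positivity)
  simp only [sub_zero, SchwartzMap.fourier_coe] at h1 h2
  have e1 := fourierInv_scale (𝓕 (Φ : ℝ → ℂ)) ((2:ℝ) ^ j) (by positivity) x
  have e2 := fourierInv_scale (𝓕 (Φ : ℝ → ℂ)) ((2:ℝ) ^ (j - 1)) (by positivity) x
  rw [inv_four] at e1 e2
  unfold psi
  rw [← e1, ← e2, fourierInv_eq_mul, fourierInv_eq_mul, fourierInv_eq_mul,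
    ← integral_sub (integrable_char_mul h1 x) (integrable_char_mul h2 x)]
  congr 1 with ξ
  unfold psiH
  ring

lemma phim_eq (φ : 𝓢(ℝ, ℂ)) (a b : ℝ) (hab : a < b) :
    phim φ a b = 𝓕⁻ (fun ξ => 𝓕 (φ : ℝ → ℂ) ((ξ - a) / (b - a))) := by
  ext x
  rw [fourierInv_shift (fun ξ => 𝓕 (φ : ℝ → ℂ) (ξ / (b - a))), fourierInv_scale _ _ (by linarith), inv_four]
  unfold phim
  rw [e2pi_eq]
  ring

lemma compact_of_supp {g : ℝ → ℂ} {c d : ℝ} (h : ∀ t, t ∉ Icc c d → g t = 0) : HasCompactSupport g :=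
  HasCompactSupport.intro isCompact_Icc h

lemma rotConv_eq_s10 (φ f : 𝓢(ℝ, ℂ)) (hg0 : ∀ t, t ∉ Icc (0:ℝ) 1 → 𝓕 (φ : ℝ → ℂ) t = 0) (a b : ℝ) (hab : a < b) :
    ∃ v : 𝓢(ℝ, ℂ), (∀ ξ, v ξ = 𝓕 (f : ℝ → ℂ) (ξ + a) * 𝓕 (φ : ℝ → ℂ) (ξ / (b - a))) ∧
      rotConv φ a b f = ⇑(𝓕⁻ v : 𝓢(ℝ, ℂ)) := by
  have hl : 0 < b - a := by linarith
  have hs : HasCompactSupport (fun ξ => 𝓕 (f : ℝ → ℂ) (ξ + a) * 𝓕 (φ : ℝ → ℂ) (ξ / (b - a))) := by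
    apply compact_of_supp (c := 0) (d := b - a)
    intro t ht
    rw [hg0, mul_zero]
    intro h
    apply ht
    rw [mem_Icc, le_div_iff₀ hl, div_le_one hl] at h
    simpa using h
  have hc : ContDiff ℝ ∞ (fun ξ => 𝓕 (f : ℝ → ℂ) (ξ + a) * 𝓕 (φ : ℝ → ℂ) (ξ / (b - a))) := by
    have h1 : ContDiff ℝ ∞ (𝓕 (f : ℝ → ℂ)) := (𝓕 f).smooth'
    have h2 : ContDiff ℝ ∞ (𝓕 (φ : ℝ → ℂ)) := (𝓕 φ).smooth'
    simp only [div_eq_mul_inv]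
    fun_prop
  refine ⟨hs.toSchwartzMap hc, fun ξ => rfl, ?_⟩
  ext x
  rw [SchwartzMap.fourierInv_coe]
  unfold rotConv
  rw [phim_eq φ a b hab, conv_fourierInv (h := fun ξ => 𝓕 (φ : ℝ → ℂ) ((ξ - a) / (b - a))) f.integrable (integrable_comp_affine (𝓕 φ) a _ hl)]
  have e := fourierInv_shift (fun ξ => 𝓕 (f : ℝ → ℂ) (ξ + a) * 𝓕 (φ : ℝ → ℂ) (ξ / (b - a))) a x
  simp only [sub_add_cancel] at e
  rw [e, e2pi_eq, ← mul_assoc, ← char_add]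
  simp
  rfl

/-- the full multiplier applied to `f` for the piece `m` at scale `j`. -/
noncomputable def bigG (f φ Φ : ℝ → ℂ) (a b : ℝ) (j : ℤ) (ξ : ℝ) : ℂ :=
  𝓕 f ξ * (𝓕 φ ((ξ - a) / (b - a)) * psiH (𝓕 Φ) j (ξ - a))

lemma conv_rot_eq (φ Φ f : 𝓢(ℝ, ℂ)) (hg0 : ∀ t, t ∉ Icc (0:ℝ) 1 → 𝓕 (φ : ℝ → ℂ) t = 0)
    (a b : ℝ) (hab : a < b) (j : ℤ) (x : ℝ) :
    ‖conv (rotConv φ a b f) (psi Φ j) x‖ₑ = ‖𝓕⁻ (bigG f φ Φ a b j) x‖ₑ := by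
  obtain ⟨v, hv, hr⟩ := rotConv_eq_s10 φ f hg0 a b hab
  rw [hr, psi_eq, conv_fourierInv (𝓕⁻ v : 𝓢(ℝ, ℂ)).integrable (psiH_integrable Φ j),
    ← SchwartzMap.fourier_coe, FourierTransform.fourier_fourierInv_eq]
  have e := fourierInv_shift (fun ξ => v ξ * psiH (𝓕 (Φ : ℝ → ℂ)) j ξ) a x
  have e2 : (fun ξ => v (ξ - a) * psiH (𝓕 (Φ : ℝ → ℂ)) j (ξ - a)) = bigG f φ Φ a b j := by
    ext ξ
    rw [hv, bigG]
    simp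
    ring
  rw [e2] at e
  rw [e, enorm_mul, ← ofReal_norm (𝐞 (a * x) : ℂ), Circle.norm_coe]
  simp

lemma bigG_integrable (φ Φ f : 𝓢(ℝ, ℂ)) {B : ℝ}
    (hB : ∀ t, ‖𝓕 (Φ : ℝ → ℂ) t‖ ≤ B)
    (a b : ℝ) (hab : a < b) (j : ℤ) : Integrable (bigG f φ Φ a b j) := by
  have hl : 0 < b - a := by linarith
  have h1 : Continuous (𝓕 (f : ℝ → ℂ)) := (𝓕 f).continuous
  have h2 : Continuous (𝓕 (φ : ℝ → ℂ)) := (𝓕 φ).continuous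
  have h3 : Continuous (𝓕 (Φ : ℝ → ℂ)) := (𝓕 Φ).continuous
  have i1 : Integrable (𝓕 (f : ℝ → ℂ)) := (𝓕 f).integrable
  obtain ⟨B2, hB2⟩ : ∃ B2, ∀ t, ‖𝓕 (φ : ℝ → ℂ) t‖ ≤ B2 := by
    refine ⟨‖(𝓕 φ).toBoundedContinuousFunction‖, fun t => ?_⟩
    exact (𝓕 φ).toBoundedContinuousFunction.norm_coe_le_norm t
  unfold bigG
  refine i1.mul_bdd (c := B2 * (2 * B)) ?_ ?_
  · apply Continuous.aestronglyMeasurable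
    unfold psiH
    simp only [div_eq_mul_inv]
    fun_prop
  · refine Filter.Eventually.of_forall fun ξ => ?_
    rw [norm_mul]
    have hB20 : 0 ≤ B2 := (norm_nonneg _).trans (hB2 0)
    gcongr
    · exact hB2 _
    · unfold psiH
      refine (norm_sub_le _ _).trans ?_
      linarith [hB ((ξ - a) / 2 ^ j), hB ((ξ - a) / 2 ^ (j - 1))]

lemma sum_psiH (P : ℝ → ℂ) (K : ℕ) (ξ : ℝ) :
    ∑ n ∈ Finset.range (2 * K), psiH P (-(K:ℤ) + n) ξ = P (ξ / 2 ^ ((K:ℤ) - 1)) - P (ξ / 2 ^ (-(K:ℤ) - 1)) := by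
  have := Finset.sum_range_sub (fun n : ℕ => P (ξ / 2 ^ (-(K:ℤ) + n - 1))) (2 * K)
  rw [show -(K:ℤ) + ((2 * K : ℕ) : ℤ) - 1 = K - 1 by push_cast; ring,
    show -(K:ℤ) + ((0 : ℕ) : ℤ) - 1 = -K - 1 by push_cast; ring] at this
  rw [← this]
  apply Finset.sum_congr rfl
  intro n _
  unfold psiH
  congr 4
  push_cast
  ring

lemma enorm_le_tsum (P G : ℝ → ℂ) (hP : Continuous P) (hP0 : ∀ t, t ∉ Icc (-2:ℝ) 2 → P t = 0)
    (hP1 : ∀ t ∈ Icc (-1:ℝ) 1, P t = 1) (hG : Integrable G) (x : ℝ) :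
    ‖𝓕⁻ G x‖ₑ ≤ ∑' k : ℤ, ‖𝓕⁻ (fun ξ => G ξ * psiH P k ξ) x‖ₑ := by
  obtain ⟨B, hB, hb⟩ := bounded_of_supp hP hP0
  have hpc : ∀ k, Continuous (psiH P k) := by
    intro k
    unfold psiH
    simp only [div_eq_mul_inv]
    fun_prop
  have hpb : ∀ k ξ, ‖psiH P k ξ‖ ≤ 2 * B := by
    intro k ξ
    unfold psiH
    refine (norm_sub_le _ _).trans ?_
    linarith [hb (ξ / 2 ^ k), hb (ξ / 2 ^ (k - 1))]
  have hGint : ∀ k, Integrable (fun ξ => G ξ * psiH P k ξ) := fun k =>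
    hG.mul_bdd (c := 2 * B) (hpc k).aestronglyMeasurable (Filter.Eventually.of_forall (hpb k))
  set S : ℕ → ℂ := fun K => ∑ n ∈ Finset.range (2 * K), 𝓕⁻ (fun ξ => G ξ * psiH P (-(K:ℤ) + n) ξ) x with hS
  have hSeq : ∀ K, S K = ∫ ξ, (𝐞 (ξ * x) : ℂ) * (G ξ * (P (ξ / 2 ^ ((K:ℤ) - 1)) - P (ξ / 2 ^ (-(K:ℤ) - 1)))) := by
    intro K
    simp only [hS, fourierInv_eq_mul]
    rw [← integral_finsetSum _ (fun n _ => integrable_char_mul (hGint _) x)]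
    congr 1 with ξ
    rw [← Finset.mul_sum, ← Finset.mul_sum, sum_psiH]
  have hlim : Filter.Tendsto S Filter.atTop (nhds (𝓕⁻ G x)) := by
    rw [fourierInv_eq_mul, funext hSeq]
    apply tendsto_integral_of_dominated_convergence (fun ξ => ‖G ξ‖ * (2 * B))
    · intro K
      have c1 : Continuous fun ξ : ℝ => P (ξ / 2 ^ ((K:ℤ) - 1)) - P (ξ / 2 ^ (-(K:ℤ) - 1)) := by
        simp only [div_eq_mul_inv]; fun_prop
      exact (Continuous.aestronglyMeasurable (by fun_prop)).mul (hG.1.mul c1.aestronglyMeasurable)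
    · exact hG.norm.mul_const _
    · intro K
      refine Filter.Eventually.of_forall fun ξ => ?_
      rw [norm_mul, norm_mul, Circle.norm_coe, one_mul]
      gcongr
      refine (norm_sub_le _ _).trans ?_
      linarith [hb (ξ / 2 ^ ((K:ℤ) - 1)), hb (ξ / 2 ^ (-(K:ℤ) - 1))]
    · have : ∀ᵐ ξ : ℝ, ξ ≠ 0 := by simp [ae_iff]
      filter_upwards [this] with ξ hξ
      refine Filter.Tendsto.congr' ?_ tendsto_const_nhds
      have t1 : Filter.Tendsto (fun K : ℕ => (2:ℝ) ^ K) Filter.atTop Filter.atTop :=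
        tendsto_pow_atTop_atTop_of_one_lt (by norm_num)
      filter_upwards [t1.eventually_ge_atTop (2 * |ξ|), t1.eventually_gt_atTop (1 / |ξ|)] with K h1 h2
      have hx : 0 < |ξ| := abs_pos.2 hξ
      have q1 : P (ξ / 2 ^ ((K:ℤ) - 1)) = 1 := by
        apply hP1
        rw [mem_Icc, ← abs_le, abs_div, abs_of_pos (by positivity : (0:ℝ) < 2 ^ ((K:ℤ) - 1)), div_le_one (by positivity),
          zpow_sub_one₀ (by norm_num), zpow_natCast]
        linarith
      have q2 : P (ξ / 2 ^ (-(K:ℤ) - 1)) = 0 := by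
        apply hP0
        rw [mem_Icc, ← abs_le, abs_div, abs_of_pos (by positivity : (0:ℝ) < 2 ^ (-(K:ℤ) - 1)), div_le_iff₀ (by positivity),
          zpow_sub_one₀ (by norm_num), zpow_neg, zpow_natCast, not_le]
        rw [div_lt_iff₀ hx] at h2
        have : (2:ℝ) * ((2 ^ K)⁻¹ * 2⁻¹) = (2 ^ K)⁻¹ := by ring
        rw [this, inv_lt_iff_one_lt_mul₀ (by positivity)]
        linarith
      rw [q1, q2]; simp
  refine le_of_tendsto hlim.enorm (Filter.Eventually.of_forall fun K => ?_)
  refine (enorm_sum_le _ _).trans ?_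
  have inj : Injective (fun n : ℕ => -(K:ℤ) + n) := by
    intro n m h
    simpa using h
  refine (ENNReal.sum_le_tsum (f := fun n : ℕ => ‖𝓕⁻ (fun ξ => G ξ * psiH P (-(K:ℤ) + n) ξ) x‖ₑ) _).trans ?_
  exact ENNReal.tsum_comp_le_tsum_of_injective inj (fun k : ℤ => ‖𝓕⁻ (fun ξ => G ξ * psiH P k ξ) x‖ₑ)

/-- Schwartz version of `f ∗ ψ_k`. -/
lemma fk_schwartz (Φ f : 𝓢(ℝ, ℂ)) (hP0 : ∀ t, t ∉ Icc (-2:ℝ) 2 → 𝓕 (Φ : ℝ → ℂ) t = 0) (k : ℤ) :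
    ∃ F : 𝓢(ℝ, ℂ), (F : ℝ → ℂ) = conv f (psi Φ k) ∧
      ∀ ξ, 𝓕 (F : ℝ → ℂ) ξ = 𝓕 (f : ℝ → ℂ) ξ * psiH (𝓕 (Φ : ℝ → ℂ)) k ξ := by
  have hs : HasCompactSupport (fun ξ => 𝓕 (f : ℝ → ℂ) ξ * psiH (𝓕 (Φ : ℝ → ℂ)) k ξ) := by
    apply compact_of_supp (c := -(2 * 2 ^ k)) (d := 2 * 2 ^ k)
    intro t ht
    rw [mem_Icc, ← abs_le, not_le] at ht
    have h2 : (0:ℝ) < 2 ^ k := by positivity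
    have h3 : (0:ℝ) < 2 ^ (k - 1) := by positivity
    have h4 : (2:ℝ) ^ (k - 1) ≤ 2 ^ k := by
      rw [zpow_sub_one₀ (by norm_num)]; linarith
    unfold psiH
    rw [hP0, hP0]
    · simp
    · rw [mem_Icc, ← abs_le, abs_div, abs_of_pos h3, div_le_iff₀ h3]; linarith
    · rw [mem_Icc, ← abs_le, abs_div, abs_of_pos h2, div_le_iff₀ h2]; linarith
  have hc : ContDiff ℝ ∞ (fun ξ => 𝓕 (f : ℝ → ℂ) ξ * psiH (𝓕 (Φ : ℝ → ℂ)) k ξ) := by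
    have h1 : ContDiff ℝ ∞ (𝓕 (f : ℝ → ℂ)) := (𝓕 f).smooth'
    have h2 : ContDiff ℝ ∞ (𝓕 (Φ : ℝ → ℂ)) := (𝓕 Φ).smooth'
    unfold psiH
    simp only [div_eq_mul_inv]
    fun_prop
  refine ⟨𝓕⁻ (hs.toSchwartzMap hc), ?_, ?_⟩
  · ext x
    rw [psi_eq, conv_fourierInv f.integrable (psiH_integrable Φ k), SchwartzMap.fourierInv_coe]
    rfl
  · intro ξ
    rw [← SchwartzMap.fourier_coe, FourierTransform.fourier_fourierInv_eq]
    rfl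

lemma piece_eq (φ Φ f F : 𝓢(ℝ, ℂ)) (hP0 : ∀ t, t ∉ Icc (-2:ℝ) 2 → 𝓕 (Φ : ℝ → ℂ) t = 0)
    (hP1 : ∀ t ∈ Icc (-1:ℝ) 1, 𝓕 (Φ : ℝ → ℂ) t = 1) (a b : ℝ) (j k : ℤ)
    (hF : ∀ ξ, 𝓕 (F : ℝ → ℂ) ξ = 𝓕 (f : ℝ → ℂ) ξ * psiH (𝓕 (Φ : ℝ → ℂ)) k ξ)
    (h : 𝓢(ℝ, ℂ)) (hh : ⇑h = hmul (𝓕 (φ : ℝ → ℂ)) (𝓕 (Φ : ℝ → ℂ)) a b (2 ^ j) (2 ^ k)) (x : ℝ) :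
    𝓕⁻ (fun ξ => bigG f φ Φ a b j ξ * psiH (𝓕 (Φ : ℝ → ℂ)) k ξ) x = conv F (𝓕⁻ (h : ℝ → ℂ)) x := by
  rw [conv_fourierInv F.integrable h.integrable]
  refine congrFun (congrArg _ (funext fun ξ => ?_)) x
  rw [hF, hh]
  unfold bigG hmul
  have h2 : (0:ℝ) < 2 ^ k := by positivity
  have key : psiH (𝓕 (Φ : ℝ → ℂ)) k ξ * 𝓕 (Φ : ℝ → ℂ) (ξ / (2 * 2 ^ k)) = psiH (𝓕 (Φ : ℝ → ℂ)) k ξ := by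
    by_cases hξ : |ξ| ≤ 2 * 2 ^ k
    · rw [hP1, mul_one]
      rw [mem_Icc, ← abs_le, abs_div, abs_of_pos (by positivity : (0:ℝ) < 2 * 2 ^ k), div_le_one (by positivity)]
      exact hξ
    · have h3 : (0:ℝ) < 2 ^ (k - 1) := by positivity
      have h4 : (2:ℝ) ^ (k - 1) ≤ 2 ^ k := by
        rw [zpow_sub_one₀ (by norm_num)]; linarith
      have : psiH (𝓕 (Φ : ℝ → ℂ)) k ξ = 0 := by
        unfold psiH
        rw [hP0, hP0]
        · simp
        · rw [mem_Icc, ← abs_le, abs_div, abs_of_pos h3, div_le_iff₀ h3]; linarith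
        · rw [mem_Icc, ← abs_le, abs_div, abs_of_pos h2, div_le_iff₀ h2]; linarith
      rw [this]; simp
  have e : psiH (𝓕 (Φ : ℝ → ℂ)) j (ξ - a) =
      𝓕 (Φ : ℝ → ℂ) ((ξ - a) / 2 ^ j) - 𝓕 (Φ : ℝ → ℂ) ((ξ - a) / (2 ^ j / 2)) := by
    unfold psiH
    rw [zpow_sub_one₀ (by norm_num)]
    rfl
  rw [← e]
  linear_combination (-(𝓕 (f : ℝ → ℂ) ξ * 𝓕 (φ : ℝ → ℂ) ((ξ - a) / (b - a)) * psiH (𝓕 (Φ : ℝ → ℂ)) j (ξ - a))) * key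

open MeasureTheory Real Set Function
open scoped FourierTransform ENNReal NNReal SchwartzMap ContDiff

lemma assemble (p s : ℝ) (hp : 2 ≤ p) (hs : 0 < s) : ∃ C : ℝ≥0∞, C ≠ ⊤ ∧
    ∀ (D : ℝ≥0∞) (V : ℝ → ℝ≥0∞) (W : ℤ → ℝ → ℝ≥0∞) (n : ℤ → ℝ≥0∞) (j : ℤ),
      (∀ k, Measurable (W k)) →
      (∀ x, V x ≤ D * ∑' k : ℤ, (2:ℝ≥0∞) ^ (s / 4 * |(j:ℝ) - k| + 2 * (-s * ((j:ℝ) - k) - s * |(j:ℝ) - k|)) * W k x) →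
      (∀ k, ∫⁻ x, W k x ^ (p / 2) ≤ n k ^ p) →
      (2:ℝ≥0∞) ^ ((j:ℝ) * s) * (∫⁻ x, V x ^ (p / 2)) ^ (1 / p) ≤
        (C * D ^ (1 / 2 : ℝ)) * ∑' k : ℤ, (2:ℝ≥0∞) ^ (-(s / 2 * |(j:ℝ) - k|)) * ((2:ℝ≥0∞) ^ ((k:ℝ) * s) * n k) := by
  have hp0 : 0 < p := by linarith
  have hε : 0 < s / 4 := by linarith
  obtain ⟨C1, hC1, h1⟩ := powSum (p / 2) (s / 4) (by linarith) hε
  obtain ⟨C2, hC2, h2⟩ := powSum (1 / p) (s / 4) (by positivity) hε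
  refine ⟨C1 ^ (1 / p) * C2, ENNReal.mul_ne_top (ENNReal.rpow_ne_top_of_nonneg (by positivity) hC1) hC2, ?_⟩
  intro D V W n j hW hV hn
  set e : ℤ → ℝ := fun k => s / 4 * |(j:ℝ) - k| + 2 * (-s * ((j:ℝ) - k) - s * |(j:ℝ) - k|) with he
  have hI : ∫⁻ x, V x ^ (p / 2) ≤ D ^ (p / 2) * (C1 * ∑' k : ℤ, (2:ℝ≥0∞) ^ (s / 4 * |(j:ℝ) - k|) * ((2:ℝ≥0∞) ^ (e k * (p / 2)) * n k ^ p)) := by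
    calc ∫⁻ x, V x ^ (p / 2) ≤ ∫⁻ x, D ^ (p / 2) * (C1 * ∑' k : ℤ, (2:ℝ≥0∞) ^ (s / 4 * |(j:ℝ) - k|) * ((2:ℝ≥0∞) ^ (e k * (p / 2)) * W k x ^ (p / 2))) := by
          refine lintegral_mono fun x => ?_
          refine (ENNReal.rpow_le_rpow (hV x) (by positivity)).trans ?_
          rw [ENNReal.mul_rpow_of_nonneg _ _ (by positivity : 0 ≤ p / 2)]
          gcongr
          refine (h1 j _).trans ?_
          gcongr with k
          rw [ENNReal.mul_rpow_of_nonneg _ _ (by positivity : 0 ≤ p / 2), ← ENNReal.rpow_mul]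
      _ = D ^ (p / 2) * (C1 * ∑' k : ℤ, (2:ℝ≥0∞) ^ (s / 4 * |(j:ℝ) - k|) * ((2:ℝ≥0∞) ^ (e k * (p / 2)) * ∫⁻ x, W k x ^ (p / 2))) := by
          have hm : ∀ k, Measurable fun x => W k x ^ (p / 2) := fun k => (hW k).pow_const _
          have hm2 : ∀ k : ℤ, Measurable fun x => (2:ℝ≥0∞) ^ (s / 4 * |(j:ℝ) - k|) * ((2:ℝ≥0∞) ^ (e k * (p / 2)) * W k x ^ (p / 2)) :=
            fun k => ((hm k).const_mul _).const_mul _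
          rw [lintegral_const_mul _ ((Measurable.tsum hm2).const_mul _), lintegral_const_mul _ (Measurable.tsum hm2),
            lintegral_tsum fun k => (hm2 k).aemeasurable]
          congr 3
          ext k
          rw [lintegral_const_mul _ ((hm k).const_mul _), lintegral_const_mul _ (hm k)]
      _ ≤ _ := by
          gcongr with k
          exact hn k
  have hJ := ENNReal.rpow_le_rpow hI (by positivity : 0 ≤ 1 / p)
  rw [ENNReal.mul_rpow_of_nonneg _ _ (by positivity), ENNReal.mul_rpow_of_nonneg _ _ (by positivity), ← ENNReal.rpow_mul,
    show p / 2 * (1 / p) = 1 / 2 by field_simp] at hJ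
  have hK := h2 j (fun k => (2:ℝ≥0∞) ^ (s / 4 * |(j:ℝ) - k|) * ((2:ℝ≥0∞) ^ (e k * (p / 2)) * n k ^ p))
  calc _ ≤ (2:ℝ≥0∞) ^ ((j:ℝ) * s) * (D ^ (1 / 2 : ℝ) * (C1 ^ (1 / p) * (C2 * ∑' k : ℤ, (2:ℝ≥0∞) ^ (s / 4 * |(j:ℝ) - k|) *
          ((2:ℝ≥0∞) ^ (s / 4 * |(j:ℝ) - k|) * ((2:ℝ≥0∞) ^ (e k * (p / 2)) * n k ^ p)) ^ (1 / p)))) := by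
        refine mul_le_mul_right (hJ.trans ?_) _
        gcongr
    _ = (C1 ^ (1 / p) * C2 * D ^ (1 / 2 : ℝ)) * ∑' k : ℤ, (2:ℝ≥0∞) ^ ((j:ℝ) * s) * ((2:ℝ≥0∞) ^ (s / 4 * |(j:ℝ) - k|) *
          ((2:ℝ≥0∞) ^ (s / 4 * |(j:ℝ) - k|) * ((2:ℝ≥0∞) ^ (e k * (p / 2)) * n k ^ p)) ^ (1 / p)) := by
        rw [ENNReal.tsum_mul_left]
        ring
    _ ≤ _ := by
        refine mul_le_mul_right (ENNReal.tsum_le_tsum fun k => ?_) _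
        rw [ENNReal.mul_rpow_of_nonneg _ _ (by positivity), ENNReal.mul_rpow_of_nonneg _ _ (by positivity), ← ENNReal.rpow_mul,
          ← ENNReal.rpow_mul, ← ENNReal.rpow_mul, mul_one_div_cancel hp0.ne', ENNReal.rpow_one]
        rw [← mul_assoc, ← mul_assoc, ← mul_assoc, ← mul_assoc, ← two_rpow_add, ← two_rpow_add, ← two_rpow_add, ← two_rpow_add]
        refine mul_le_mul_left (ENNReal.rpow_le_rpow_of_exponent_le (by norm_num) ?_) _
        · rw [he]
          have h3 : 1 / p ≤ 1 / 2 := one_div_le_one_div_of_le (by norm_num) hp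
          have h4 : 0 ≤ s / 4 * |(j:ℝ) - k| := by positivity
          have h5 : (s / 4 * |(j:ℝ) - k| + 2 * (-s * ((j:ℝ) - k) - s * |(j:ℝ) - k|)) * (p / 2) * (1 / p) =
            (s / 4 * |(j:ℝ) - k| + 2 * (-s * ((j:ℝ) - k) - s * |(j:ℝ) - k|)) / 2 := by field_simp
          have h6 := mul_le_mul_of_nonneg_left h3 h4
          simp only [h5]
          linarith

/-- Poisson-type weight. -/
noncomputable def wt (Z y : ℝ) : ℝ≥0∞ := ENNReal.ofReal (Z * (1 + (2 * π * Z * y) ^ 2)⁻¹)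

lemma wt_meas (Z : ℝ) : Measurable (wt Z) := by
  unfold wt
  fun_prop

lemma wt_int (Z : ℝ) (hZ : 0 < Z) : ∫⁻ y, wt Z y ≤ 1 := by
  have hc : 0 < 2 * π * Z := by positivity
  have hi : Integrable fun y : ℝ => Z * (1 + (2 * π * Z * y) ^ 2)⁻¹ :=
    (integrable_inv_one_add_sq.comp_mul_left' hc.ne').const_mul Z
  unfold wt
  rw [← ofReal_integral_eq_lintegral_ofReal hi (Filter.Eventually.of_forall fun y => by positivity)]
  rw [integral_const_mul, Measure.integral_comp_mul_left (fun y : ℝ => (1 + y ^ 2)⁻¹), integral_univ_inv_one_add_sq,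
    abs_of_pos (by positivity), smul_eq_mul]
  rw [ENNReal.ofReal_le_one]
  have : Z * ((2 * π * Z)⁻¹ * π) = 1 / 2 := by field_simp
  rw [this]; norm_num

lemma ratio_bound (s : ℝ) (hs : 0 < s) (j k : ℤ) :
    ENNReal.ofReal (((min ((2:ℝ) ^ j) (2 ^ k) / 2 ^ j) ^ ⌈2 * s⌉₊) ^ 2) ≤
      (2:ℝ≥0∞) ^ (2 * (-s * ((j:ℝ) - k) - s * |(j:ℝ) - k|)) := by
  have e : ∀ t : ℝ, (2:ℝ≥0∞) ^ t = ENNReal.ofReal ((2:ℝ) ^ t) := by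
    intro t
    rw [← ENNReal.ofReal_rpow_of_pos (by norm_num)]
    norm_num
  rw [e]
  apply ENNReal.ofReal_le_ofReal
  have h0 : (0:ℝ) < 2 ^ j := by positivity
  rcases le_total j k with h | h
  · rw [min_eq_left (zpow_le_zpow_right₀ (by norm_num) h), div_self h0.ne']
    have : (j:ℝ) ≤ k := by exact_mod_cast h
    rw [abs_of_nonpos (by linarith)]
    ring_nf
    simp
  · rw [min_eq_right (zpow_le_zpow_right₀ (by norm_num) h)]
    have : (k:ℝ) ≤ j := by exact_mod_cast h
    rw [abs_of_nonneg (by linarith), ← zpow_sub₀ (by norm_num), ← pow_mul, ← Real.rpow_intCast, ← Real.rpow_natCast,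
      ← Real.rpow_mul (by norm_num)]
    apply Real.rpow_le_rpow_of_exponent_le (by norm_num)
    have := Nat.le_ceil (2 * s)
    push_cast
    nlinarith

lemma piece_bound (φ Φ : 𝓢(ℝ, ℂ)) (hg0 : ∀ t, t ∉ Icc (0:ℝ) 1 → 𝓕 (φ : ℝ → ℂ) t = 0)
    (hP0 : ∀ t, t ∉ Icc (-2:ℝ) 2 → 𝓕 (Φ : ℝ → ℂ) t = 0)
    (hP1 : ∀ t ∈ Icc (-1:ℝ) 1, 𝓕 (Φ : ℝ → ℂ) t = 1) (M : ℕ) :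
    ∃ C : ℝ, 0 ≤ C ∧ ∀ (N : ℕ) (a b : Fin N → ℝ), Admissible a b → ∀ (f : 𝓢(ℝ, ℂ)) (j k : ℤ) (x : ℝ),
      ∑ m, ‖𝓕⁻ (fun ξ => bigG f φ Φ (a m) (b m) j ξ * psiH (𝓕 (Φ : ℝ → ℂ)) k ξ) x‖ₑ ^ 2 ≤
        ENNReal.ofReal C * ENNReal.ofReal (((min ((2:ℝ) ^ j) (2 ^ k) / 2 ^ j) ^ M) ^ 2) *
          ∫⁻ y, ‖conv f (psi Φ k) (x - y)‖ₑ ^ 2 * wt (min ((2:ℝ) ^ j) (2 ^ k)) y := by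
  have hg : ContDiff ℝ ∞ (𝓕 (φ : ℝ → ℂ)) := (𝓕 φ).smooth'
  have hP : ContDiff ℝ ∞ (𝓕 (Φ : ℝ → ℂ)) := (𝓕 Φ).smooth'
  have hgd : Differentiable ℝ (𝓕 (φ : ℝ → ℂ)) := hg.differentiable (by simp)
  have hPd : Differentiable ℝ (𝓕 (Φ : ℝ → ℂ)) := hP.differentiable (by simp)
  obtain ⟨C, hC, hL⟩ := hmul_L2 hg hP hg0 hP0 hP1 M
  refine ⟨C, hC, ?_⟩
  intro N a b hab f j k x
  obtain ⟨F, hF1, hF2⟩ := fk_schwartz Φ f hP0 k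
  have hX : (0:ℝ) < 2 ^ j := by positivity
  have hY : (0:ℝ) < 2 ^ k := by positivity
  have hcs : ∀ m, HasCompactSupport (hmul (𝓕 (φ : ℝ → ℂ)) (𝓕 (Φ : ℝ → ℂ)) (a m) (b m) (2 ^ j) (2 ^ k)) := by
    intro m
    refine compact_of_supp (c := a m) (d := b m) fun t ht => ?_
    exact (hmul_zero hgd hPd hg0 hP0 hP1 (hab.1 m) hX hY fun h => ht h.1).1
  let h : Fin N → 𝓢(ℝ, ℂ) := fun m => (hcs m).toSchwartzMap (hmul_contDiff hg hP _ _ _ _)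
  have hh : ∀ m, ⇑(h m) = hmul (𝓕 (φ : ℝ → ℂ)) (𝓕 (Φ : ℝ → ℂ)) (a m) (b m) (2 ^ j) (2 ^ k) := fun m => rfl
  set Z : ℝ := min ((2:ℝ) ^ j) (2 ^ k) with hZ
  have hZ0 : 0 < Z := lt_min hX hY
  have key := bessel_conv h Z (C * ((Z / 2 ^ j) ^ M) ^ 2 * Z) (by positivity) ?_ ?_ F x
  · simp only [piece_eq φ Φ f F hP0 hP1 _ _ j k hF2 (h _) (hh _)]
    refine key.trans ?_
    rw [ENNReal.ofReal_mul (by positivity), ENNReal.ofReal_mul hC, mul_assoc]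
    gcongr
    rw [← lintegral_const_mul' _ _ ENNReal.ofReal_ne_top]
    refine le_of_eq (lintegral_congr fun y => ?_)
    rw [hF1, wt, ENNReal.ofReal_mul hZ0.le]
    ring
  · intro m m' hmm ξ
    rw [hh, hh]
    by_cases hξ : ξ ∈ Icc (a m) (b m)
    · right
      refine hmul_zero hgd hPd hg0 hP0 hP1 (hab.1 m') hX hY fun h => ?_
      exact Set.disjoint_left.1 (hab.2.2 m m' hmm) hξ h.1
    · left
      exact hmul_zero hgd hPd hg0 hP0 hP1 (hab.1 m) hX hY fun h => hξ h.1
  · intro m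
    rw [hh]
    exact hL _ _ _ _ (hab.1 m) (hab.2.1 m) hX hY


end Helpers

/-- uniform boundedness of the rotated family on the homogeneous Besov space
`Ḃ^s_{pq}`, for `2 ≤ p < ∞`, `0 < q ≤ ∞` and `s > 0`. -/
theorem statement10 (φ Φ : SchwartzMap ℝ ℂ)
    (hφ : Function.support (𝓕 ⇑φ) ⊆ Set.Ioo 0 1)
    (hΦsupp : Function.support (𝓕 ⇑Φ) ⊆ Set.Icc (-2) 2)
    (hΦone : ∀ ξ ∈ Set.Icc (-1:ℝ) 1, 𝓕 ⇑Φ ξ = 1)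
    (p : ℝ) (q : ℝ≥0∞) (s : ℝ) (hp : 2 ≤ p) (hq : 0 < q) (hs : 0 < s) :
    ∃ C : ℝ, 0 < C ∧ ∀ (N : ℕ) (a b : Fin N → ℝ), Admissible a b →
      ∀ f : SchwartzMap ℝ ℂ,
        (lqNorm q fun j : ℤ => (2 : ℝ≥0∞) ^ ((j : ℝ) * s) *
            (∫⁻ x : ℝ, ((∑ m : Fin N,
              (‖conv (rotConv ⇑φ (a m) (b m) ⇑f) (psi ⇑Φ j) x‖₊ : ℝ≥0∞) ^ 2)
                ^ (1/2 : ℝ)) ^ p) ^ (1/p))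
        ≤ ENNReal.ofReal C *
          lqNorm q (fun j : ℤ => (2 : ℝ≥0∞) ^ ((j : ℝ) * s) *
            (∫⁻ x : ℝ, (‖conv ⇑f (psi ⇑Φ j) x‖₊ : ℝ≥0∞) ^ p) ^ (1/p)) := by
  have hp0 : 0 < p := by linarith
  have hg0 : ∀ t, t ∉ Icc (0:ℝ) 1 → 𝓕 (φ : ℝ → ℂ) t = 0 := by
    intro t ht
    by_contra h
    exact ht (Ioo_subset_Icc_self (hφ h))
  have hP0 : ∀ t, t ∉ Icc (-2:ℝ) 2 → 𝓕 (Φ : ℝ → ℂ) t = 0 := by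
    intro t ht
    by_contra h
    exact ht (hΦsupp h)
  have hPc : Continuous (𝓕 (Φ : ℝ → ℂ)) := (𝓕 Φ).continuous
  obtain ⟨B, hB0, hB⟩ := bounded_of_supp hPc hP0
  obtain ⟨C0, hC0, h0⟩ := piece_bound φ Φ hg0 hP0 hΦone ⌈2 * s⌉₊
  obtain ⟨C1, hC1, h1⟩ := powSum 2 (s / 4) (by norm_num) (by linarith)
  obtain ⟨C2, hC2, h2⟩ := assemble p s hp hs
  obtain ⟨C3, hC3, h3⟩ := lq_bound q hq (s / 2) (by linarith)
  set D : ℝ≥0∞ := C1 * ENNReal.ofReal C0 with hD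
  have hDt : D ≠ ⊤ := ENNReal.mul_ne_top hC1 ENNReal.ofReal_ne_top
  set T : ℝ≥0∞ := C3 * (C2 * D ^ (1 / 2 : ℝ)) with hT
  have hTt : T ≠ ⊤ := ENNReal.mul_ne_top hC3 (ENNReal.mul_ne_top hC2 (ENNReal.rpow_ne_top_of_nonneg (by norm_num) hDt))
  refine ⟨T.toReal + 1, by positivity, ?_⟩
  intro N a b hab f
  have hTle : T ≤ ENNReal.ofReal (T.toReal + 1) := by
    rw [← ENNReal.ofReal_toReal hTt]
    apply ENNReal.ofReal_le_ofReal
    rw [ENNReal.toReal_ofReal (by positivity)]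
    linarith
  refine le_trans ?_ (mul_le_mul_left hTle _)
  refine h3 _ _ _ fun j => ?_
  have hmc : ∀ k, Measurable fun y => ‖conv f (psi Φ k) y‖ₑ := by
    intro k
    obtain ⟨F, hF1, hF2⟩ := fk_schwartz Φ f hP0 k
    rw [← hF1]
    exact F.continuous.measurable.enorm
  have hmz : ∀ k : ℤ, (0:ℝ) < min ((2:ℝ) ^ j) (2 ^ k) := fun k => lt_min (by positivity) (by positivity)
  have e1 : ∀ x, ((∑ m : Fin N, (‖conv (rotConv ⇑φ (a m) (b m) ⇑f) (psi ⇑Φ j) x‖₊ : ℝ≥0∞) ^ 2) ^ (1/2 : ℝ)) ^ p =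
      (∑ m : Fin N, ‖𝓕⁻ (bigG f φ Φ (a m) (b m) j) x‖ₑ ^ 2) ^ (p / 2) := by
    intro x
    rw [← ENNReal.rpow_mul, show 1 / 2 * p = p / 2 by ring]
    congr 1
    refine Finset.sum_congr rfl fun m _ => ?_
    rw [← conv_rot_eq φ Φ f hg0 (a m) (b m) (hab.1 m) j x]
    rfl
  simp only [e1]
  refine h2 D _ (fun k x => ∫⁻ y, ‖conv f (psi Φ k) (x - y)‖ₑ ^ 2 * wt (min ((2:ℝ) ^ j) (2 ^ k)) y) _ j ?_ ?_ ?_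
  · intro k
    have : Measurable fun z : ℝ × ℝ => ‖conv f (psi Φ k) (z.1 - z.2)‖ₑ ^ 2 * wt (min ((2:ℝ) ^ j) (2 ^ k)) z.2 :=
      (((hmc k).comp (measurable_fst.sub measurable_snd)).pow_const 2).mul ((wt_meas _).comp measurable_snd)
    exact this.lintegral_prod_right'
  · intro x
    calc ∑ m : Fin N, ‖𝓕⁻ (bigG f φ Φ (a m) (b m) j) x‖ₑ ^ 2
        ≤ ∑ m : Fin N, C1 * ∑' k : ℤ, (2:ℝ≥0∞) ^ (s / 4 * |(j:ℝ) - k|) *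
            ‖𝓕⁻ (fun ξ => bigG f φ Φ (a m) (b m) j ξ * psiH (𝓕 (Φ : ℝ → ℂ)) k ξ) x‖ₑ ^ 2 := by
          refine Finset.sum_le_sum fun m _ => ?_
          have u := enorm_le_tsum (𝓕 (Φ : ℝ → ℂ)) _ hPc hP0 hΦone (bigG_integrable φ Φ f hB (a m) (b m) (hab.1 m) j) x
          refine (pow_le_pow_left' u 2).trans ?_
          have v := h1 j (fun k => ‖𝓕⁻ (fun ξ => bigG f φ Φ (a m) (b m) j ξ * psiH (𝓕 (Φ : ℝ → ℂ)) k ξ) x‖ₑ)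
          simpa only [ENNReal.rpow_two] using v
      _ = C1 * ∑' k : ℤ, (2:ℝ≥0∞) ^ (s / 4 * |(j:ℝ) - k|) *
            ∑ m : Fin N, ‖𝓕⁻ (fun ξ => bigG f φ Φ (a m) (b m) j ξ * psiH (𝓕 (Φ : ℝ → ℂ)) k ξ) x‖ₑ ^ 2 := by
          rw [← Finset.mul_sum, ← Summable.tsum_finsetSum fun _ _ => ENNReal.summable]
          simp only [Finset.mul_sum]
      _ ≤ C1 * ∑' k : ℤ, (2:ℝ≥0∞) ^ (s / 4 * |(j:ℝ) - k|) *
            (ENNReal.ofReal C0 * (2:ℝ≥0∞) ^ (2 * (-s * ((j:ℝ) - k) - s * |(j:ℝ) - k|)) *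
              ∫⁻ y, ‖conv f (psi Φ k) (x - y)‖ₑ ^ 2 * wt (min ((2:ℝ) ^ j) (2 ^ k)) y) := by
          gcongr with k
          refine (h0 N a b hab f j k x).trans ?_
          gcongr
          exact ratio_bound s hs j k
      _ = _ := by
          rw [hD, ← ENNReal.tsum_mul_left, ← ENNReal.tsum_mul_left]
          refine tsum_congr fun k => ?_
          rw [two_rpow_add]
          ring
  · intro k
    have y := young_pos (fun x => ‖conv f (psi Φ k) x‖ₑ ^ 2) (wt (min ((2:ℝ) ^ j) (2 ^ k))) ((hmc k).pow_const 2)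
      (wt_meas _) (p / 2) (by linarith)
    refine y.trans ?_
    rw [← ENNReal.rpow_mul, one_div_mul_cancel hp0.ne', ENNReal.rpow_one]
    have w1 : (∫⁻ y, wt (min ((2:ℝ) ^ j) (2 ^ k)) y) ^ (p / 2) ≤ 1 :=
      ENNReal.rpow_le_one (wt_int _ (hmz k)) (by linarith)
    refine (mul_le_mul_left w1 _).trans ?_
    rw [one_mul]
    refine le_of_eq (lintegral_congr fun x => ?_)
    rw [← ENNReal.rpow_two, ← ENNReal.rpow_mul, show 2 * (p / 2) = p by ring]
    rfl
end
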